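/- Let K be a finite 2-dimensional geometric simplicial complex in ℝⁿ with at least one face. Then the space |K| is homeomorphic to the unit sphere S² = {x ∈ ℝ³ : ‖x‖ = 1} if and only if |K| is connected, K is locally planar, and χ(K) = 2. -/

import Mathlib

open Geometry

namespace PaperAlg

/-- Points of `ℝⁿ`. -/
abbrev Pt (n : ℕ) := EuclideanSpace ℝ (Fin n)

variable {n : ℕ}

/-- The 1-skeleton graph of a geometric simplicial complex `K`: its vertex set is the set of
vertices of `K`, and two vertices are adjacent iff they form an edge (a two-element face) of `K`. -/
def skeletonGraph (K : SimplicialComplex ℝ (Pt n)) : SimpleGraph K.vertices where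
  Adj u v := (u : Pt n) ≠ (v : Pt n) ∧
    ∃ s ∈ K.faces, (s : Set (Pt n)) = {(u : Pt n), (v : Pt n)}
  symm := by
    constructor
    rintro u v ⟨hne, s, hs, hset⟩
    exact ⟨fun h => hne h.symm, s, hs, by rw [hset, Set.pair_comm]⟩
  loopless := by constructor; rintro u ⟨hne, -⟩; exact hne rfl

/-- `K` is 2-dimensional: every face has at most three elements. -/
def TwoDimensional (K : SimplicialComplex ℝ (Pt n)) : Prop :=
  ∀ s ∈ K.faces, s.card ≤ 3

/-- The set of triangles (three-element faces) of `K` containing the finset `e`. -/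
def trianglesContaining (K : SimplicialComplex ℝ (Pt n)) (e : Finset (Pt n)) :
    Set (Finset (Pt n)) :=
  {t | t ∈ K.faces ∧ t.card = 3 ∧ e ⊆ t}

/-- An edge of `K` contained in exactly one triangle. -/
def IsBoundaryEdge (K : SimplicialComplex ℝ (Pt n)) (e : Finset (Pt n)) : Prop :=
  e ∈ K.faces ∧ e.card = 2 ∧ (trianglesContaining K e).ncard = 1

/-- An edge of `K` contained in exactly two triangles. -/
def IsInteriorEdge (K : SimplicialComplex ℝ (Pt n)) (e : Finset (Pt n)) : Prop :=
  e ∈ K.faces ∧ e.card = 2 ∧ (trianglesContaining K e).ncard = 2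

/-- The closed upper half-plane `{(a, b) ∈ ℝ² : b ≥ 0}`. -/
def HalfPlane : Set (ℝ × ℝ) := {p | 0 ≤ p.2}

/-- `x` has a neighborhood in `|K|` homeomorphic to an open subset of `ℝ²`. -/
def HasPlanarNbhd (K : SimplicialComplex ℝ (Pt n)) (x : Pt n) : Prop :=
  ∃ U : Set (Pt n), U ⊆ K.space ∧ U ∈ nhdsWithin x K.space ∧
    ∃ V : Set (ℝ × ℝ), IsOpen V ∧ Nonempty (↥U ≃ₜ ↥V)

/-- `x` has a neighborhood in `|K|` homeomorphic to an open subset of the closed half-plane. -/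
def HasHalfPlanarNbhd (K : SimplicialComplex ℝ (Pt n)) (x : Pt n) : Prop :=
  ∃ U : Set (Pt n), U ⊆ K.space ∧ U ∈ nhdsWithin x K.space ∧
    ∃ V : Set ↥HalfPlane, IsOpen V ∧ Nonempty (↥U ≃ₜ ↥V)

/-- `x` is a locally planar point of `|K|`. -/
def IsLocallyPlanarPt (K : SimplicialComplex ℝ (Pt n)) (x : Pt n) : Prop :=
  x ∈ K.space ∧ (HasPlanarNbhd K x ∨ HasHalfPlanarNbhd K x)

/-- `K` is locally planar if every point of `|K|` is locally planar. -/
def LocallyPlanar (K : SimplicialComplex ℝ (Pt n)) : Prop :=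
  ∀ x ∈ K.space, IsLocallyPlanarPt K x

/-- The vertices `a` of `K` such that `{v, a}` is an edge of `K`. -/
def linkVertices (K : SimplicialComplex ℝ (Pt n)) (v : Pt n) : Set (Pt n) :=
  {a | a ≠ v ∧ ∃ s ∈ K.faces, (s : Set (Pt n)) = {v, a}}

/-- The link graph `L(v)`: vertices are the `a` with `{v, a}` an edge of `K`, and `a`, `b`
are adjacent iff `{v, a, b}` is a triangle of `K`. -/
def linkGraph (K : SimplicialComplex ℝ (Pt n)) (v : Pt n) :
    SimpleGraph (linkVertices K v) where
  Adj a b := (a : Pt n) ≠ (b : Pt n) ∧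
    ∃ t ∈ K.faces, t.card = 3 ∧ (t : Set (Pt n)) = {v, (a : Pt n), (b : Pt n)}
  symm := by
    constructor
    rintro a b ⟨hne, t, ht, hc, hset⟩
    exact ⟨fun h => hne h.symm, t, ht, hc, by rw [hset, Set.pair_comm]⟩
  loopless := by constructor; rintro a ⟨hne, -⟩; exact hne rfl

/-- The vertices of `K` lying on some boundary edge. -/
def boundaryVertices (K : SimplicialComplex ℝ (Pt n)) : Set (Pt n) :=
  {v | ∃ e, IsBoundaryEdge K e ∧ v ∈ e}

/-- The boundary graph of `K`: the simple graph formed by the boundary edges of `K`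
and their endpoints. -/
def boundaryGraph (K : SimplicialComplex ℝ (Pt n)) :
    SimpleGraph (boundaryVertices K) where
  Adj u v := (u : Pt n) ≠ (v : Pt n) ∧
    ∃ e, IsBoundaryEdge K e ∧ (e : Set (Pt n)) = {(u : Pt n), (v : Pt n)}
  symm := by
    constructor
    rintro u v ⟨hne, e, he, hset⟩
    exact ⟨fun h => hne h.symm, e, he, by rw [hset, Set.pair_comm]⟩
  loopless := by constructor; rintro u ⟨hne, -⟩; exact hne rfl

/-- The Euler characteristic `χ(K) = V - E + F`. -/
noncomputable def eulerChar (K : SimplicialComplex ℝ (Pt n)) : ℤ :=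
  (K.vertices.ncard : ℤ)
    - ({e : Finset (Pt n) | e ∈ K.faces ∧ e.card = 2}.ncard : ℤ)
    + ({t : Finset (Pt n) | t ∈ K.faces ∧ t.card = 3}.ncard : ℤ)

/-- The three directed edges induced on its boundary by the cyclic ordering `(a, b, c)`. -/
def triDirs (o : Pt n × Pt n × Pt n) : Set (Pt n × Pt n) :=
  {(o.1, o.2.1), (o.2.1, o.2.2), (o.2.2, o.1)}

/-- `K` is orientable: one can assign to each triangle a cyclic ordering of its vertices so
that the two triangles containing any interior edge induce opposite directions on it. -/
def Orientable (K : SimplicialComplex ℝ (Pt n)) : Prop :=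
  ∃ ori : Finset (Pt n) → Pt n × Pt n × Pt n,
    (∀ t ∈ K.faces, t.card = 3 →
      (t : Set (Pt n)) = {(ori t).1, (ori t).2.1, (ori t).2.2}) ∧
    (∀ t₁ ∈ K.faces, ∀ t₂ ∈ K.faces, t₁.card = 3 → t₂.card = 3 → t₁ ≠ t₂ →
      ∀ e ∈ K.faces, e.card = 2 → e ⊆ t₁ → e ⊆ t₂ →
      ∀ x y : Pt n, x ∈ e → y ∈ e → x ≠ y →
        (x, y) ∈ triDirs (ori t₁) → (y, x) ∈ triDirs (ori t₂))

/-- The genus of a topological space `X`: the supremum of the numbers `m` for which there exist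
`m` pairwise disjoint subsets of `X`, each homeomorphic to the circle `S¹`, whose union has
connected complement. -/
noncomputable def genus (X : Type*) [TopologicalSpace X] : ℕ :=
  sSup {m : ℕ | ∃ C : Fin m → Set X,
    (Pairwise fun i j => Disjoint (C i) (C j)) ∧
    (∀ i, Nonempty (↥(C i) ≃ₜ ↥(Metric.sphere (0 : EuclideanSpace ℝ (Fin 2)) 1))) ∧
    IsConnected (⋃ i, C i)ᶜ}

/-!
If every point of `|K|` has a neighbourhood in the plane or the half-plane, invariance of domain
makes `K` a combinatorial surface: every face lies in a triangle, an edge lies in at most two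
triangles, and the triangles at a vertex are connected through common edges. With mod 2
coefficients, `χ = 1 + dim H₂ - dim H₁`, where `dim H₂ ≤ 1`.

If `χ = 2`, then `H₂ ≠ 0`, so that every edge lies in exactly two triangles, and `H₁ = 0`. By
induction on the number of its triangles, a region bounded by a simple closed polygon is then a
disk: either a triangle on the boundary can be removed, or a chord, along which the region splits
because `H₁ = 0`, cuts it into two smaller disks. Applied to the complement of one triangle, this
presents `|K|` as two disks glued along their boundary circles.

Conversely, in a sphere every edge lies in exactly two triangles, so `H₂ ≠ 0`. The sphere minus the
centre of a triangle is simply connected and contains the 1-skeleton, so a mod 2 cocycle is trivial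
because the covering space it defines has a section; hence `H₁ = 0` and `χ = 2`.
-/

section InvarianceOfDomain

open Topology Metric Set

/-- A continuous logarithm of `f` on `A`. For a map from a circle to `ℂ ∖ {0}` its existence
expresses that the winding number vanishes. -/
def HasContinuousLog {A : Type*} [TopologicalSpace A] (f : A → ℂ) : Prop :=
  ∃ L : C(A, ℂ), ∀ a, Complex.exp (L a) = f a

theorem HasContinuousLog.of_homotopy {A : Type*} [TopologicalSpace A] {H : unitInterval × A → ℂ}
    (hH : Continuous H) (hH0 : ∀ p, H p ≠ 0) (h : HasContinuousLog fun a => H (0, a)) :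
    HasContinuousLog fun a => H (1, a) := by
  obtain ⟨L, hL⟩ := h
  let H' : C(unitInterval × A, {z : ℂ // z ≠ 0}) := ⟨fun p => ⟨H p, hH0 p⟩, by fun_prop⟩
  have hstart : ∀ a, H' (0, a) = ⟨Complex.exp (L a), Complex.exp_ne_zero _⟩ :=
    fun a => Subtype.ext (hL a).symm
  let G := Complex.isCoveringMap_exp.liftHomotopy H' L hstart
  have hG := Complex.isCoveringMap_exp.liftHomotopy_lifts H' L hstart
  exact ⟨⟨fun a => G (1, a), by fun_prop⟩, fun a => congrArg Subtype.val (congrFun hG (1, a))⟩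

theorem HasContinuousLog.const (A : Type*) [TopologicalSpace A] {c : ℂ} (hc : c ≠ 0) :
    HasContinuousLog fun _ : A => c :=
  ⟨ContinuousMap.const _ (Complex.log c), fun _ => Complex.exp_log hc⟩

-- `L (-z) - L z` would be a constant odd function, hence zero, although its exponential is `-1`.
theorem not_hasContinuousLog_of_odd {g : ℂ → ℂ} (hg : ∀ z, g (-z) = -g z) :
    ¬ HasContinuousLog fun z : sphere (0 : ℂ) 1 => g z := by
  rintro ⟨L, hL⟩
  let φ : sphere (0 : ℂ) 1 → ℂ := fun z => L (-z) - L z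
  have hφ : Continuous φ := by fun_prop
  have hexp : ∀ z, Complex.exp (φ z) = -1 := by
    intro z
    have hz : g z ≠ 0 := fun h => Complex.exp_ne_zero (L z) ((hL z).trans h)
    have hneg : Complex.exp (L (-z)) = -g z := (hL (-z)).trans (hg z)
    rw [Complex.exp_sub, hL z, hneg, neg_div, div_self hz]
  have : PreconnectedSpace (sphere (0 : ℂ) 1) := isPreconnected_iff_preconnectedSpace.1
    (isPreconnected_sphere (by simp [Complex.rank_real_complex]) 0 1)
  let z₁ : sphere (0 : ℂ) 1 := ⟨1, by simp⟩
  have hconst : φ z₁ = φ (-z₁) := Complex.isCoveringMap_exp.const_of_comp hφ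
    (fun a b => Subtype.ext ((hexp a).trans (hexp b).symm)) z₁ (-z₁)
  have hodd : φ (-z₁) = -φ z₁ := by simp [φ]
  have hzero : φ z₁ = 0 := self_eq_neg.1 (hconst.trans hodd)
  have hone := hexp z₁
  rw [hzero, Complex.exp_zero] at hone
  norm_num at hone

theorem mul_mem_closedBall_one {c : ℂ} (hc : ‖c‖ ≤ 1) (z : sphere (0 : ℂ) 1) :
    c * z ∈ closedBall (0 : ℂ) 1 := by
  simpa using hc

theorem continuous_comp_mul_sphere {f : ℂ → ℂ} (hf : ContinuousOn f (closedBall 0 1))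
    {φ : unitInterval → ℂ} (hφ : Continuous φ) (hn : ∀ s, ‖φ s‖ ≤ 1) :
    Continuous fun p : unitInterval × sphere (0 : ℂ) 1 => f (φ p.1 * p.2) :=
  hf.comp_continuous (by fun_prop) fun p => mul_mem_closedBall_one (hn p.1) p.2

theorem norm_ofReal_unitInterval_le_one (s : unitInterval) : ‖((s : ℝ) : ℂ)‖ ≤ 1 := by
  rw [Complex.norm_real, Real.norm_of_nonneg s.2.1]
  exact s.2.2

theorem hasContinuousLog_sub_of_notMem_image {f : ℂ → ℂ} (hf : ContinuousOn f (closedBall 0 1))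
    {w : ℂ} (hw : w ∉ f '' closedBall 0 1) :
    HasContinuousLog fun z : sphere (0 : ℂ) 1 => f z - w := by
  have hstart : f 0 - w ≠ 0 := fun h => hw ⟨0, by simp, sub_eq_zero.1 h⟩
  have h := HasContinuousLog.of_homotopy
    (H := fun p : unitInterval × sphere (0 : ℂ) 1 => f (((p.1 : ℝ) : ℂ) * p.2) - w)
    ((continuous_comp_mul_sphere hf (by fun_prop) norm_ofReal_unitInterval_le_one).sub
      continuous_const)
    (fun p h => hw ⟨_, mul_mem_closedBall_one (norm_ofReal_unitInterval_le_one p.1) p.2,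
      sub_eq_zero.1 h⟩)
    (by simpa using HasContinuousLog.const _ hstart)
  simpa using h

-- The homotopy `f (z / (1 + s)) - f (-s z / (1 + s))` leads from `f z - f 0` to the restriction
-- to the circle of an odd function.
theorem not_hasContinuousLog_sub_center {f : ℂ → ℂ} (hf : ContinuousOn f (closedBall 0 1))
    (hinj : InjOn f (closedBall 0 1)) :
    ¬ HasContinuousLog fun z : sphere (0 : ℂ) 1 => f z - f 0 := by
  intro hlog
  let a : unitInterval → ℂ := fun s => ((1 + s : ℝ) : ℂ)⁻¹
  let b : unitInterval → ℂ := fun s => -((s : ℝ) : ℂ) * a s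
  have hpos : ∀ s : unitInterval, (0 : ℝ) < 1 + s := fun s => by linarith [s.2.1]
  have ha : Continuous a := Continuous.inv₀ (by fun_prop) fun s => by exact_mod_cast (hpos s).ne'
  have ha_norm : ∀ s, ‖a s‖ ≤ 1 := fun s => by
    rw [norm_inv, Complex.norm_real, Real.norm_of_nonneg (hpos s).le]
    exact inv_le_one_of_one_le₀ (by linarith [s.2.1])
  have hb_norm : ∀ s, ‖b s‖ ≤ 1 := fun s => by
    rw [norm_mul, norm_neg]
    exact mul_le_one₀ (norm_ofReal_unitInterval_le_one s) (norm_nonneg _) (ha_norm s)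
  have hab : ∀ s, a s ≠ b s := fun s h => by
    have ha0 : a s ≠ 0 := inv_ne_zero (by exact_mod_cast (hpos s).ne')
    have h1 : (1 : ℂ) = -((s : ℝ) : ℂ) := mul_right_cancel₀ ha0 (by rw [one_mul]; exact h)
    have h2 : (1 : ℝ) = -(s : ℝ) := by exact_mod_cast h1
    linarith [s.2.1]
  have hne : ∀ p : unitInterval × sphere (0 : ℂ) 1, f (a p.1 * p.2) - f (b p.1 * p.2) ≠ 0 := by
    intro p h
    have heq := hinj (mul_mem_closedBall_one (ha_norm p.1) p.2)
      (mul_mem_closedBall_one (hb_norm p.1) p.2) (sub_eq_zero.1 h)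
    exact hab p.1 (mul_right_cancel₀ (ne_zero_of_mem_unit_sphere p.2) heq)
  refine not_hasContinuousLog_of_odd (g := fun z => f (2⁻¹ * z) - f (-(2⁻¹ * z))) (by simp) ?_
  have hend := HasContinuousLog.of_homotopy
    ((continuous_comp_mul_sphere hf ha ha_norm).sub
      (continuous_comp_mul_sphere hf (by fun_prop) hb_norm)) hne (by simpa [a, b] using hlog)
  convert hend using 3
  norm_num [a, b]

theorem image_closedBall_mem_nhds {f : ℂ → ℂ} (hf : ContinuousOn f (closedBall 0 1))
    (hinj : InjOn f (closedBall 0 1)) : f '' closedBall 0 1 ∈ 𝓝 (f 0) := by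
  by_contra hnot
  have hclosed : IsClosed (f '' sphere 0 1) :=
    ((isCompact_sphere _ _).image_of_continuousOn (hf.mono sphere_subset_closedBall)).isClosed
  have h0 : f 0 ∉ f '' sphere 0 1 := by
    rintro ⟨z, hz, hfz⟩
    have hz0 : z = 0 := hinj (sphere_subset_closedBall hz) (by simp) hfz
    simp [hz0] at hz
  obtain ⟨δ, hδ, hball⟩ := Metric.mem_nhds_iff.1 (hclosed.isOpen_compl.mem_nhds h0)
  obtain ⟨w, hw, hwf⟩ : ∃ w ∈ ball (f 0) δ, w ∉ f '' closedBall 0 1 := by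
    by_contra! h
    exact hnot (Filter.mem_of_superset (ball_mem_nhds _ hδ) h)
  have hlog := HasContinuousLog.of_homotopy
    (H := fun p : unitInterval × sphere (0 : ℂ) 1 => f p.2 - (w + ((p.1 : ℝ) : ℂ) * (f 0 - w)))
    (((hf.mono sphere_subset_closedBall).comp_continuous (by fun_prop) fun p => p.2.2).sub
      (by fun_prop))
    (fun p h => by
      have hmem := (convex_ball (f 0) δ).add_smul_sub_mem hw (mem_ball_self hδ) p.1.2
      exact hball hmem ⟨_, p.2.2, sub_eq_zero.1 h⟩)
    (by simpa using hasContinuousLog_sub_of_notMem_image hf hwf)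
  exact not_hasContinuousLog_sub_center hf hinj (by simpa using hlog)

theorem image_mem_nhds_of_continuousOn_injOn {f : ℝ × ℝ → ℝ × ℝ} {x : ℝ × ℝ} {U : Set (ℝ × ℝ)}
    (hU : U ∈ 𝓝 x) (hf : ContinuousOn f U) (hinj : InjOn f U) : f '' U ∈ 𝓝 (f x) := by
  let e := Complex.equivRealProdCLM.toHomeomorph
  obtain ⟨r, hr, hrU⟩ := Metric.nhds_basis_closedBall.mem_iff.1
    ((e.continuous.continuousAt (x := e.symm x)).preimage_mem_nhds (by simpa using hU))
  let g : ℂ → ℂ := fun z => e.symm (f (e (e.symm x + r * z)))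
  have hmaps : ∀ z ∈ closedBall (0 : ℂ) 1, e (e.symm x + r * z) ∈ U := by
    intro z hz
    refine hrU ?_
    have hz1 : ‖z‖ ≤ 1 := by simpa using hz
    simp only [mem_closedBall, dist_self_add_left, norm_mul, Complex.norm_real,
      Real.norm_of_nonneg hr.le]
    nlinarith
  have hginj : InjOn g (closedBall 0 1) := by
    intro z hz w hw h
    have heq := e.injective (hinj (hmaps z hz) (hmaps w hw) (e.symm.injective h))
    have hr' : (r : ℂ) ≠ 0 := by exact_mod_cast hr.ne'
    simpa [hr'] using heq
  have hg : g '' closedBall 0 1 ∈ 𝓝 (g 0) := image_closedBall_mem_nhds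
    (e.symm.continuous.comp_continuousOn (hf.comp (by fun_prop) hmaps)) hginj
  have hg0 : g 0 = e.symm (f x) := by simp [g]
  rw [hg0] at hg
  refine Filter.mem_of_superset (e.symm.continuous.continuousAt.preimage_mem_nhds hg) ?_
  rintro y ⟨z, hz, hzy⟩
  exact ⟨_, hmaps z hz, e.symm.injective hzy⟩

end InvarianceOfDomain

section TriangleFamilies

open Finset Matrix

variable {α : Type*} [DecidableEq α] {S T A : Finset (Finset α)} {e t t' : Finset α} {v : α}

/-- The two-element subsets of the members of `T`. -/
def edgesOf (T : Finset (Finset α)) : Finset (Finset α) :=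
  T.biUnion fun t => t.powersetCard 2

/-- The elements of the members of `T`. -/
def verticesOf (T : Finset (Finset α)) : Finset α :=
  T.biUnion id

/-- The members of `S` containing `e`. -/
def cofaces (S : Finset (Finset α)) (e : Finset α) : Finset (Finset α) :=
  {t ∈ S | e ⊆ t}

/-- The mod 2 boundary of the 2-chain `S`, as a function on edges. -/
def boundary (S : Finset (Finset α)) (e : Finset α) : ZMod 2 :=
  #(cofaces S e)

/-- The mod 2 boundary of a 1-chain `z` supported on the edge set `E`, as a function on vertices. -/
def boundaryAt (E : Finset (Finset α)) (z : Finset α → ZMod 2) (v : α) : ZMod 2 :=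
  ∑ e ∈ E with v ∈ e, z e

/-- The triangles of a connected combinatorial surface, possibly with boundary: an edge lies in at
most two triangles, and the triangles at a vertex are connected through common edges. -/
structure IsSurface (T : Finset (Finset α)) : Prop where
  card_eq_three : ∀ t ∈ T, #t = 3
  card_cofaces_le_two : ∀ e : Finset α, #e = 2 → #(cofaces T e) ≤ 2
  link_connected : ∀ v, ∀ A ⊆ T,
    (∀ t ∈ A, ∀ t' ∈ T, v ∈ t → v ∈ t' → 2 ≤ #(t ∩ t') → t' ∈ A) →
    (∃ t ∈ A, v ∈ t) → ∀ t ∈ T, v ∈ t → t ∈ A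
  connected : ∀ W ⊆ verticesOf T, W.Nonempty → (∀ t ∈ T, ∀ u ∈ t, u ∈ W → t ⊆ W) →
    W = verticesOf T

/-- Every edge lies in exactly two triangles. -/
def IsClosedFamily (T : Finset (Finset α)) : Prop :=
  ∀ e ∈ edgesOf T, #(cofaces T e) = 2

/-- Vanishing of the first mod 2 homology: every 1-cycle is the boundary of a 2-chain. -/
def HasTrivialHomology (T : Finset (Finset α)) : Prop :=
  ∀ z : Finset α → ZMod 2, (∀ v, boundaryAt (edgesOf T) z v = 0) →
    ∃ A ⊆ T, ∀ e ∈ edgesOf T, boundary A e = z e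

/-- Vanishing of the first mod 2 cohomology: every 1-cocycle is the coboundary of a function on
the vertices. -/
def HasTrivialCohomology (T : Finset (Finset α)) : Prop :=
  ∀ c : Finset α → ZMod 2, (∀ t ∈ T, ∑ e ∈ t.powersetCard 2, c e = 0) →
    ∃ g : α → ZMod 2, ∀ e ∈ edgesOf T, c e = ∑ v ∈ e, g v

/-- The Euler characteristic of the complex generated by the triangles `T`. -/
def eulerCharOf (T : Finset (Finset α)) : ℤ :=
  #(verticesOf T) - #(edgesOf T) + #T

theorem mem_edgesOf : e ∈ edgesOf T ↔ #e = 2 ∧ ∃ t ∈ T, e ⊆ t := by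
  simp only [edgesOf, mem_biUnion, mem_powersetCard]
  grind

theorem mem_verticesOf : v ∈ verticesOf T ↔ ∃ t ∈ T, v ∈ t := by
  simp [verticesOf]

theorem mem_cofaces : t ∈ cofaces S e ↔ t ∈ S ∧ e ⊆ t :=
  mem_filter

theorem boundary_eq_sum (S : Finset (Finset α)) (e : Finset α) :
    boundary S e = ∑ t ∈ S, if e ⊆ t then 1 else 0 := by
  rw [boundary, cofaces, sum_boole]

theorem zmod_two_eq_zero_or_one (x : ZMod 2) : x = 0 ∨ x = 1 := by
  revert x
  decide

theorem powersetCard_two_eq_filter_edgesOf (ht : t ∈ T) :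
    t.powersetCard 2 = {e ∈ edgesOf T | e ⊆ t} := by
  ext e
  simp only [mem_powersetCard, mem_filter, mem_edgesOf]
  grind

theorem powersetCard_two_filter_mem (t : Finset α) (hv : v ∈ t) :
    {e ∈ t.powersetCard 2 | v ∈ e} = (t.erase v).image fun w => {v, w} := by
  ext e
  simp only [mem_filter, mem_powersetCard, mem_image, mem_erase]
  constructor
  · rintro ⟨⟨het, he⟩, hve⟩
    obtain ⟨w, hw⟩ := card_eq_one.1 ((card_erase_of_mem hve).trans (by rw [he]))
    have hwe : w ∈ e.erase v := hw ▸ mem_singleton_self w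
    exact ⟨w, by grind, by rw [← hw, insert_erase hve]⟩
  · rintro ⟨w, ⟨hwv, hwt⟩, rfl⟩
    exact ⟨⟨by grind, card_pair hwv.symm⟩, by simp⟩

theorem card_powersetCard_two_filter_mem (ht : #t = 3) (hv : v ∈ t) :
    #{e ∈ t.powersetCard 2 | v ∈ e} = 2 := by
  have hinj : Set.InjOn (fun w => ({v, w} : Finset α)) (t.erase v) := by
    intro a ha b _ hab
    have hmem : a ∈ ({v, b} : Finset α) := by
      rw [← show ({v, a} : Finset α) = {v, b} from hab]
      simp
    grind
  rw [powersetCard_two_filter_mem t hv, card_image_of_injOn hinj, card_erase_of_mem hv, ht]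

theorem boundaryAt_boundary (hcard : ∀ t ∈ A, #t = 3) (hA : A ⊆ T) (v : α) :
    boundaryAt (edgesOf T) (boundary A) v = 0 := by
  simp_rw [boundaryAt, boundary_eq_sum]
  rw [sum_comm]
  refine sum_eq_zero fun t ht => ?_
  have hfilter : {e ∈ {e ∈ edgesOf T | v ∈ e} | e ⊆ t} = {e ∈ t.powersetCard 2 | v ∈ e} := by
    rw [powersetCard_two_eq_filter_edgesOf (hA ht), filter_comm]
  rw [sum_boole, hfilter]
  by_cases hv : v ∈ t
  · rw [card_powersetCard_two_filter_mem (hcard t ht) hv]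
    rfl
  · rw [filter_eq_empty_iff.2 fun e he hve => hv ((mem_powersetCard.1 he).1 hve), card_empty,
      Nat.cast_zero]

theorem IsClosedFamily.boundary_eq_zero (hT : IsClosedFamily T) (he : e ∈ edgesOf T) :
    boundary T e = 0 := by
  rw [boundary, hT e he]
  rfl

theorem exists_mem_of_boundary_ne_zero (h : boundary S e ≠ 0) : ∃ t ∈ S, e ⊆ t := by
  by_contra! hnone
  refine h ?_
  rw [boundary_eq_sum]
  exact sum_eq_zero fun t ht => if_neg (hnone t ht)

namespace IsSurface

theorem nonempty_of_mem (hT : IsSurface T) (ht : t ∈ T) : t.Nonempty :=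
  card_pos.1 (by rw [hT.card_eq_three t ht]; norm_num)

theorem card_cofaces_eq_two (hT : IsSurface T) (hS : S ⊆ T) (he : #e = 2) (ht : t ∈ S)
    (het : e ⊆ t) (h0 : boundary S e = 0) : #(cofaces S e) = 2 := by
  have heven : Even #(cofaces S e) := ZMod.natCast_eq_zero_iff_even.1 h0
  have hpos : 0 < #(cofaces S e) := card_pos.2 ⟨t, mem_cofaces.2 ⟨ht, het⟩⟩
  have hle := (card_le_card (filter_subset_filter _ hS)).trans (hT.card_cofaces_le_two e he)
  exact le_antisymm hle (by obtain ⟨k, hk⟩ := heven; omega)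

theorem mem_of_boundary_eq_zero (hT : IsSurface T) (hS : S ⊆ T) (he : #e = 2) (ht : t ∈ S)
    (het : e ⊆ t) (ht' : t' ∈ T) (het' : e ⊆ t') (h0 : boundary S e = 0) : t' ∈ S := by
  have hle := hT.card_cofaces_le_two e he
  have heq : cofaces S e = cofaces T e := eq_of_subset_of_card_le (filter_subset_filter _ hS)
    (by rwa [hT.card_cofaces_eq_two hS he ht het h0])
  have hmem : t' ∈ cofaces S e := heq ▸ mem_cofaces.2 ⟨ht', het'⟩
  exact (mem_cofaces.1 hmem).1

theorem isClosedFamily_of_boundary_eq_zero (hT : IsSurface T)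
    (h : ∀ e ∈ edgesOf T, boundary T e = 0) : IsClosedFamily T := by
  intro e he
  obtain ⟨hcard, t, ht, het⟩ := mem_edgesOf.1 he
  exact hT.card_cofaces_eq_two subset_rfl hcard ht het (h e he)

theorem exists_boundary_edge_at (hT : IsSurface T) (hS : S ⊆ T) (ht : t ∈ S) (hvt : v ∈ t)
    (ht' : t' ∈ T) (hvt' : v ∈ t') (ht'S : t' ∉ S) :
    ∃ e ∈ edgesOf T, v ∈ e ∧ boundary S e ≠ 0 := by
  by_contra! hnone
  refine ht'S (hT.link_connected v S hS ?_ ⟨t, ht, hvt⟩ t' ht' hvt')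
  intro t₁ ht₁ t₂ ht₂ hv₁ hv₂ hcard
  obtain ⟨e, hve, he, he2⟩ := exists_subsuperset_card_eq (s := {v}) (t := t₁ ∩ t₂) (n := 2)
    (by simp [hv₁, hv₂]) (by simp) hcard
  have het₁ : e ⊆ t₁ := he.trans inter_subset_left
  exact hT.mem_of_boundary_eq_zero hS he2 ht₁ het₁ ht₂ (he.trans inter_subset_right)
    (hnone e (mem_edgesOf.2 ⟨he2, t₁, hS ht₁, het₁⟩) (hve (mem_singleton_self v)))

theorem eq_empty_or_eq_of_boundary_eq_zero (hT : IsSurface T) (hA : A ⊆ T)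
    (h0 : ∀ e ∈ edgesOf T, boundary A e = 0) : A = ∅ ∨ A = T := by
  refine A.eq_empty_or_nonempty.imp_right fun hne => ?_
  have hclosed : ∀ t ∈ A, ∀ t' ∈ T, ∀ v ∈ t, v ∈ t' → t' ∈ A := by
    intro t ht t' ht' v hv hv'
    by_contra h
    obtain ⟨e, he, -, hbd⟩ := hT.exists_boundary_edge_at hA ht hv ht' hv' h
    exact hbd (h0 e he)
  have hvert : verticesOf A = verticesOf T := by
    refine hT.connected _ (biUnion_subset_biUnion_of_subset_left _ hA) ?_ ?_
    · obtain ⟨t, ht⟩ := hne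
      obtain ⟨v, hv⟩ := hT.nonempty_of_mem (hA ht)
      exact ⟨v, mem_verticesOf.2 ⟨t, ht, hv⟩⟩
    · intro t ht u hut hu w hw
      obtain ⟨t₁, ht₁, hut₁⟩ := mem_verticesOf.1 hu
      exact mem_verticesOf.2 ⟨t, hclosed t₁ ht₁ t ht u hut₁ hut, hw⟩
  refine hA.antisymm fun t ht => ?_
  obtain ⟨v, hv⟩ := hT.nonempty_of_mem ht
  obtain ⟨t₁, ht₁, hvt₁⟩ := mem_verticesOf.1 (hvert ▸ mem_verticesOf.2 ⟨t, ht, hv⟩)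
  exact hclosed t₁ ht₁ t ht v hvt₁ hv

theorem eq_of_coboundary_eq_zero (hT : IsSurface T) {g : α → ZMod 2}
    (hg : ∀ e ∈ edgesOf T, ∑ v ∈ e, g v = 0) {u w : α} (hu : u ∈ verticesOf T)
    (hw : w ∈ verticesOf T) : g u = g w := by
  have hlevel : {x ∈ verticesOf T | g x = g w} = verticesOf T := by
    refine hT.connected _ (filter_subset _ _) ⟨w, mem_filter.2 ⟨hw, rfl⟩⟩ ?_
    intro t ht x hxt hx y hyt
    refine mem_filter.2 ⟨mem_verticesOf.2 ⟨t, ht, hyt⟩, ?_⟩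
    rw [← (mem_filter.1 hx).2]
    rcases eq_or_ne x y with rfl | hxy
    · rfl
    have hsum := hg {x, y} (mem_edgesOf.2 ⟨card_pair hxy, t, ht, by grind⟩)
    rw [sum_pair hxy, CharTwo.add_eq_zero] at hsum
    exact hsum.symm
  rw [← hlevel] at hu
  exact (mem_filter.1 hu).2

end IsSurface

/-- The mod 2 boundary operator from edges to vertices. -/
def vertexEdgeMatrix (T : Finset (Finset α)) : Matrix (verticesOf T) (edgesOf T) (ZMod 2) :=
  fun v e => if (v : α) ∈ (e : Finset α) then 1 else 0

/-- The mod 2 boundary operator from triangles to edges. -/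
def edgeTriangleMatrix (T : Finset (Finset α)) : Matrix (edgesOf T) T (ZMod 2) :=
  fun e t => if (e : Finset α) ⊆ (t : Finset α) then 1 else 0

theorem exists_eq_restrict {β γ : Type*} [Nonempty γ] (s : Finset β) (f : s → γ) :
    ∃ g : β → γ, f = fun x : s => g x :=
  (Subtype.val_injective.surjective_comp_right f).imp fun _ h => h.symm

theorem exists_eq_indicator (a : T → ZMod 2) :
    ∃ A ⊆ T, a = fun t : T => if (t : Finset α) ∈ A then 1 else 0 := by
  obtain ⟨f, rfl⟩ := exists_eq_restrict T a
  refine ⟨{t ∈ T | f t = 1}, filter_subset _ _, funext fun t => ?_⟩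
  rcases zmod_two_eq_zero_or_one (f t) with h | h <;> simp [h]

theorem vertexEdgeMatrix_mulVec (z : Finset α → ZMod 2) (v : verticesOf T) :
    (vertexEdgeMatrix T *ᵥ fun e => z e) v = boundaryAt (edgesOf T) z v := by
  simp only [mulVec, dotProduct, vertexEdgeMatrix, ite_mul, one_mul, zero_mul, boundaryAt]
  rw [sum_filter, sum_coe_sort (edgesOf T) fun e => if (v : α) ∈ e then z e else 0]

theorem vertexEdgeMatrix_transpose_mulVec (g : α → ZMod 2) (e : edgesOf T) :
    ((vertexEdgeMatrix T)ᵀ *ᵥ fun v => g v) e = ∑ v ∈ (e : Finset α), g v := by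
  obtain ⟨-, t, ht, het⟩ := mem_edgesOf.1 e.2
  have hfilter : {v ∈ verticesOf T | v ∈ (e : Finset α)} = e := by
    ext v
    simp only [mem_filter, mem_verticesOf]
    grind
  simp only [mulVec, dotProduct, vertexEdgeMatrix, transpose_apply, ite_mul, one_mul, zero_mul]
  rw [sum_coe_sort (verticesOf T) fun v => if v ∈ (e : Finset α) then g v else 0, ← sum_filter,
    hfilter]

theorem edgeTriangleMatrix_mulVec (hA : A ⊆ T) (e : edgesOf T) :
    (edgeTriangleMatrix T *ᵥ fun t => if (t : Finset α) ∈ A then 1 else 0) e = boundary A e := by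
  simp only [mulVec, dotProduct, edgeTriangleMatrix, mul_ite, mul_one, mul_zero]
  rw [sum_coe_sort T fun t => if t ∈ A then if (e : Finset α) ⊆ t then 1 else 0 else 0,
    ← sum_filter, filter_mem_eq_inter, inter_eq_right.2 hA, boundary_eq_sum]

theorem edgeTriangleMatrix_transpose_mulVec (c : Finset α → ZMod 2) (t : T) :
    ((edgeTriangleMatrix T)ᵀ *ᵥ fun e => c e) t = ∑ e ∈ (t : Finset α).powersetCard 2, c e := by
  simp only [mulVec, dotProduct, edgeTriangleMatrix, transpose_apply, ite_mul, one_mul, zero_mul]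
  rw [sum_coe_sort (edgesOf T) fun e => if e ⊆ (t : Finset α) then c e else 0, ← sum_filter,
    powersetCard_two_eq_filter_edgesOf t.2]

theorem edgeTriangleMatrix_mulVec_one (e : edgesOf T) :
    (edgeTriangleMatrix T *ᵥ 1) e = boundary T e := by
  rw [← edgeTriangleMatrix_mulVec subset_rfl]
  congr
  ext t
  simp

theorem edgeTriangleMatrix_rank_add_finrank_ker (T : Finset (Finset α)) :
    (edgeTriangleMatrix T).rank +
      Module.finrank (ZMod 2) (LinearMap.ker (edgeTriangleMatrix T).mulVecLin) = #T := by
  have h := (edgeTriangleMatrix T).mulVecLin.finrank_range_add_finrank_ker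
  rwa [← rank, Module.finrank_pi, Fintype.card_coe] at h

namespace IsSurface

theorem vertexEdgeMatrix_mul_edgeTriangleMatrix (hT : IsSurface T) :
    vertexEdgeMatrix T * edgeTriangleMatrix T = 0 := by
  refine ext_iff_mulVec.2 fun a => funext fun v => ?_
  obtain ⟨A, hA, rfl⟩ := exists_eq_indicator a
  have hbd : (edgeTriangleMatrix T *ᵥ fun t => if (t : Finset α) ∈ A then 1 else 0) =
      fun e : edgesOf T => boundary A e := funext (edgeTriangleMatrix_mulVec hA)
  rw [← mulVec_mulVec, hbd, vertexEdgeMatrix_mulVec, zero_mulVec,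
    boundaryAt_boundary (fun t ht => hT.card_eq_three t (hA ht)) hA, Pi.zero_apply]

theorem finrank_ker_vertexEdgeMatrix_transpose (hT : IsSurface T) (hne : T.Nonempty) :
    Module.finrank (ZMod 2) (LinearMap.ker (vertexEdgeMatrix T)ᵀ.mulVecLin) = 1 := by
  obtain ⟨t₀, ht₀⟩ := hne
  obtain ⟨v₀, hv₀⟩ := hT.nonempty_of_mem ht₀
  have hv₀T : v₀ ∈ verticesOf T := mem_verticesOf.2 ⟨t₀, ht₀, hv₀⟩
  have hone : (fun _ => 1 : verticesOf T → ZMod 2) ∈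
      LinearMap.ker (vertexEdgeMatrix T)ᵀ.mulVecLin := by
    refine LinearMap.mem_ker.2 (funext fun e => ?_)
    rw [mulVecLin_apply, vertexEdgeMatrix_transpose_mulVec fun _ => 1, sum_const,
      (mem_edgesOf.1 e.2).1]
    rfl
  refine finrank_eq_one ⟨_, hone⟩ (fun h => ?_) ?_
  · exact one_ne_zero (congrFun (congrArg Subtype.val h) ⟨v₀, hv₀T⟩)
  · rintro ⟨a, ha⟩
    obtain ⟨g, rfl⟩ := exists_eq_restrict _ a
    have hg : ∀ e ∈ edgesOf T, ∑ v ∈ e, g v = 0 := fun e he => by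
      rw [← vertexEdgeMatrix_transpose_mulVec g ⟨e, he⟩]
      exact congrFun (LinearMap.mem_ker.1 ha) ⟨e, he⟩
    refine ⟨g v₀, Subtype.ext (funext fun v => ?_)⟩
    simpa using hT.eq_of_coboundary_eq_zero hg hv₀T v.2

theorem vertexEdgeMatrix_rank_add_one (hT : IsSurface T) (hne : T.Nonempty) :
    (vertexEdgeMatrix T).rank + 1 = #(verticesOf T) := by
  have h := (vertexEdgeMatrix T)ᵀ.mulVecLin.finrank_range_add_finrank_ker
  rwa [hT.finrank_ker_vertexEdgeMatrix_transpose hne, ← rank, rank_transpose, Module.finrank_pi,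
    Fintype.card_coe] at h

theorem eq_zero_or_eq_one_of_mem_ker (hT : IsSurface T) {a : T → ZMod 2}
    (ha : a ∈ LinearMap.ker (edgeTriangleMatrix T).mulVecLin) : a = 0 ∨ a = 1 := by
  obtain ⟨A, hA, rfl⟩ := exists_eq_indicator a
  have hbd : ∀ e ∈ edgesOf T, boundary A e = 0 := fun e he => by
    rw [← edgeTriangleMatrix_mulVec hA ⟨e, he⟩]
    exact congrFun (LinearMap.mem_ker.1 ha) ⟨e, he⟩
  rcases hT.eq_empty_or_eq_of_boundary_eq_zero hA hbd with rfl | rfl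
  · exact Or.inl (funext fun t => by simp)
  · exact Or.inr (funext fun t => by simp)

theorem finrank_ker_edgeTriangleMatrix_le_one (hT : IsSurface T) :
    Module.finrank (ZMod 2) (LinearMap.ker (edgeTriangleMatrix T).mulVecLin) ≤ 1 := by
  by_cases hker : LinearMap.ker (edgeTriangleMatrix T).mulVecLin = ⊥
  · rw [hker, finrank_bot]
    exact zero_le_one
  · obtain ⟨a, ha, ha0⟩ := (Submodule.ne_bot_iff _).1 hker
    refine finrank_le_one ⟨a, ha⟩ ?_
    rintro ⟨b, hb⟩
    have ha1 := (hT.eq_zero_or_eq_one_of_mem_ker ha).resolve_left ha0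
    rcases hT.eq_zero_or_eq_one_of_mem_ker hb with rfl | rfl
    · exact ⟨0, by ext; simp⟩
    · exact ⟨1, by ext; simp [ha1]⟩

theorem isClosedFamily_iff_one_mem_ker (hT : IsSurface T) :
    IsClosedFamily T ↔ (1 : T → ZMod 2) ∈ LinearMap.ker (edgeTriangleMatrix T).mulVecLin := by
  rw [LinearMap.mem_ker, mulVecLin_apply]
  constructor
  · intro h
    exact funext fun e => (edgeTriangleMatrix_mulVec_one e).trans (h.boundary_eq_zero e.2)
  · intro h
    exact hT.isClosedFamily_of_boundary_eq_zero fun e he =>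
      (edgeTriangleMatrix_mulVec_one ⟨e, he⟩).symm.trans (congrFun h ⟨e, he⟩)

theorem isClosedFamily_of_finrank_ker_pos (hT : IsSurface T)
    (h : 0 < Module.finrank (ZMod 2) (LinearMap.ker (edgeTriangleMatrix T).mulVecLin)) :
    IsClosedFamily T := by
  obtain ⟨⟨a, ha⟩, ha0⟩ := Module.finrank_pos_iff_exists_ne_zero.1 h
  have ha1 := (hT.eq_zero_or_eq_one_of_mem_ker ha).resolve_left fun h => ha0 (Subtype.ext h)
  exact hT.isClosedFamily_iff_one_mem_ker.2 (ha1 ▸ ha)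

theorem finrank_ker_edgeTriangleMatrix_pos (hT : IsSurface T) (hne : T.Nonempty)
    (hclosed : IsClosedFamily T) :
    0 < Module.finrank (ZMod 2) (LinearMap.ker (edgeTriangleMatrix T).mulVecLin) := by
  rw [Module.finrank_pos_iff_exists_ne_zero]
  have : Nonempty T := hne.to_subtype
  exact ⟨⟨1, hT.isClosedFamily_iff_one_mem_ker.1 hclosed⟩,
    fun h => one_ne_zero (congrArg Subtype.val h)⟩

-- `χ = 1 + dim H₂ - dim H₁` with `dim H₂ ≤ 1`, so `χ = 2` forces `H₂ ≠ 0` and `H₁ = 0`.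
theorem isClosedFamily_and_hasTrivialHomology (hT : IsSurface T) (hne : T.Nonempty)
    (hχ : eulerCharOf T = 2) : IsClosedFamily T ∧ HasTrivialHomology T := by
  have hrank₁ := hT.vertexEdgeMatrix_rank_add_one hne
  have hrank₂ := edgeTriangleMatrix_rank_add_finrank_ker T
  have hker₂ := hT.finrank_ker_edgeTriangleMatrix_le_one
  have hker₁ := (vertexEdgeMatrix T).mulVecLin.finrank_range_add_finrank_ker
  rw [← rank, Module.finrank_pi, Fintype.card_coe] at hker₁
  have hle : LinearMap.range (edgeTriangleMatrix T).mulVecLin ≤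
      LinearMap.ker (vertexEdgeMatrix T).mulVecLin := by
    rw [LinearMap.range_le_ker_iff, ← mulVecLin_mul, hT.vertexEdgeMatrix_mul_edgeTriangleMatrix,
      mulVecLin_zero]
  have hle_rank := Submodule.finrank_mono hle
  rw [← rank] at hle_rank
  rw [eulerCharOf] at hχ
  have hexact := Submodule.eq_of_le_of_finrank_eq hle (by rw [← rank]; omega)
  refine ⟨hT.isClosedFamily_of_finrank_ker_pos (by omega), fun z hz => ?_⟩
  have hz_ker : (fun e : edgesOf T => z e) ∈ LinearMap.ker (vertexEdgeMatrix T).mulVecLin :=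
    LinearMap.mem_ker.2 (funext fun v => (vertexEdgeMatrix_mulVec z v).trans (hz v))
  rw [← hexact] at hz_ker
  obtain ⟨a, ha⟩ := hz_ker
  obtain ⟨A, hA, rfl⟩ := exists_eq_indicator a
  refine ⟨A, hA, fun e he => ?_⟩
  rw [← edgeTriangleMatrix_mulVec hA ⟨e, he⟩]
  exact congrFun ha ⟨e, he⟩

theorem ker_edgeTriangleMatrix_transpose (hT : IsSurface T) (hH : HasTrivialCohomology T) :
    LinearMap.ker (edgeTriangleMatrix T)ᵀ.mulVecLin =
      LinearMap.range (vertexEdgeMatrix T)ᵀ.mulVecLin := by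
  refine le_antisymm (fun a ha => ?_) ?_
  · obtain ⟨c, rfl⟩ := exists_eq_restrict _ a
    obtain ⟨g, hg⟩ := hH c fun t ht => by
      rw [← edgeTriangleMatrix_transpose_mulVec c ⟨t, ht⟩]
      exact congrFun (LinearMap.mem_ker.1 ha) ⟨t, ht⟩
    refine ⟨fun v => g v, funext fun e => ?_⟩
    rw [mulVecLin_apply, vertexEdgeMatrix_transpose_mulVec, hg e e.2]
  · rw [LinearMap.range_le_ker_iff, ← mulVecLin_mul, ← transpose_mul,
      hT.vertexEdgeMatrix_mul_edgeTriangleMatrix, transpose_zero, mulVecLin_zero]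

theorem eulerCharOf_eq_two (hT : IsSurface T) (hne : T.Nonempty) (hclosed : IsClosedFamily T)
    (hH : HasTrivialCohomology T) : eulerCharOf T = 2 := by
  have hrank₁ := hT.vertexEdgeMatrix_rank_add_one hne
  have hrank₂ := edgeTriangleMatrix_rank_add_finrank_ker T
  have hker_le := hT.finrank_ker_edgeTriangleMatrix_le_one
  have hker_pos := hT.finrank_ker_edgeTriangleMatrix_pos hne hclosed
  have hker := (edgeTriangleMatrix T)ᵀ.mulVecLin.finrank_range_add_finrank_ker
  rw [hT.ker_edgeTriangleMatrix_transpose hH, ← rank, ← rank, rank_transpose, rank_transpose,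
    Module.finrank_pi, Fintype.card_coe] at hker
  rw [eulerCharOf]
  omega

end IsSurface

end TriangleFamilies

section Polygons

open Finset

variable {α : Type*} [DecidableEq α] {S S₁ T A : Finset (Finset α)} {e t t' : Finset α}
  {a b c v x y : α} {l N N₁ N₂ : List α} {z : Finset α → ZMod 2}

/-- The mod 2 1-chain of the polygonal path through the entries of a list. -/
def pathChain : List α → Finset α → ZMod 2
  | [], _ => 0
  | [_], _ => 0
  | x :: y :: l, e => (if e = {x, y} then 1 else 0) + pathChain (y :: l) e

/-- The mod 2 1-chain of the closed polygon through `b`, the entries of `N`, and `a`, whose closing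
edge is `{a, b}`. -/
def polygonChain (b : α) (N : List α) (a : α) (e : Finset α) : ZMod 2 :=
  pathChain (b :: (N ++ [a])) e + if e = {a, b} then 1 else 0

/-- Consecutive entries of `l` span edges of `T`. -/
def IsEdgePath (T : Finset (Finset α)) (l : List α) : Prop :=
  l.IsChain fun x y => {x, y} ∈ edgesOf T

/-- The mod 2 boundary of `S` is the simple closed polygon through `b`, the entries of `N`,
and `a`. Singling out the edge `{a, b}` marks the place where the next triangle is cut off. -/
structure BoundsPolygon (S : Finset (Finset α)) (b : α) (N : List α) (a : α) : Prop where
  ne_nil : N ≠ []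
  nodup : (b :: (N ++ [a])).Nodup
  boundary_eq : ∀ e : Finset α, #e = 2 → boundary S e = polygonChain b N a e

theorem pathChain_append (l₁ : List α) (c : α) (l₂ : List α) (e : Finset α) :
    pathChain (l₁ ++ c :: l₂) e = pathChain (l₁ ++ [c]) e + pathChain (c :: l₂) e := by
  induction l₁ with
  | nil => simp [pathChain]
  | cons x l₁ ih =>
    cases l₁ with
    | nil => simp [pathChain]
    | cons y l₁ =>
      simp only [List.cons_append, pathChain] at ih ⊢
      rw [ih, add_assoc]

theorem pathChain_reverse (l : List α) (e : Finset α) : pathChain l.reverse e = pathChain l e := by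
  induction l with
  | nil => rfl
  | cons x l ih =>
    cases l with
    | nil => rfl
    | cons y l =>
      simp only [List.reverse_cons, List.append_assoc, List.cons_append, List.nil_append] at ih ⊢
      rw [pathChain_append, ih]
      simp only [pathChain, pair_comm y x]
      ring

theorem polygonChain_reverse (b : α) (N : List α) (a : α) (e : Finset α) :
    polygonChain a N.reverse b e = polygonChain b N a e := by
  have hlist : a :: (N.reverse ++ [b]) = (b :: (N ++ [a])).reverse := by simp
  rw [polygonChain, polygonChain, hlist, pathChain_reverse, pair_comm]

theorem polygonChain_rotate (b c : α) (N : List α) (a : α) (e : Finset α) :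
    polygonChain c (N ++ [a]) b e = polygonChain b (c :: N) a e := by
  have happend := pathChain_append (c :: N) a [b] e
  simp only [List.cons_append] at happend
  simp only [polygonChain, List.cons_append, List.append_assoc, List.nil_append, happend, pathChain]
  ring

theorem polygonChain_append_cons (b : α) (N₁ : List α) (c : α) (N₂ : List α) (a : α)
    (e : Finset α) : polygonChain b (N₁ ++ c :: N₂) a e =
      polygonChain b N₁ c e + polygonChain b (c :: N₂) a e := by
  have happend := pathChain_append (b :: N₁) c (N₂ ++ [a]) e
  simp only [List.cons_append] at happend
  simp only [polygonChain, List.append_assoc, List.cons_append, pathChain, happend, pair_comm c b]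
  linear_combination - CharTwo.add_self_eq_zero (if e = {b, c} then (1 : ZMod 2) else 0)

theorem polygonChain_cons (b : α) (N : List α) (a c : α) (e : Finset α) :
    polygonChain c (b :: N) a e = polygonChain b N a e + polygonChain b [c] a e := by
  simp only [polygonChain, List.cons_append, List.nil_append, pathChain, pair_comm c b,
    pair_comm c a]
  linear_combination - CharTwo.add_self_eq_zero (if e = {a, b} then (1 : ZMod 2) else 0)

theorem mem_of_pathChain_ne_zero (h : pathChain l e ≠ 0) (hv : v ∈ e) : v ∈ l := by
  induction l with
  | nil => exact absurd rfl h
  | cons x l ih =>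
    cases l with
    | nil => exact absurd rfl h
    | cons y l =>
      by_cases he : e = {x, y}
      · subst he
        simp only [mem_insert, mem_singleton] at hv
        simp only [List.mem_cons]
        tauto
      · rw [pathChain, if_neg he, zero_add] at h
        exact List.mem_cons_of_mem _ (ih h)

theorem mem_of_polygonChain_ne_zero (h : polygonChain b N a e ≠ 0) (hv : v ∈ e) :
    v ∈ b :: (N ++ [a]) := by
  by_cases he : e = {a, b}
  · subst he
    simp only [mem_insert, mem_singleton] at hv
    simp only [List.mem_cons, List.mem_append]
    tauto
  · rw [polygonChain, if_neg he, add_zero] at h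
    exact mem_of_pathChain_ne_zero h hv

theorem pathChain_eq_zero_of_notMem (hv : v ∈ e) (hl : v ∉ l) : pathChain l e = 0 := by
  by_contra h
  exact hl (mem_of_pathChain_ne_zero h hv)

theorem pathChain_pair_of_nodup {l₁ l₂ : List α} (h : (l₁ ++ x :: y :: l₂).Nodup) :
    pathChain (l₁ ++ x :: y :: l₂) {x, y} = 1 := by
  simp only [List.nodup_append, List.nodup_cons, List.mem_cons] at h
  rw [pathChain_append, pathChain, if_pos rfl, pathChain_eq_zero_of_notMem (v := y) (by simp),
    pathChain_eq_zero_of_notMem (v := x) (by simp), zero_add, add_zero]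
  · grind
  · simp only [List.mem_append, List.mem_singleton]
    grind

theorem pathChain_closing_edge (hN : N ≠ []) (h : (b :: (N ++ [a])).Nodup) :
    pathChain (b :: (N ++ [a])) {a, b} = 0 := by
  obtain ⟨x, N, rfl⟩ := List.exists_cons_of_ne_nil hN
  simp only [List.cons_append, List.nodup_cons, List.mem_cons, List.mem_append] at h
  rw [List.cons_append, pathChain, pathChain_eq_zero_of_notMem (v := b) (by simp), add_zero,
    if_neg]
  · intro he
    have ha : a ∈ ({b, x} : Finset α) := he ▸ mem_insert_self a {b}
    grind
  · simp only [List.mem_cons, List.mem_append]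
    tauto

theorem polygonChain_closing_edge (hN : N ≠ []) (h : (b :: (N ++ [a])).Nodup) :
    polygonChain b N a {a, b} = 1 := by
  rw [polygonChain, pathChain_closing_edge hN h, if_pos rfl, zero_add]

theorem ne_of_pair_mem_edgesOf (h : {x, y} ∈ edgesOf T) : x ≠ y := by
  rintro rfl
  simpa using (mem_edgesOf.1 h).1

theorem mem_edgesOf_of_boundary_ne_zero (hS : S ⊆ T) (he : #e = 2) (h : boundary S e ≠ 0) :
    e ∈ edgesOf T := by
  obtain ⟨t, ht, het⟩ := exists_mem_of_boundary_ne_zero h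
  exact mem_edgesOf.2 ⟨he, t, hS ht, het⟩

theorem IsEdgePath.mem_edgesOf_of_pathChain_ne_zero (hl : IsEdgePath T l)
    (h : pathChain l e ≠ 0) : e ∈ edgesOf T := by
  induction l with
  | nil => exact absurd rfl h
  | cons x l ih =>
    cases l with
    | nil => exact absurd rfl h
    | cons y l =>
      obtain ⟨hxy, hl⟩ := List.isChain_cons_cons.1 hl
      by_cases he : e = {x, y}
      · exact he ▸ hxy
      · rw [pathChain, if_neg he, zero_add] at h
        exact ih hl h

theorem isEdgePath_of_pathChain (hl : l.Nodup)
    (h : ∀ e : Finset α, #e = 2 → pathChain l e ≠ 0 → e ∈ edgesOf T) : IsEdgePath T l := by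
  rw [IsEdgePath, List.isChain_iff_forall_rel_of_append_cons_cons]
  rintro x y l₁ l₂ rfl
  have hxy : x ≠ y := by
    simp only [List.nodup_append, List.nodup_cons, List.mem_cons] at hl
    tauto
  exact h _ (card_pair hxy) (by rw [pathChain_pair_of_nodup hl]; exact one_ne_zero)

theorem boundaryAt_add (E : Finset (Finset α)) (z w : Finset α → ZMod 2) (v : α) :
    boundaryAt E (fun e => z e + w e) v = boundaryAt E z v + boundaryAt E w v :=
  sum_add_distrib

theorem boundaryAt_pair (h : {x, y} ∈ edgesOf T) (v : α) :
    boundaryAt (edgesOf T) (fun e => if e = {x, y} then 1 else 0) v =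
      (if v = x then 1 else 0) + if v = y then 1 else 0 := by
  have hxy := ne_of_pair_mem_edgesOf h
  rw [boundaryAt, sum_ite_eq']
  simp only [mem_filter, h, true_and, mem_insert, mem_singleton]
  grind

theorem IsEdgePath.boundaryAt_pathChain (hl : IsEdgePath T (x :: (N ++ [a]))) (v : α) :
    boundaryAt (edgesOf T) (pathChain (x :: (N ++ [a]))) v =
      (if v = x then 1 else 0) + if v = a then 1 else 0 := by
  induction N generalizing x with
  | nil =>
    have hchain : pathChain [x, a] = fun e => if e = {x, a} then 1 else 0 := by
      funext e
      simp [pathChain]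
    rw [List.nil_append, hchain, boundaryAt_pair (List.isChain_pair.1 hl)]
  | cons y N ih =>
    obtain ⟨hxy, hl⟩ := List.isChain_cons_cons.1 hl
    have hchain : pathChain (x :: y :: (N ++ [a])) =
        fun e => (if e = {x, y} then 1 else 0) + pathChain (y :: (N ++ [a])) e := rfl
    rw [List.cons_append, hchain, boundaryAt_add, boundaryAt_pair hxy, ih hl]
    linear_combination CharTwo.add_self_eq_zero (if v = y then (1 : ZMod 2) else 0)

theorem IsEdgePath.boundaryAt_polygonChain (hl : IsEdgePath T (b :: (N ++ [a])))
    (hab : {a, b} ∈ edgesOf T) (v : α) : boundaryAt (edgesOf T) (polygonChain b N a) v = 0 := by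
  have hchain : polygonChain b N a =
      fun e => pathChain (b :: (N ++ [a])) e + if e = {a, b} then 1 else 0 := rfl
  rw [hchain, boundaryAt_add, hl.boundaryAt_pathChain, boundaryAt_pair hab]
  linear_combination CharTwo.add_self_eq_zero (if v = b then (1 : ZMod 2) else 0) +
    CharTwo.add_self_eq_zero (if v = a then (1 : ZMod 2) else 0)

-- The first edge of the path is the only one at its first vertex, so `z` vanishes there.
theorem eq_zero_of_cycle_on_path {E : Finset (Finset α)} (hl : l.Nodup)
    (hz : ∀ e ∈ E, z e ≠ 0 → pathChain l e ≠ 0) (hcycle : ∀ v, boundaryAt E z v = 0) :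
    ∀ e ∈ E, z e = 0 := by
  induction l with
  | nil => exact fun e he => by_contra fun h => hz e he h rfl
  | cons x l ih =>
    cases l with
    | nil => exact fun e he => by_contra fun h => hz e he h rfl
    | cons y l =>
      refine ih hl.of_cons fun e he hze => ?_
      have hchain := hz e he hze
      by_cases hxy : e = {x, y}
      · refine absurd ?_ hze
        rw [← hcycle x, boundaryAt, sum_eq_single_of_mem e (by grind)]
        intro e' he' hne
        obtain ⟨he', hx⟩ := mem_filter.1 he'
        by_contra hze'
        have hchain' := hz e' he' hze'
        rw [pathChain, if_neg (hxy ▸ hne), zero_add] at hchain'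
        exact (List.nodup_cons.1 hl).1 (mem_of_pathChain_ne_zero hchain' hx)
      · rwa [pathChain, if_neg hxy, zero_add] at hchain

theorem eq_zero_or_eq_polygonChain_of_cycle {E : Finset (Finset α)} (hN : N ≠ [])
    (hl : (b :: (N ++ [a])).Nodup) (hz : ∀ e ∈ E, z e ≠ 0 → polygonChain b N a e ≠ 0)
    (hcycle : ∀ v, boundaryAt E z v = 0)
    (hpolygon : ∀ v, boundaryAt E (polygonChain b N a) v = 0) :
    (∀ e ∈ E, z e = 0) ∨ ∀ e ∈ E, z e = polygonChain b N a e := by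
  rcases zmod_two_eq_zero_or_one (z {a, b}) with h | h
  · refine Or.inl (eq_zero_of_cycle_on_path hl (fun e he hze => ?_) hcycle)
    have hne : e ≠ {a, b} := by
      rintro rfl
      exact hze h
    simpa only [polygonChain, if_neg hne, add_zero] using hz e he hze
  · have hsum := eq_zero_of_cycle_on_path (E := E) (z := fun e => z e + polygonChain b N a e) hl
      (fun e he hze => ?_) fun v => by rw [boundaryAt_add, hcycle, hpolygon, add_zero]
    · exact Or.inr fun e he => CharTwo.add_eq_zero.1 (hsum e he)
    · have hne : e ≠ {a, b} := by
        rintro rfl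
        simp only [h, polygonChain_closing_edge hN hl, CharTwo.add_self_eq_zero] at hze
        exact hze rfl
      have hpoly : polygonChain b N a e ≠ 0 := fun h0 => by
        simp only [h0, add_zero] at hze
        exact hz e he hze h0
      simpa only [polygonChain, if_neg hne, add_zero] using hpoly

theorem boundary_union_of_disjoint (h : Disjoint S A) (e : Finset α) :
    boundary (S ∪ A) e = boundary S e + boundary A e := by
  simp_rw [boundary_eq_sum]
  exact sum_union h

theorem boundary_sdiff (h : A ⊆ S) (e : Finset α) :
    boundary (S \ A) e = boundary S e + boundary A e := by
  have hunion := boundary_union_of_disjoint (sdiff_disjoint (s := A) (t := S)) e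
  rw [sdiff_union_of_subset h] at hunion
  rw [hunion, add_assoc, CharTwo.add_self_eq_zero, add_zero]

theorem boundary_triangle (hab : a ≠ b) (hbc : b ≠ c) (hac : a ≠ c) (he : #e = 2) :
    boundary {({a, b, c} : Finset α)} e = polygonChain b [c] a e := by
  obtain ⟨x, y, hxy, rfl⟩ := card_eq_two.1 he
  have pair_eq_iff (u v : α) : ({x, y} : Finset α) = {u, v} ↔ x = u ∧ y = v ∨ x = v ∧ y = u := by
    rw [← coe_inj, coe_pair, coe_pair, Set.pair_eq_pair_iff]
  simp only [boundary_eq_sum, sum_singleton, polygonChain, List.cons_append, List.nil_append,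
    pathChain, pair_eq_iff, insert_subset_iff, singleton_subset_iff, mem_insert, mem_singleton]
  grind

theorem HasTrivialHomology.exists_boundary_eq_of_notMem (hH : HasTrivialHomology T)
    (hT : IsClosedFamily T) (hz : ∀ v, boundaryAt (edgesOf T) z v = 0) (t : Finset α) :
    ∃ A ⊆ T, t ∉ A ∧ ∀ e ∈ edgesOf T, boundary A e = z e := by
  obtain ⟨A, hA, hAz⟩ := hH z hz
  by_cases ht : t ∈ A
  · refine ⟨T \ A, sdiff_subset, by simp [ht], fun e he => ?_⟩
    rw [boundary_sdiff hA, hT.boundary_eq_zero he, zero_add, hAz e he]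
  · exact ⟨A, hA, ht, hAz⟩

theorem HasTrivialHomology.exists_boundsPolygon_of_notMem (hH : HasTrivialHomology T)
    (hT : IsClosedFamily T) (hN : N ≠ []) (hl : (b :: (N ++ [a])).Nodup)
    (hpath : IsEdgePath T (b :: (N ++ [a]))) (hab : {a, b} ∈ edgesOf T) (t : Finset α) :
    ∃ A ⊆ T, t ∉ A ∧ BoundsPolygon A b N a := by
  obtain ⟨A, hA, htA, hAb⟩ :=
    hH.exists_boundary_eq_of_notMem hT (hpath.boundaryAt_polygonChain hab) t
  refine ⟨A, hA, htA, hN, hl, fun e he => ?_⟩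
  by_cases heT : e ∈ edgesOf T
  · exact hAb e heT
  · have hab' : e ≠ {a, b} := fun h => heT (h ▸ hab)
    rw [polygonChain, if_neg hab', add_zero,
      of_not_not fun h => heT (hpath.mem_edgesOf_of_pathChain_ne_zero h),
      of_not_not fun h => heT (mem_edgesOf_of_boundary_ne_zero hA he h)]

theorem IsClosedFamily.exists_notMem_of_boundary_ne_zero (hT : IsClosedFamily T) (hS : S ⊆ T)
    (he : #e = 2) (h : boundary S e ≠ 0) : ∃ t ∈ T, t ∉ S ∧ e ⊆ t := by
  have hsdiff : boundary (T \ S) e ≠ 0 := by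
    rwa [boundary_sdiff hS, hT.boundary_eq_zero (mem_edgesOf_of_boundary_ne_zero hS he h),
      zero_add]
  obtain ⟨t, ht, het⟩ := exists_mem_of_boundary_ne_zero hsdiff
  exact ⟨t, (mem_sdiff.1 ht).1, (mem_sdiff.1 ht).2, het⟩

theorem eq_triangle_of_pair_subset (hab : a ≠ b) (ht : #t = 3) (h : {a, b} ⊆ t) :
    ∃ c, a ≠ c ∧ b ≠ c ∧ t = {a, b, c} := by
  have hcard : #(t \ {a, b}) = 1 := by
    rw [card_sdiff_of_subset h, ht, card_pair hab]
  obtain ⟨c, hc⟩ := card_eq_one.1 hcard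
  have hct : c ∈ t \ {a, b} := hc ▸ mem_singleton_self c
  refine ⟨c, by grind, by grind, ?_⟩
  rw [← union_sdiff_of_subset h, hc, insert_union]
  rfl

theorem IsSurface.eq_of_boundary_ne_zero (hT : IsSurface T) (hS : S ⊆ T) (he : #e = 2)
    (h : boundary S e ≠ 0) (ht : t ∈ S) (het : e ⊆ t) (ht' : t' ∈ S) (het' : e ⊆ t') : t = t' := by
  have hle : #(cofaces S e) ≤ 2 :=
    (card_le_card (filter_subset_filter _ hS)).trans (hT.card_cofaces_le_two e he)
  have hne : #(cofaces S e) ≠ 2 := fun h2 => h (by rw [boundary, h2]; rfl)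
  exact card_le_one.1 (by omega : #(cofaces S e) ≤ 1) t (mem_cofaces.2 ⟨ht, het⟩) t'
    (mem_cofaces.2 ⟨ht', het'⟩)

theorem IsClosedFamily.boundsPolygon_sdiff_triangle (hT : IsClosedFamily T) (hab : a ≠ b)
    (hbc : b ≠ c) (hac : a ≠ c) (ht : {a, b, c} ∈ T) :
    BoundsPolygon (T \ {{a, b, c}}) b [c] a where
  ne_nil := List.cons_ne_nil _ _
  nodup := by simp [hab.symm, hbc, hac.symm]
  boundary_eq e he := by
    have h0 : boundary T e = 0 := of_not_not fun h =>
      h (hT.boundary_eq_zero (mem_edgesOf_of_boundary_ne_zero subset_rfl he h))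
    rw [boundary_sdiff (singleton_subset_iff.2 ht), h0, zero_add,
      boundary_triangle hab hbc hac he]

theorem boundsPolygon_triangle (hab : a ≠ b) (hbc : b ≠ c) (hac : a ≠ c) :
    BoundsPolygon {{a, b, c}} b [c] a where
  ne_nil := List.cons_ne_nil _ _
  nodup := by simp [hab.symm, hbc, hac.symm]
  boundary_eq _ he := boundary_triangle hab hbc hac he

namespace BoundsPolygon

theorem reverse (h : BoundsPolygon S b N a) : BoundsPolygon S a N.reverse b where
  ne_nil := by simpa using h.ne_nil
  nodup := by simpa using List.nodup_reverse.2 h.nodup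
  boundary_eq e he := by rw [polygonChain_reverse, h.boundary_eq e he]

theorem ne (h : BoundsPolygon S b N a) : a ≠ b := by
  have := h.nodup
  simp only [List.nodup_cons, List.mem_append, List.mem_singleton] at this
  tauto

theorem boundary_closing_edge (h : BoundsPolygon S b N a) : boundary S {a, b} ≠ 0 := by
  rw [h.boundary_eq _ (card_pair h.ne), polygonChain_closing_edge h.ne_nil h.nodup]
  exact one_ne_zero

theorem isEdgePath (h : BoundsPolygon S b N a) (hS : S ⊆ T) :
    IsEdgePath T (b :: (N ++ [a])) := by
  refine isEdgePath_of_pathChain h.nodup fun e he hchain => ?_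
  have hab : e ≠ {a, b} := by
    rintro rfl
    exact hchain (pathChain_closing_edge h.ne_nil h.nodup)
  refine mem_edgesOf_of_boundary_ne_zero hS he ?_
  rwa [h.boundary_eq e he, polygonChain, if_neg hab, add_zero]

theorem pair_mem_edgesOf (h : BoundsPolygon S b N a) (hS : S ⊆ T) : {a, b} ∈ edgesOf T :=
  mem_edgesOf_of_boundary_ne_zero hS (card_pair h.ne) h.boundary_closing_edge

theorem rotate (h : BoundsPolygon S b (c :: N) a) : BoundsPolygon S c (N ++ [a]) b where
  ne_nil := by simp
  nodup := (List.perm_append_singleton b (c :: (N ++ [a]))).nodup_iff.2 h.nodup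
  boundary_eq e he := by rw [polygonChain_rotate, h.boundary_eq e he]

theorem mem_of_mem_sdiff (h : BoundsPolygon S b N a) (hT : IsSurface T) (hS : S ⊆ T) (ht : t ∈ S)
    (hvt : v ∈ t) (ht' : t' ∈ T \ S) (hvt' : v ∈ t') : v ∈ b :: (N ++ [a]) := by
  obtain ⟨ht', ht'S⟩ := mem_sdiff.1 ht'
  obtain ⟨e, he, hve, hbd⟩ := hT.exists_boundary_edge_at hS ht hvt ht' hvt' ht'S
  rw [h.boundary_eq e (mem_edgesOf.1 he).1] at hbd
  exact mem_of_polygonChain_ne_zero hbd hve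

theorem eq_singleton (h : BoundsPolygon S b [c] a) (hT : IsSurface T) (hS : S ⊆ T)
    (ht : {a, b, c} ∈ S) : S = {{a, b, c}} := by
  have hl := h.nodup
  simp only [List.cons_append, List.nil_append, List.nodup_cons, List.mem_cons] at hl
  have hsub : {{a, b, c}} ⊆ S := singleton_subset_iff.2 ht
  refine (sdiff_eq_empty_iff_subset.1 ?_).antisymm hsub
  refine (hT.eq_empty_or_eq_of_boundary_eq_zero (sdiff_subset.trans hS)
    fun e he => ?_).resolve_right fun heq => ?_
  · rw [boundary_sdiff hsub, boundary_triangle h.ne (by grind) (by grind) (mem_edgesOf.1 he).1,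
      h.boundary_eq e (mem_edgesOf.1 he).1, CharTwo.add_self_eq_zero]
  · have hmem := heq ▸ hS ht
    simp at hmem

theorem sdiff_triangle (h : BoundsPolygon S b N a) (hc : c ∉ b :: (N ++ [a]))
    (ht : {a, b, c} ∈ S) : BoundsPolygon (S \ {{a, b, c}}) c (b :: N) a where
  ne_nil := List.cons_ne_nil _ _
  nodup := List.nodup_cons.2 ⟨hc, h.nodup⟩
  boundary_eq e he := by
    have hac : a ≠ c := by grind
    have hbc : b ≠ c := by grind
    rw [boundary_sdiff (singleton_subset_iff.2 ht), boundary_triangle h.ne hbc hac he,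
      h.boundary_eq e he, polygonChain_cons b N a c]

theorem nodup_left (h : BoundsPolygon S b (N₁ ++ c :: N₂) a) :
    (b :: (N₁ ++ [c])).Nodup :=
  h.nodup.sublist (by simp)

theorem nodup_right (h : BoundsPolygon S b (N₁ ++ c :: N₂) a) :
    (b :: (c :: N₂ ++ [a])).Nodup :=
  h.nodup.sublist (by simp)

theorem ne_chord (h : BoundsPolygon S b (N₁ ++ c :: N₂) a) : b ≠ c := by
  have := h.nodup_left
  simp only [List.nodup_cons, List.mem_append, List.mem_singleton] at this
  tauto

theorem boundary_chord_eq_zero (h : BoundsPolygon S b (N₁ ++ c :: N₂) a) (hN₁ : N₁ ≠ []) :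
    boundary S {c, b} = 0 := by
  have hrotate : (c :: (N₂ ++ [a] ++ [b])).Nodup :=
    (List.perm_append_singleton b (c :: N₂ ++ [a])).nodup_iff.2 h.nodup_right
  rw [h.boundary_eq _ (card_pair h.ne_chord.symm), polygonChain_append_cons,
    polygonChain_closing_edge hN₁ h.nodup_left, ← polygonChain_rotate, pair_comm,
    polygonChain_closing_edge (by simp) hrotate]
  rfl

theorem eq_chord_of_mem_both (h : BoundsPolygon S b (N₁ ++ c :: N₂) a) (he : #e = 2)
    (h₁ : polygonChain b N₁ c e ≠ 0) (h₂ : polygonChain b (c :: N₂) a e ≠ 0) : e = {c, b} := by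
  refine eq_of_subset_of_card_le (fun v hv => ?_) (he ▸ card_le_two)
  have hv₁ := mem_of_polygonChain_ne_zero h₁ hv
  have hv₂ := mem_of_polygonChain_ne_zero h₂ hv
  have hl := h.nodup
  simp only [List.nodup_cons, List.nodup_append, List.mem_append, List.mem_cons,
    List.append_assoc, List.cons_append] at hl hv₁ hv₂
  grind

theorem isEdgePath_left (h : BoundsPolygon S b (N₁ ++ c :: N₂) a) (hS : S ⊆ T) :
    IsEdgePath T (b :: (N₁ ++ [c])) :=
  List.IsChain.left_of_append (l₂ := N₂ ++ [a]) (by simpa [IsEdgePath] using h.isEdgePath hS)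

theorem boundary_ne_zero_of_sdiff (h : BoundsPolygon S b (N₁ ++ c :: N₂) a)
    (hT : IsSurface T) (hcl : IsClosedFamily T) (hS : S ⊆ T) (hN₁ : N₁ ≠ [])
    (ht : {a, b, c} ∈ S) (hS₁ : S₁ ⊆ T)
    (h₁ : BoundsPolygon S₁ b N₁ c) (he : #e = 2) (hbd : boundary (S₁ \ S) e ≠ 0) :
    boundary S e ≠ 0 := by
  intro h0
  obtain ⟨u, hu, heu⟩ := exists_mem_of_boundary_ne_zero hbd
  obtain ⟨w, hw, hwA, hew⟩ :=
    hcl.exists_notMem_of_boundary_ne_zero (sdiff_subset.trans hS₁) he hbd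
  simp only [mem_sdiff, not_and, not_not] at hu hwA
  have hwS : w ∉ S := fun hwS => hu.2 (hT.mem_of_boundary_eq_zero hS he hwS hew (hS₁ hu.1) heu h0)
  have hne₁ : polygonChain b N₁ c e ≠ 0 := by
    rw [← h₁.boundary_eq e he]
    exact fun h₁0 => hwS (hwA (hT.mem_of_boundary_eq_zero hS₁ he hu.1 heu hw hew h₁0))
  have hne₂ : polygonChain b (c :: N₂) a e ≠ 0 := by
    rw [h.boundary_eq e he, polygonChain_append_cons, CharTwo.add_eq_zero] at h0
    exact h0 ▸ hne₁
  obtain rfl := h.eq_chord_of_mem_both he hne₁ hne₂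
  exact hu.2 (hT.mem_of_boundary_eq_zero hS he ht (by grind) (hS₁ hu.1) heu
    (h.boundary_chord_eq_zero hN₁))

theorem subset_of_boundsPolygon_left (h : BoundsPolygon S b (N₁ ++ c :: N₂) a)
    (hT : IsSurface T) (hcl : IsClosedFamily T) (hS : S ⊆ T) (hN₁ : N₁ ≠ [])
    (ht : {a, b, c} ∈ S) (hS₁ : S₁ ⊆ T)
    (h₁ : BoundsPolygon S₁ b N₁ c) (ht'T : t' ∈ T) (ht'S : t' ∉ S) (ht'S₁ : t' ∉ S₁) :
    S₁ ⊆ S := by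
  have hA : S₁ \ S ⊆ T := sdiff_subset.trans hS₁
  rw [← sdiff_eq_empty_iff_subset]
  rcases eq_zero_or_eq_polygonChain_of_cycle h.ne_nil h.nodup
    (fun e he hbd => h.boundary_eq e (mem_edgesOf.1 he).1 ▸
      h.boundary_ne_zero_of_sdiff hT hcl hS hN₁ ht hS₁ h₁ (mem_edgesOf.1 he).1 hbd)
    (boundaryAt_boundary (fun t ht => hT.card_eq_three t (hA ht)) hA)
    ((h.isEdgePath hS).boundaryAt_polygonChain (h.pair_mem_edgesOf hS)) with h0 | hbd
  · refine (hT.eq_empty_or_eq_of_boundary_eq_zero hA h0).resolve_right fun hAT => ?_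
    exact (mem_sdiff.1 (hAT.symm ▸ hS ht)).2 ht
  · have hU : ∀ e ∈ edgesOf T, boundary (S₁ \ S ∪ S) e = 0 := fun e he => by
      rw [boundary_union_of_disjoint sdiff_disjoint, hbd e he,
        h.boundary_eq e (mem_edgesOf.1 he).1, CharTwo.add_self_eq_zero]
    rcases hT.eq_empty_or_eq_of_boundary_eq_zero (union_subset hA hS) hU with hU | hU
    · exact (union_eq_empty.1 hU).1
    · have ht' : t' ∈ S₁ \ S ∪ S := hU.symm ▸ ht'T
      grind

-- Trivial homology bounds the part of the polygon cut off by the chord `bc`.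
theorem exists_split (h : BoundsPolygon S b (N₁ ++ c :: N₂) a)
    (hT : IsSurface T) (hcl : IsClosedFamily T) (hS : S ⊆ T)
    (hH : HasTrivialHomology T) (hN₁ : N₁ ≠ []) (ht : {a, b, c} ∈ S) :
    ∃ S₁ ⊂ S, S \ S₁ ⊂ S ∧ BoundsPolygon S₁ b N₁ c ∧ BoundsPolygon (S \ S₁) b (c :: N₂) a := by
  have hcb : {c, b} ∈ edgesOf T := mem_edgesOf.2 ⟨card_pair h.ne_chord.symm, _, hS ht, by grind⟩
  obtain ⟨t', ht'T, ht'S, -⟩ :=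
    hcl.exists_notMem_of_boundary_ne_zero hS (card_pair h.ne) h.boundary_closing_edge
  obtain ⟨S₁, hS₁T, ht'S₁, h₁⟩ :=
    hH.exists_boundsPolygon_of_notMem hcl hN₁ h.nodup_left (h.isEdgePath_left hS) hcb t'
  have hsub := h.subset_of_boundsPolygon_left hT hcl hS hN₁ ht hS₁T h₁ ht'T ht'S ht'S₁
  have h₂ : BoundsPolygon (S \ S₁) b (c :: N₂) a := ⟨List.cons_ne_nil _ _, h.nodup_right,
    fun e he => by
      rw [boundary_sdiff hsub, h.boundary_eq e he, h₁.boundary_eq e he, polygonChain_append_cons,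
        add_right_comm, CharTwo.add_self_eq_zero, zero_add]⟩
  obtain ⟨t₁, ht₁, -⟩ := exists_mem_of_boundary_ne_zero h₁.boundary_closing_edge
  obtain ⟨t₂, ht₂, -⟩ := exists_mem_of_boundary_ne_zero h₂.boundary_closing_edge
  refine ⟨S₁, ssubset_of_subset_of_ne hsub ?_, sdiff_ssubset hsub ⟨t₁, ht₁⟩, h₁, h₂⟩
  rintro rfl
  simp at ht₂

end BoundsPolygon

end Polygons

section Parametrizations

open Set

variable {X Y Z : Type*} [TopologicalSpace X] [TopologicalSpace Y] [TopologicalSpace Z]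

/-- `f` restricts to a continuous bijection from `Q` onto `D`. For compact `Q` and Hausdorff `X`
this is a homeomorphism; total functions are used so that pieces are easily glued. -/
structure IsParam (f : Y → X) (Q : Set Y) (D : Set X) : Prop where
  continuousOn : ContinuousOn f Q
  bijOn : BijOn f Q D

namespace IsParam

theorem comp {g : Z → X} {f : Y → Z} {Q : Set Y} {P : Set Z} {D : Set X} (hg : IsParam g P D)
    (hf : IsParam f Q P) : IsParam (g ∘ f) Q D :=
  ⟨hg.continuousOn.comp hf.continuousOn hf.bijOn.mapsTo, hg.bijOn.comp hf.bijOn⟩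

theorem restrict {f : Y → X} {P Q : Set Y} {D : Set X} (hf : IsParam f Q D) (hPQ : P ⊆ Q) :
    IsParam f P (f '' P) :=
  ⟨hf.continuousOn.mono hPQ, (hf.bijOn.injOn.mono hPQ).bijOn_image⟩

theorem congr {f g : Y → X} {Q : Set Y} {D : Set X} (hf : IsParam f Q D) (h : EqOn f g Q) :
    IsParam g Q D :=
  ⟨hf.continuousOn.congr h.symm, hf.bijOn.congr h⟩

theorem of_homeomorph (e : Y ≃ₜ X) {Q : Set Y} {D : Set X} (h : e '' Q = D) : IsParam e Q D :=
  ⟨e.continuous.continuousOn, h ▸ e.injective.injOn.bijOn_image⟩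

theorem nonempty_homeomorph [T2Space X] {f : Y → X} {Q : Set Y} {D : Set X} (hf : IsParam f Q D)
    (hQ : IsCompact Q) : Nonempty (Q ≃ₜ D) :=
  have := isCompact_iff_compactSpace.1 hQ
  ⟨Continuous.homeoOfEquivCompactToT2 (f := hf.bijOn.equiv)
    (hf.continuousOn.mapsToRestrict hf.bijOn.mapsTo)⟩

theorem exists_inverse [T2Space X] [Nonempty Y] {f : Y → X} {Q : Set Y} {D : Set X}
    (hf : IsParam f Q D) (hQ : IsCompact Q) : ∃ k, IsParam k D Q ∧ InvOn k f Q D := by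
  have hinv := hf.bijOn.invOn_invFunOn
  set k := Function.invFunOn f Q
  have hk : BijOn k D Q := hf.bijOn.symm hinv.symm
  refine ⟨k, ⟨continuousOn_iff_isClosed.2 fun t ht => ⟨f '' (Q ∩ t), ?_, ?_⟩, hk⟩, hinv⟩
  · have := (hQ.inter_right ht).image_of_continuousOn (hf.continuousOn.mono inter_subset_left)
    exact this.isClosed
  · ext x
    constructor
    · rintro ⟨hxt, hxD⟩
      exact ⟨⟨k x, ⟨hk.mapsTo hxD, hxt⟩, hinv.2 hxD⟩, hxD⟩
    · rintro ⟨⟨y, ⟨hyQ, hyt⟩, rfl⟩, hxD⟩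
      exact ⟨by rwa [mem_preimage, hinv.1 hyQ], hxD⟩

theorem exists_glue {f₁ f₂ : Y → X} {Q₁ Q₂ : Set Y} {D₁ D₂ : Set X} (h₁ : IsParam f₁ Q₁ D₁)
    (h₂ : IsParam f₂ Q₂ D₂) (hQ₁ : IsClosed Q₁) (hQ₂ : IsClosed Q₂)
    (heq : EqOn f₁ f₂ (Q₁ ∩ Q₂)) (hD : D₁ ∩ D₂ ⊆ f₁ '' (Q₁ ∩ Q₂)) :
    ∃ f, IsParam f (Q₁ ∪ Q₂) (D₁ ∪ D₂) ∧ EqOn f f₁ Q₁ ∧ EqOn f f₂ Q₂ := by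
  classical
  set f := Q₁.piecewise f₁ f₂
  have hf₁ : EqOn f f₁ Q₁ := piecewise_eqOn _ _ _
  have hf₂ : EqOn f f₂ Q₂ := fun y hy => by
    by_cases hy₁ : y ∈ Q₁
    · exact (hf₁ hy₁).trans (heq ⟨hy₁, hy⟩)
    · exact piecewise_eqOn_compl _ _ _ hy₁
  have hp₁ := h₁.congr hf₁.symm
  have hp₂ := h₂.congr hf₂.symm
  have hcross : ∀ y ∈ Q₁, ∀ z ∈ Q₂, f y = f z → y = z := by
    intro y hy z hz hyz
    obtain ⟨w, ⟨hw₁, hw₂⟩, hwy⟩ :=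
      hD ⟨hp₁.bijOn.mapsTo hy, hyz ▸ hp₂.bijOn.mapsTo hz⟩
    rw [← hf₁ hw₁] at hwy
    exact (hp₁.bijOn.injOn hw₁ hy hwy).symm.trans (hp₂.bijOn.injOn hw₂ hz (hwy.trans hyz))
  refine ⟨f, ⟨hp₁.continuousOn.union_of_isClosed hp₂.continuousOn hQ₁ hQ₂,
    hp₁.bijOn.union hp₂.bijOn ?_⟩, hf₁, hf₂⟩
  rintro y (hy | hy) z (hz | hz) hyz
  · exact hp₁.bijOn.injOn hy hz hyz
  · exact hcross y hy z hz hyz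
  · exact (hcross z hz y hy hyz.symm).symm
  · exact hp₂.bijOn.injOn hy hz hyz

end IsParam

end Parametrizations

section Arcs

open Set

variable {X : Type*} [TopologicalSpace X]

/-- `A` is an arc, that is, an injective continuous image of an interval, from `p` to `q`. -/
def IsArc (A : Set X) (p q : X) : Prop :=
  ∃ α : ℝ → X, IsParam α (Icc 0 1) A ∧ α 0 = p ∧ α 1 = q

theorem affineHomeomorph_sub_image_Icc {c d : ℝ} (hcd : c < d) :
    affineHomeomorph (d - c) c (sub_pos.2 hcd).ne' '' Icc 0 1 = Icc c d := by
  simpa using affineHomeomorph_image_Icc (d - c) c 0 1 (sub_pos.2 hcd)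

theorem IsParam.isArc {α : ℝ → X} {A : Set X} {c d : ℝ} (hα : IsParam α (Icc c d) A)
    (hcd : c < d) : IsArc A (α c) (α d) :=
  ⟨_, hα.comp (.of_homeomorph _ (affineHomeomorph_sub_image_Icc hcd)), by simp, by simp⟩

namespace IsArc

variable {A B : Set X} {p q r : X}

theorem exists_param (h : IsArc A p q) {c d : ℝ} (hcd : c < d) :
    ∃ α, IsParam α (Icc c d) A ∧ α c = p ∧ α d = q := by
  obtain ⟨α, hα, rfl, rfl⟩ := h
  set e := affineHomeomorph (d - c) c (sub_pos.2 hcd).ne'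
  have he : e.symm '' Icc c d = Icc 0 1 := by
    rw [e.image_symm, ← affineHomeomorph_sub_image_Icc hcd, e.preimage_image]
  have hc : e.symm c = 0 := e.symm_apply_eq.2 (by simp [e])
  have hd : e.symm d = 1 := e.symm_apply_eq.2 (by simp [e])
  exact ⟨_, hα.comp (.of_homeomorph _ he), by simp [hc], by simp [hd]⟩

theorem symm (h : IsArc A p q) : IsArc A q p := by
  obtain ⟨α, hα, rfl, rfl⟩ := h
  exact ⟨_, hα.comp (.of_homeomorph (Homeomorph.subLeft 1) (by simp)), by simp, by simp⟩

theorem trans (h : IsArc A p q) (h' : IsArc B q r) (hAB : A ∩ B ⊆ {q}) :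
    IsArc (A ∪ B) p r := by
  obtain ⟨α, hα, rfl, rfl⟩ := h
  obtain ⟨β, hβ, hβ1, rfl⟩ := h'.exists_param one_lt_two
  have hinter : Icc (0 : ℝ) 1 ∩ Icc 1 2 = {1} := Icc_inter_Icc_eq_singleton zero_le_one one_le_two
  obtain ⟨γ, hγ, hγα, hγβ⟩ := hα.exists_glue hβ isClosed_Icc isClosed_Icc
    (by simp [hinter, hβ1]) (by simpa [hinter] using hAB)
  rw [Icc_union_Icc_eq_Icc zero_le_one one_le_two] at hγ
  have := hγ.isArc two_pos
  rwa [hγα (by simp), hγβ (by simp)] at this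

end IsArc

theorem isArc_segment {E : Type*} [AddCommGroup E] [Module ℝ E] [TopologicalSpace E]
    [IsTopologicalAddGroup E] [ContinuousSMul ℝ E] {a b : E} (h : a ≠ b) :
    IsArc (segment ℝ a b) a b := by
  refine ⟨AffineMap.lineMap a b, ⟨AffineMap.lineMap_continuous.continuousOn, ?_⟩, by simp, by simp⟩
  rw [segment_eq_image_lineMap]
  exact (AffineMap.lineMap_injective ℝ h).injOn.bijOn_image

end Arcs

section Disks

open Set Metric

section AlexanderTrick

variable {E : Type*} [NormedAddCommGroup E] [NormedSpace ℝ E] {h : E → E}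

/-- Alexander's trick: the cone over a self-map `h` of the unit sphere. -/
noncomputable def radialExtension (h : E → E) (x : E) : E :=
  ‖x‖ • h (‖x‖⁻¹ • x)

theorem radialExtension_of_mem_sphere {x : E} (hx : x ∈ sphere (0 : E) 1) :
    radialExtension h x = h x := by
  simp [radialExtension, mem_sphere_zero_iff_norm.1 hx]

theorem norm_inv_norm_smul {x : E} (hx : x ≠ 0) : ‖‖x‖⁻¹ • x‖ = 1 := by
  simp [norm_smul, norm_ne_zero_iff.2 hx]

theorem norm_radialExtension (hh : MapsTo h (sphere 0 1) (sphere 0 1)) (x : E) :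
    ‖radialExtension h x‖ = ‖x‖ := by
  rcases eq_or_ne x 0 with rfl | hx
  · simp [radialExtension]
  · have : ‖h (‖x‖⁻¹ • x)‖ = 1 :=
      mem_sphere_zero_iff_norm.1 (hh (mem_sphere_zero_iff_norm.2 (norm_inv_norm_smul hx)))
    simp [radialExtension, norm_smul, this]

theorem leftInverse_radialExtension {k : E → E} (hh : MapsTo h (sphere 0 1) (sphere 0 1))
    (hkh : LeftInvOn k h (sphere 0 1)) :
    Function.LeftInverse (radialExtension k) (radialExtension h) := by
  intro x
  rw [radialExtension, norm_radialExtension hh]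
  rcases eq_or_ne x 0 with rfl | hx
  · simp
  · have hx' : ‖x‖ ≠ 0 := norm_ne_zero_iff.2 hx
    rw [radialExtension, inv_smul_smul₀ hx',
      hkh (mem_sphere_zero_iff_norm.2 (norm_inv_norm_smul hx)), smul_inv_smul₀ hx']

theorem continuous_radialExtension (hc : ContinuousOn h (sphere 0 1))
    (hh : MapsTo h (sphere 0 1) (sphere 0 1)) : Continuous (radialExtension h) := by
  refine continuous_iff_continuousAt.2 fun x => ?_
  rcases eq_or_ne x 0 with rfl | hx
  · have h0 : radialExtension h 0 = 0 := by simp [radialExtension]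
    rw [ContinuousAt, h0, tendsto_zero_iff_norm_tendsto_zero]
    simpa only [norm_radialExtension hh, norm_zero] using continuous_norm.tendsto (0 : E)
  · have hnorm : ContinuousOn (fun y : E => ‖y‖⁻¹ • y) {0}ᶜ :=
      (continuous_norm.continuousOn.inv₀ fun y hy => norm_ne_zero_iff.2 hy).smul continuousOn_id
    have hmaps : MapsTo (fun y : E => ‖y‖⁻¹ • y) {0}ᶜ (sphere 0 1) :=
      fun y hy => mem_sphere_zero_iff_norm.2 (norm_inv_norm_smul hy)
    exact (continuous_norm.continuousOn.smul (hc.comp hnorm hmaps)).continuousAt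
      (isOpen_compl_singleton.mem_nhds hx)

theorem isParam_radialExtension (hh : IsParam h (sphere 0 1) (sphere 0 1)) :
    IsParam (radialExtension h) (closedBall 0 1) (closedBall 0 1) := by
  have hinv := hh.bijOn.invOn_invFunOn
  have hmaps := hh.bijOn.mapsTo
  have hmaps' := (hh.bijOn.symm hinv.symm).mapsTo
  refine ⟨(continuous_radialExtension hh.continuousOn hmaps).continuousOn,
    InvOn.bijOn ⟨(leftInverse_radialExtension hmaps hinv.1).leftInvOn _,
      (leftInverse_radialExtension hmaps' hinv.2).leftInvOn _⟩ ?_ ?_⟩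
  · exact fun x hx => by simpa [norm_radialExtension hmaps] using hx
  · exact fun x hx => by simpa [norm_radialExtension hmaps'] using hx

end AlexanderTrick

variable {X : Type*} [TopologicalSpace X]

/-- A compact convex subset of the plane with nonempty interior, to be used as a model of the closed
disk. -/
structure IsPlanarBody (Q : Set ℂ) : Prop where
  isCompact : IsCompact Q
  convex : Convex ℝ Q
  nonempty_interior : (interior Q).Nonempty

/-- `D` is homeomorphic to the closed unit disk, the unit circle corresponding to `C`. -/
def IsDisk (D C : Set X) : Prop :=
  ∃ f : ℂ → X, IsParam f (closedBall 0 1) D ∧ f '' sphere 0 1 = C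

namespace IsPlanarBody

variable {Q : Set ℂ}

theorem exists_homeomorph (hQ : IsPlanarBody Q) :
    ∃ e : ℂ ≃ₜ ℂ, e '' closedBall 0 1 = Q ∧ e '' sphere 0 1 = frontier Q := by
  have hball : (interior (closedBall (0 : ℂ) 1)).Nonempty :=
    ⟨0, by simp [interior_closedBall _ one_ne_zero]⟩
  obtain ⟨e, -, hcl, hfr⟩ := exists_homeomorph_image_eq (convex_closedBall (0 : ℂ) 1) hball
    (NormedSpace.isVonNBounded_of_isBounded _ isBounded_closedBall) hQ.convex hQ.nonempty_interior
    (NormedSpace.isVonNBounded_of_isBounded _ hQ.isCompact.isBounded)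
  rw [isClosed_closedBall.closure_eq, hQ.isCompact.isClosed.closure_eq] at hcl
  rw [frontier_closedBall _ one_ne_zero] at hfr
  exact ⟨e, hcl, hfr⟩

theorem isDisk (hQ : IsPlanarBody Q) {f : ℂ → X} {D : Set X} (hf : IsParam f Q D) :
    IsDisk D (f '' frontier Q) := by
  obtain ⟨e, hball, hsphere⟩ := hQ.exists_homeomorph
  exact ⟨f ∘ e, hf.comp (.of_homeomorph e hball), by rw [image_comp, hsphere]⟩

end IsPlanarBody

namespace IsDisk

variable [T2Space X] {D C : Set X}

theorem exists_extension_closedBall (hD : IsDisk D C) {g : ℂ → X} (hg : IsParam g (sphere 0 1) C) :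
    ∃ f, IsParam f (closedBall 0 1) D ∧ EqOn f g (sphere 0 1) := by
  obtain ⟨f, hf, rfl⟩ := hD
  have hf' := hf.restrict sphere_subset_closedBall
  obtain ⟨k, hk, hkf⟩ := hf'.exists_inverse (isCompact_sphere _ _)
  refine ⟨f ∘ radialExtension (k ∘ g), hf.comp (isParam_radialExtension (hk.comp hg)), ?_⟩
  intro x hx
  simp only [Function.comp, radialExtension_of_mem_sphere hx]
  exact hkf.2 (hg.bijOn.mapsTo hx)

theorem exists_extension (hD : IsDisk D C) {Q : Set ℂ} (hQ : IsPlanarBody Q) {g : ℂ → X}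
    (hg : IsParam g (frontier Q) C) : ∃ f, IsParam f Q D ∧ EqOn f g (frontier Q) := by
  obtain ⟨e, hball, hsphere⟩ := hQ.exists_homeomorph
  obtain ⟨f, hf, hfg⟩ :=
    hD.exists_extension_closedBall (hg.comp (.of_homeomorph e hsphere))
  have he : e.symm '' Q = closedBall 0 1 := by rw [e.image_symm, ← hball, e.preimage_image]
  refine ⟨f ∘ e.symm, hf.comp (.of_homeomorph e.symm he), ?_⟩
  rw [← hsphere]
  rintro _ ⟨x, hx, rfl⟩
  simp [hfg hx]

end IsDisk

end Disks

section Kites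

open Set

/-- The graph over `[-1, 1]` of the piecewise linear function vanishing at `±1` with value `c` at
`0`. -/
def roof (c : ℝ) : Set ℂ :=
  {z | |z.re| ≤ 1 ∧ z.im = c * (1 - |z.re|)}

/-- The region between `roof c` and `roof d`. -/
def kite (c d : ℝ) : Set ℂ :=
  {z | c * (1 - |z.re|) ≤ z.im ∧ z.im ≤ d * (1 - |z.re|)}

variable {c d : ℝ}

theorem isClosed_roof (c : ℝ) : IsClosed (roof c) :=
  IsClosed.and (isClosed_le (by fun_prop) (by fun_prop)) (isClosed_eq (by fun_prop) (by fun_prop))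

theorem isParam_re_roof (c : ℝ) : IsParam Complex.re (roof c) (Icc (-1) 1) := by
  refine ⟨Complex.continuous_re.continuousOn, fun z hz => abs_le.1 hz.1, ?_, ?_⟩
  · exact fun z hz w hw hzw => Complex.ext hzw (by rw [hz.2, hw.2, hzw])
  · exact fun x hx => ⟨⟨x, c * (1 - |x|)⟩, ⟨abs_le.2 hx, rfl⟩, rfl⟩

theorem roof_inter_roof (h : c ≠ d) : roof c ∩ roof d = {-1, 1} := by
  ext z
  simp only [roof, mem_inter_iff, mem_ofPred_eq, mem_insert_iff, mem_singleton_iff]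
  constructor
  · rintro ⟨⟨-, hc⟩, -, hd⟩
    have hz : |z.re| = 1 := by
      have := (mul_eq_zero.1 (by linarith : (c - d) * (1 - |z.re|) = 0)).resolve_left
        (sub_ne_zero.2 h)
      linarith
    have him : z.im = 0 := by simpa [hz] using hc
    rcases eq_or_eq_neg_of_abs_eq hz with hre | hre
    · exact Or.inr (Complex.ext hre him)
    · exact Or.inl (Complex.ext (by simpa using hre) (by simpa using him))
  · rintro (rfl | rfl) <;> simp

theorem isClosed_kite (c d : ℝ) : IsClosed (kite c d) :=
  IsClosed.and (isClosed_le (by fun_prop) (by fun_prop)) (isClosed_le (by fun_prop) (by fun_prop))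

theorem interior_kite (c d : ℝ) :
    interior (kite c d) = {z | c * (1 - |z.re|) < z.im ∧ z.im < d * (1 - |z.re|)} := by
  have hopen : IsOpen {z : ℂ | c * (1 - |z.re|) < z.im ∧ z.im < d * (1 - |z.re|)} :=
    IsOpen.and (isOpen_lt (by fun_prop) (by fun_prop)) (isOpen_lt (by fun_prop) (by fun_prop))
  refine Subset.antisymm (fun z hz => ?_)
    (interior_maximal (fun z hz => ⟨hz.1.le, hz.2.le⟩) hopen)
  have hvert : Continuous fun y : ℝ => (⟨z.re, y⟩ : ℂ) :=
    Complex.equivRealProdCLM.symm.continuous.comp (by fun_prop : Continuous fun y => (z.re, y))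
  have hpre : (fun y : ℝ => (⟨z.re, y⟩ : ℂ)) ⁻¹' kite c d =
    Icc (c * (1 - |z.re|)) (d * (1 - |z.re|)) := rfl
  have : z.im ∈ interior (Icc (c * (1 - |z.re|)) (d * (1 - |z.re|))) := by
    rw [← hpre]
    exact preimage_interior_subset_interior_preimage hvert hz
  rwa [interior_Icc] at this

theorem abs_re_le_one_of_mem_kite (hcd : c < d) {z : ℂ} (hz : z ∈ kite c d) : |z.re| ≤ 1 := by
  by_contra! h
  nlinarith [hz.1, hz.2]

theorem frontier_kite (hcd : c < d) : frontier (kite c d) = roof c ∪ roof d := by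
  rw [frontier, (isClosed_kite c d).closure_eq, interior_kite]
  ext z
  constructor
  · rintro ⟨hz, hnot⟩
    have hre := abs_re_le_one_of_mem_kite hcd hz
    rcases hz.1.eq_or_lt with heq | hlt
    · exact Or.inl ⟨hre, heq.symm⟩
    · exact Or.inr ⟨hre, hz.2.antisymm (not_lt.1 fun h => hnot ⟨hlt, h⟩)⟩
  · rintro (⟨hre, him⟩ | ⟨hre, him⟩)
    · exact ⟨⟨him.ge, by nlinarith⟩, fun h => h.1.ne' him⟩
    · exact ⟨⟨by nlinarith, him.le⟩, fun h => h.2.ne him⟩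

theorem convex_kite (hc : c ≤ 0) (hd : 0 ≤ d) : Convex ℝ (kite c d) := by
  rintro z ⟨hz₁, hz₂⟩ w ⟨hw₁, hw₂⟩ a b ha hb hab
  have habs : |a * z.re + b * w.re| ≤ a * |z.re| + b * |w.re| := by
    simpa only [abs_mul, abs_of_nonneg ha, abs_of_nonneg hb] using
      abs_add_le (a * z.re) (b * w.re)
  have hb' : b = 1 - a := by linarith
  subst hb'
  simp only [kite, mem_ofPred_eq, Complex.add_re, Complex.add_im, Complex.real_smul,
    Complex.re_ofReal_mul, Complex.im_ofReal_mul]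
  constructor <;> nlinarith

theorem isPlanarBody_kite (hc : c ≤ 0) (hd : 0 ≤ d) (hcd : c < d) : IsPlanarBody (kite c d) where
  isCompact := by
    have hbox : IsCompact (Icc (-1) 1 ×ℂ Icc c d) := isCompact_Icc.reProdIm isCompact_Icc
    refine hbox.of_isClosed_subset (isClosed_kite c d) fun z hz => ?_
    have hre := abs_re_le_one_of_mem_kite hcd hz
    have := abs_nonneg z.re
    exact ⟨abs_le.1 hre, by nlinarith [hz.1], by nlinarith [hz.2]⟩
  convex := convex_kite hc hd
  nonempty_interior :=
    ⟨⟨0, (c + d) / 2⟩, by rw [interior_kite]; constructor <;> norm_num <;> linarith⟩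

theorem kite_union_kite {e : ℝ} (hcd : c < d) (hde : d < e) : kite c d ∪ kite d e = kite c e := by
  ext z
  constructor
  · rintro (hz | hz)
    · exact ⟨hz.1, by nlinarith [hz.2, abs_re_le_one_of_mem_kite hcd hz]⟩
    · exact ⟨by nlinarith [hz.1, abs_re_le_one_of_mem_kite hde hz], hz.2⟩
  · intro hz
    rcases le_total z.im (d * (1 - |z.re|)) with h | h
    · exact Or.inl ⟨hz.1, h⟩
    · exact Or.inr ⟨h, hz.2⟩

theorem kite_inter_kite {e : ℝ} (hcd : c < d) (hde : d < e) :
    kite c d ∩ kite d e = roof d := by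
  ext z
  constructor
  · rintro ⟨hz, hz'⟩
    exact ⟨abs_re_le_one_of_mem_kite hcd hz, hz.2.antisymm hz'.1⟩
  · rintro ⟨hre, him⟩
    exact ⟨⟨by nlinarith, him.le⟩, him.ge, by nlinarith⟩

end Kites

section Gluing

open Set Metric

variable {X : Type*} [TopologicalSpace X] [T2Space X]

theorem IsDisk.exists_param_kite {D A B : Set X} (hD : IsDisk D (A ∪ B)) {c d : ℝ} (hc : c ≤ 0)
    (hd : 0 ≤ d) (hcd : c < d) {α β : ℝ → X} (hα : IsParam α (Icc (-1) 1) A)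
    (hβ : IsParam β (Icc (-1) 1) B) (hleft : α (-1) = β (-1)) (hright : α 1 = β 1)
    (hAB : A ∩ B ⊆ {α (-1), α 1}) :
    ∃ f, IsParam f (kite c d) D ∧ EqOn f (α ∘ Complex.re) (roof c) ∧
      EqOn f (β ∘ Complex.re) (roof d) := by
  have hinter := roof_inter_roof hcd.ne
  obtain ⟨g, hg, hgα, hgβ⟩ := (hα.comp (isParam_re_roof c)).exists_glue
    (hβ.comp (isParam_re_roof d)) (isClosed_roof c) (isClosed_roof d)
    (by rw [hinter]; rintro z (rfl | rfl) <;> simpa)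
    (by rw [hinter, image_pair]; simpa using hAB)
  rw [← frontier_kite hcd] at hg
  obtain ⟨f, hf, hfg⟩ := hD.exists_extension (isPlanarBody_kite hc hd hcd) hg
  rw [frontier_kite hcd] at hfg
  exact ⟨f, hf, (hfg.mono subset_union_left).trans hgα, (hfg.mono subset_union_right).trans hgβ⟩

theorem IsDisk.union_of_inter_subset_arc {D₁ D₂ A B₁ B₂ : Set X} {p q : X}
    (h₁ : IsDisk D₁ (A ∪ B₁)) (h₂ : IsDisk D₂ (A ∪ B₂)) (hA : IsArc A p q) (hB₁ : IsArc B₁ p q)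
    (hB₂ : IsArc B₂ p q) (hAB₁ : A ∩ B₁ ⊆ {p, q}) (hAB₂ : A ∩ B₂ ⊆ {p, q}) (hD : D₁ ∩ D₂ ⊆ A) :
    IsDisk (D₁ ∪ D₂) (B₁ ∪ B₂) := by
  have hlt : (-1 : ℝ) < 1 := by norm_num
  obtain ⟨α, hα, rfl, rfl⟩ := hA.exists_param hlt
  obtain ⟨β₁, hβ₁, hl₁, hr₁⟩ := hB₁.exists_param hlt
  obtain ⟨β₂, hβ₂, hl₂, hr₂⟩ := hB₂.exists_param hlt
  obtain ⟨f₁, hf₁, hfα₁, hfβ₁⟩ := h₁.exists_param_kite le_rfl zero_le_one zero_lt_one hα hβ₁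
    hl₁.symm hr₁.symm hAB₁
  rw [union_comm] at h₂
  obtain ⟨f₂, hf₂, hfβ₂, hfα₂⟩ := h₂.exists_param_kite (by simp) le_rfl neg_one_lt_zero hβ₂ hα
    hl₂ hr₂ (by rwa [hl₂, hr₂, inter_comm])
  have himage₁ : f₁ '' roof 0 = A := by
    rw [hfα₁.image_eq, (hα.comp (isParam_re_roof 0)).bijOn.image_eq]
  have hinter : kite 0 1 ∩ kite (-1) 0 = roof 0 := by
    rw [inter_comm, kite_inter_kite neg_one_lt_zero zero_lt_one]
  obtain ⟨f, hf, hff₁, hff₂⟩ := hf₁.exists_glue hf₂ (isClosed_kite 0 1) (isClosed_kite (-1) 0)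
    (by rw [hinter]; exact hfα₁.trans hfα₂.symm) (by rwa [hinter, himage₁])
  rw [union_comm (kite 0 1), kite_union_kite neg_one_lt_zero zero_lt_one] at hf
  have := (isPlanarBody_kite (by simp) zero_le_one hlt).isDisk hf
  have htop : roof 1 ⊆ kite 0 1 :=
    subset_union_right.trans (frontier_kite zero_lt_one ▸ (isClosed_kite 0 1).frontier_subset)
  have hbottom : roof (-1) ⊆ kite (-1) 0 := subset_union_left.trans
    (frontier_kite neg_one_lt_zero ▸ (isClosed_kite (-1) 0).frontier_subset)
  rwa [frontier_kite hlt, image_union, ((hff₁.mono htop).trans hfβ₁).image_eq,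
    ((hff₂.mono hbottom).trans hfβ₂).image_eq, (hβ₁.comp (isParam_re_roof 1)).bijOn.image_eq,
    (hβ₂.comp (isParam_re_roof (-1))).bijOn.image_eq, union_comm B₂] at this

/-- The orthogonal projection of space onto its horizontal coordinate plane, identified with `ℂ`. -/
noncomputable def horizontalProj (x : EuclideanSpace ℝ (Fin 3)) : ℂ := ⟨x 0, x 1⟩

theorem continuous_horizontalProj : Continuous horizontalProj :=
  Complex.equivRealProdCLM.symm.continuous.comp
    (by fun_prop : Continuous fun x : EuclideanSpace ℝ (Fin 3) => (x 0, x 1))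

theorem mem_sphere_iff_norm_horizontalProj {x : EuclideanSpace ℝ (Fin 3)} :
    x ∈ sphere (0 : EuclideanSpace ℝ (Fin 3)) 1 ↔ ‖horizontalProj x‖ ^ 2 + x 2 ^ 2 = 1 := by
  rw [mem_sphere_zero_iff_norm, ← sq_eq_sq₀ (norm_nonneg x) zero_le_one, one_pow,
    EuclideanSpace.real_norm_sq_eq, Fin.sum_univ_three, Complex.sq_norm, Complex.normSq_apply,
    horizontalProj]
  simp only [sq]

/-- The closed upper (`ε = 1`) or lower (`ε = -1`) unit hemisphere. -/
def hemisphere (ε : ℝ) : Set (EuclideanSpace ℝ (Fin 3)) :=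
  {x | x ∈ sphere 0 1 ∧ 0 ≤ ε * x 2}

theorem isClosed_hemisphere (ε : ℝ) : IsClosed (hemisphere ε) :=
  isClosed_sphere.and (isClosed_le (by fun_prop) (by fun_prop))

theorem hemisphere_union_hemisphere : hemisphere 1 ∪ hemisphere (-1) = sphere 0 1 := by
  ext x
  constructor
  · rintro (hx | hx) <;> exact hx.1
  · intro hx
    rcases le_total 0 (x 2) with h | h
    · exact Or.inl ⟨hx, by linarith⟩
    · exact Or.inr ⟨hx, by linarith⟩

theorem isParam_horizontalProj_hemisphere {ε : ℝ} (hε : ε ^ 2 = 1) :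
    IsParam horizontalProj (hemisphere ε) (closedBall 0 1) := by
  refine ⟨continuous_horizontalProj.continuousOn, fun x hx => ?_, fun x hx y hy hxy => ?_,
    fun z hz => ?_⟩
  · have := mem_sphere_iff_norm_horizontalProj.1 hx.1
    rw [mem_closedBall_zero_iff, ← sq_le_one_iff₀ (norm_nonneg _)]
    nlinarith [sq_nonneg (x 2)]
  · have hx' := mem_sphere_iff_norm_horizontalProj.1 hx.1
    have hy' := mem_sphere_iff_norm_horizontalProj.1 hy.1
    have h0 : x 0 = y 0 := congrArg Complex.re hxy
    have h1 : x 1 = y 1 := congrArg Complex.im hxy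
    have h2 : ε * x 2 = ε * y 2 := by
      rw [← sq_eq_sq₀ hx.2 hy.2, mul_pow, mul_pow, hε]
      rw [hxy] at hx'
      linarith
    have hε0 : ε ≠ 0 := by rintro rfl; norm_num at hε
    ext i
    fin_cases i
    · exact h0
    · exact h1
    · exact mul_left_cancel₀ hε0 h2
  · have hz' : ‖z‖ ^ 2 ≤ 1 := by
      rwa [sq_le_one_iff₀ (norm_nonneg _), ← mem_closedBall_zero_iff]
    have hsqrt : √(1 - ‖z‖ ^ 2) ^ 2 = 1 - ‖z‖ ^ 2 := Real.sq_sqrt (by linarith)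
    refine ⟨!₂[z.re, z.im, ε * √(1 - ‖z‖ ^ 2)], ⟨mem_sphere_iff_norm_horizontalProj.2 ?_, ?_⟩, rfl⟩
    · simp [horizontalProj, mul_pow, hε, hsqrt]
    · simp [← mul_assoc, ← sq, hε, Real.sqrt_nonneg]

theorem horizontalProj_image_equator :
    horizontalProj '' (hemisphere 1 ∩ hemisphere (-1)) = sphere 0 1 := by
  ext z
  constructor
  · rintro ⟨x, ⟨hx, hx'⟩, rfl⟩
    have hx2 : x 2 = 0 := by linarith [hx.2, hx'.2]
    have := mem_sphere_iff_norm_horizontalProj.1 hx.1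
    rw [mem_sphere_zero_iff_norm, ← sq_eq_sq₀ (norm_nonneg _) zero_le_one]
    simpa [hx2] using this
  · intro hz
    obtain ⟨x, hx, rfl⟩ := (isParam_horizontalProj_hemisphere (one_pow 2)).bijOn.surjOn
      (sphere_subset_closedBall hz)
    have := mem_sphere_iff_norm_horizontalProj.1 hx.1
    have hx2 : x 2 = 0 := by simpa [mem_sphere_zero_iff_norm.1 hz] using this
    exact ⟨x, ⟨hx, hx.1, by simp [hx2]⟩, rfl⟩

theorem IsDisk.nonempty_homeomorph_sphere {D₁ D₂ C : Set X} (h₁ : IsDisk D₁ C) (h₂ : IsDisk D₂ C)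
    (hD : D₁ ∩ D₂ ⊆ C) :
    Nonempty (↥(D₁ ∪ D₂) ≃ₜ sphere (0 : EuclideanSpace ℝ (Fin 3)) 1) := by
  obtain ⟨f₁, hf₁, rfl⟩ := h₁
  obtain ⟨f₂, hf₂, heq⟩ :=
    h₂.exists_extension_closedBall (hf₁.restrict sphere_subset_closedBall)
  have hupper := isParam_horizontalProj_hemisphere (ε := 1) (by norm_num)
  have hlower := isParam_horizontalProj_hemisphere (ε := -1) (by norm_num)
  obtain ⟨f, hf, -⟩ := (hf₁.comp hupper).exists_glue (hf₂.comp hlower) (isClosed_hemisphere _)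
    (isClosed_hemisphere _)
    (fun x hx => (heq (horizontalProj_image_equator.subset (mem_image_of_mem _ hx))).symm)
    (by rwa [image_comp, horizontalProj_image_equator])
  rw [hemisphere_union_hemisphere] at hf
  exact (hf.nonempty_homeomorph (isCompact_sphere _ _)).map Homeomorph.symm

end Gluing

section Triangles

open Set

variable {E : Type*} [AddCommGroup E] [Module ℝ E]

theorem linearIndependent_sub_of_affineIndependent [DecidableEq E] {a b c : E} (hab : a ≠ b)
    (hbc : b ≠ c) (hac : a ≠ c)
    (h : AffineIndependent ℝ ((↑) : ({a, b, c} : Finset E) → E)) :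
    LinearIndependent ℝ ![b - a, c - a] := by
  let i : Fin 3 ↪ ({a, b, c} : Finset E) :=
    ⟨![⟨a, by simp⟩, ⟨b, by simp⟩, ⟨c, by simp⟩], by
      intro i j; fin_cases i <;> fin_cases j <;> simp [hab, hbc, hac, hab.symm, hbc.symm, hac.symm]⟩
  have hi : ((↑) : ({a, b, c} : Finset E) → E) ∘ i = ![a, b, c] := by
    ext j
    fin_cases j <;> rfl
  have h3 := affineIndependent_iff.1 (hi ▸ h.comp_embedding i) Finset.univ
  refine LinearIndependent.pair_iff.2 fun x y hxy => ?_
  have := h3 ![-(x + y), x, y] (by simp [Fin.sum_univ_three])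
    (by simp only [← hxy, Fin.sum_univ_three, Matrix.cons_val]; module)
  exact ⟨this 1 (Finset.mem_univ _), this 2 (Finset.mem_univ _)⟩

theorem roof_zero : roof 0 = segment ℝ (-1) 1 := by
  rw [segment_eq_image]
  ext z
  constructor
  · rintro ⟨hre, him⟩
    obtain ⟨h₁, h₂⟩ := abs_le.1 hre
    refine ⟨(1 + z.re) / 2, ⟨by linarith, by linarith⟩, Complex.ext ?_ ?_⟩
    · simp; ring
    · simpa using him.symm
  · rintro ⟨t, ⟨h₀, h₁⟩, rfl⟩
    refine ⟨abs_le.2 ⟨?_, ?_⟩, ?_⟩ <;> simp <;> linarith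

theorem roof_one : roof 1 = segment ℝ 1 Complex.I ∪ segment ℝ Complex.I (-1) := by
  rw [segment_eq_image, segment_eq_image]
  ext z
  constructor
  · rintro ⟨hre, him⟩
    rcases le_total 0 z.re with h | h
    · rw [abs_of_nonneg h] at hre him
      refine Or.inl ⟨z.im, ⟨by linarith, by linarith⟩, Complex.ext ?_ ?_⟩ <;> simp [him]
    · rw [abs_of_nonpos h] at hre him
      refine Or.inr ⟨-z.re, ⟨by linarith, by linarith⟩, Complex.ext ?_ ?_⟩ <;> simp [him]
  · rintro (⟨t, ⟨h₀, h₁⟩, rfl⟩ | ⟨t, ⟨h₀, h₁⟩, rfl⟩)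
    · have : |1 - t| = 1 - t := abs_of_nonneg (by linarith)
      refine ⟨?_, ?_⟩ <;> simp [this, h₀]
    · refine ⟨?_, ?_⟩ <;> simp [abs_of_nonneg h₀, h₁]

theorem kite_zero_one : kite 0 1 = convexHull ℝ {-1, 1, Complex.I} := by
  refine Subset.antisymm (fun z hz => ?_) (convexHull_min ?_ (convex_kite le_rfl zero_le_one))
  · have hre := abs_le.1 (show |z.re| ≤ 1 - z.im by linarith [hz.2])
    have him : 0 ≤ z.im := by simpa using hz.1
    have hweights : (1 - z.re - z.im) / 2 + (1 + z.re - z.im) / 2 + z.im = 1 := by ring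
    have := (convex_convexHull ℝ ({-1, 1, Complex.I} : Set ℂ)).sum_mem (t := Finset.univ)
      (w := ![(1 - z.re - z.im) / 2, (1 + z.re - z.im) / 2, z.im]) (z := ![-1, 1, Complex.I])
      ?_ (by simpa [Fin.sum_univ_three] using hweights) ?_
    · convert this
      apply Complex.ext <;> simp [Fin.sum_univ_three]; ring
    · intro i _
      fin_cases i <;> simp <;> linarith
    · intro i _
      exact subset_convexHull ℝ _ (by fin_cases i <;> simp)
  · rintro z (rfl | rfl | rfl) <;> simp [kite]

variable [TopologicalSpace E] [IsTopologicalAddGroup E] [ContinuousSMul ℝ E]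

theorem isDisk_convexHull_triple {a b c : E} (h : LinearIndependent ℝ ![b - a, c - a]) :
    IsDisk (convexHull ℝ {a, b, c}) (segment ℝ a b ∪ (segment ℝ b c ∪ segment ℝ c a)) := by
  let f : ℂ →ᵃ[ℝ] E := (Complex.reLm.smulRight ((1 / 2 : ℝ) • (b - a)) +
    Complex.imLm.smulRight ((c - a) - (1 / 2 : ℝ) • (b - a))).toAffineMap +
    AffineMap.const ℝ ℂ (a + (1 / 2 : ℝ) • (b - a))
  have hf : ⇑f = fun z => a + ((1 + z.re - z.im) / 2) • (b - a) + z.im • (c - a) := by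
    ext z
    simp only [one_div, AffineMap.coe_add, LinearMap.coe_toAffineMap, AffineMap.coe_const,
      Pi.add_apply, LinearMap.add_apply, LinearMap.coe_smulRight, Complex.reLm_coe,
      Complex.imLm_coe, Function.const_apply, f]
    module
  have hcont : Continuous f := by rw [hf]; fun_prop
  have hinj : Function.Injective f := by
    intro z w hzw
    simp only [hf] at hzw
    obtain ⟨hre, him⟩ := LinearIndependent.pair_iff.1 h
      ((1 + z.re - z.im) / 2 - (1 + w.re - w.im) / 2) (z.im - w.im) (by
        rw [sub_smul, sub_smul, ← sub_eq_zero.2 hzw]; abel)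
    exact Complex.ext (by linarith) (by linarith)
  have hvertices : f (-1) = a ∧ f 1 = b ∧ f Complex.I = c := by simp [hf]
  obtain ⟨hfa, hfb, hfc⟩ := hvertices
  have := (isPlanarBody_kite le_rfl zero_le_one zero_lt_one).isDisk
    ⟨hcont.continuousOn, hinj.injOn.bijOn_image⟩
  rwa [frontier_kite zero_lt_one, roof_zero, roof_one, kite_zero_one, AffineMap.image_convexHull,
    image_union, image_union, image_segment, image_segment, image_segment, image_insert_eq,
    image_pair, hfa, hfb, hfc] at this

end Triangles

section Realizations

open Set

variable {E : Type*} [AddCommGroup E] [Module ℝ E]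

/-- The union of the convex hulls of the members of `S`. -/
def realization (S : Finset (Finset E)) : Set E :=
  ⋃ t ∈ S, convexHull ℝ (t : Set E)

/-- The union of the segments joining consecutive entries of a list. -/
def polygonalPath : List E → Set E
  | [] => ∅
  | [_] => ∅
  | x :: y :: l => segment ℝ x y ∪ polygonalPath (y :: l)

/-- The closed polygon through `b`, the entries of `N`, and `a`, as a point set. -/
def polygon (b : E) (N : List E) (a : E) : Set E :=
  polygonalPath (b :: (N ++ [a])) ∪ segment ℝ a b

theorem polygonalPath_append (l₁ : List E) (c : E) (l₂ : List E) :
    polygonalPath (l₁ ++ c :: l₂) = polygonalPath (l₁ ++ [c]) ∪ polygonalPath (c :: l₂) := by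
  induction l₁ with
  | nil => simp [polygonalPath]
  | cons x l₁ ih =>
    cases l₁ with
    | nil => simp [polygonalPath]
    | cons y l₁ =>
      simp only [List.cons_append, polygonalPath] at ih ⊢
      rw [ih, union_assoc]

theorem polygonalPath_reverse (l : List E) : polygonalPath l.reverse = polygonalPath l := by
  induction l with
  | nil => rfl
  | cons x l ih =>
    cases l with
    | nil => rfl
    | cons y l =>
      simp only [List.reverse_cons, List.append_assoc, List.cons_append, List.nil_append] at ih ⊢
      rw [polygonalPath_append, ih]
      rw [polygonalPath, polygonalPath, polygonalPath, union_empty, segment_symm, union_comm]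

theorem polygonalPath_concat (x : E) (N : List E) (a b : E) :
    polygonalPath (x :: (N ++ [a] ++ [b])) =
      polygonalPath (x :: (N ++ [a])) ∪ segment ℝ a b := by
  have happend := polygonalPath_append (x :: N) a [b]
  simp only [List.cons_append, polygonalPath, union_empty] at happend
  rw [List.append_assoc, List.singleton_append, happend]

theorem polygon_reverse (b : E) (N : List E) (a : E) : polygon a N.reverse b = polygon b N a := by
  have hlist : a :: (N.reverse ++ [b]) = (b :: (N ++ [a])).reverse := by simp
  rw [polygon, polygon, hlist, polygonalPath_reverse, segment_symm]

theorem polygon_rotate (b c : E) (N : List E) (a : E) :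
    polygon c (N ++ [a]) b = polygon b (c :: N) a := by
  rw [polygon, polygonalPath_concat, polygon, List.cons_append, polygonalPath, union_assoc,
    union_comm, union_comm (segment ℝ a b), union_right_comm]

variable {l N : List E} {a b c p x y z : E}

theorem mem_realization {S : Finset (Finset E)} :
    z ∈ realization S ↔ ∃ t ∈ S, z ∈ convexHull ℝ (t : Set E) := by
  simp only [realization, mem_iUnion, exists_prop]

theorem realization_singleton (t : Finset E) : realization {t} = convexHull ℝ (t : Set E) := by
  simp [realization]

variable [DecidableEq E] {S S₁ S₂ T : Finset (Finset E)} {s s' t t' : Finset E} {N₁ N₂ : List E}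

theorem realization_union_sdiff (h : S₁ ⊆ S) :
    realization S₁ ∪ realization (S \ S₁) = realization S := by
  rw [realization, realization, realization, ← Finset.set_biUnion_union,
    Finset.union_sdiff_of_subset h]

theorem IsEdgePath.exists_edge_of_mem_polygonalPath (hl : IsEdgePath T l)
    (hz : z ∈ polygonalPath l) :
    ∃ u ∈ l, ∃ v ∈ l, ({u, v} : Finset E) ∈ edgesOf T ∧ z ∈ segment ℝ u v := by
  induction l with
  | nil => exact hz.elim
  | cons x l ih =>
    cases l with
    | nil => exact hz.elim
    | cons y l =>
      obtain ⟨hxy, hl⟩ := List.isChain_cons_cons.1 hl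
      rcases hz with hz | hz
      · exact ⟨x, by simp, y, by simp, hxy, hz⟩
      · obtain ⟨u, hu, v, hv, h⟩ := ih hl hz
        exact ⟨u, List.mem_cons_of_mem _ hu, v, List.mem_cons_of_mem _ hv, h⟩

/-- The members of `T` are the vertex sets of the facets of a geometric simplicial complex. -/
structure IsGeometric (T : Finset (Finset E)) : Prop where
  affineIndependent : ∀ t ∈ T, AffineIndependent ℝ ((↑) : t → E)
  convexHull_inter_subset : ∀ s s' : Finset E, (∃ t ∈ T, s ⊆ t) → (∃ t ∈ T, s' ⊆ t) →
    convexHull ℝ (s : Set E) ∩ convexHull ℝ (s' : Set E) ⊆ convexHull ℝ ↑(s ∩ s')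

namespace IsGeometric

theorem inter_subset_segment (hT : IsGeometric T) (hs : ∃ t ∈ T, s ⊆ t) (hs' : ∃ t ∈ T, s' ⊆ t)
    (h : s ∩ s' ⊆ {x, y}) :
    convexHull ℝ (s : Set E) ∩ convexHull ℝ (s' : Set E) ⊆ segment ℝ x y := by
  refine (hT.convexHull_inter_subset s s' hs hs').trans ?_
  rw [← convexHull_pair, ← Finset.coe_pair]
  exact convexHull_mono (Finset.coe_subset.2 h)

theorem segment_inter_polygonalPath_subset (hT : IsGeometric T) (hl : IsEdgePath T l)
    (hxy : {x, y} ∈ edgesOf T) (hy : y ∉ l) : segment ℝ x y ∩ polygonalPath l ⊆ {x} := by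
  rintro z ⟨hz, hzl⟩
  obtain ⟨u, hu, v, hv, huv, hzuv⟩ := hl.exists_edge_of_mem_polygonalPath hzl
  rw [← convexHull_pair, ← Finset.coe_pair] at hz hzuv
  rw [← segment_same ℝ x]
  refine hT.inter_subset_segment (mem_edgesOf.1 hxy).2 (mem_edgesOf.1 huv).2 ?_ ⟨hz, hzuv⟩
  intro w hw
  simp only [Finset.mem_inter, Finset.mem_insert, Finset.mem_singleton] at hw ⊢
  grind

theorem segment_inter_segment_subset (hT : IsGeometric T) (hab : {a, b} ∈ edgesOf T)
    (hbc : {b, c} ∈ edgesOf T) (hac : a ≠ c) : segment ℝ a b ∩ segment ℝ b c ⊆ {b} := by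
  have hne := ne_of_pair_mem_edgesOf hab
  have h := hT.segment_inter_polygonalPath_subset (List.isChain_pair.2 hbc)
    (by rwa [Finset.pair_comm] : {b, a} ∈ edgesOf T) (by simp [hne, hac])
  rwa [polygonalPath, polygonalPath, union_empty, segment_symm] at h

theorem closing_edge_inter_polygonalPath_subset (hT : IsGeometric T) (hS : S ⊆ T)
    (h : BoundsPolygon S b N a) :
    segment ℝ a b ∩ polygonalPath (b :: (N ++ [a])) ⊆ {b, a} := by
  obtain ⟨x, N, rfl⟩ := List.exists_cons_of_ne_nil h.ne_nil
  have hl := List.nodup_cons.1 h.nodup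
  have hab := h.pair_mem_edgesOf hS
  obtain ⟨hbx, hpath⟩ := List.isChain_cons_cons.1 (h.isEdgePath hS)
  rw [List.cons_append, polygonalPath, inter_union_distrib_left]
  refine union_subset ?_ ?_
  · exact (hT.segment_inter_segment_subset hab hbx (by grind)).trans (by simp)
  · exact (hT.segment_inter_polygonalPath_subset hpath hab hl.1).trans (by simp)

variable [TopologicalSpace E] [IsTopologicalAddGroup E] [ContinuousSMul ℝ E]

theorem isArc_polygonalPath (hT : IsGeometric T) (hl : IsEdgePath T (x :: (N ++ [a])))
    (hnodup : (x :: (N ++ [a])).Nodup) : IsArc (polygonalPath (x :: (N ++ [a]))) x a := by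
  induction N generalizing x with
  | nil =>
    simpa [polygonalPath] using isArc_segment (ne_of_pair_mem_edgesOf (List.isChain_pair.1 hl))
  | cons y N ih =>
    obtain ⟨hxy, hl⟩ := List.isChain_cons_cons.1 hl
    obtain ⟨hx, hnodup⟩ := List.nodup_cons.1 hnodup
    refine (isArc_segment (ne_of_pair_mem_edgesOf hxy)).trans (ih hl hnodup) ?_
    rw [segment_symm]
    exact hT.segment_inter_polygonalPath_subset hl (by rwa [Finset.pair_comm]) hx

theorem isDisk_triangle (hT : IsGeometric T) (hab : a ≠ b) (hbc : b ≠ c) (hac : a ≠ c)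
    (ht : {a, b, c} ∈ T) : IsDisk (realization {{a, b, c}}) (polygon b [c] a) := by
  have h := isDisk_convexHull_triple
    (linearIndependent_sub_of_affineIndependent hab hbc hac (hT.affineIndependent _ ht))
  rw [realization_singleton, Finset.coe_insert, Finset.coe_pair]
  simpa only [polygon, List.cons_append, List.nil_append, polygonalPath, union_empty,
    union_comm (segment ℝ a b)] using h

end IsGeometric

theorem IsGeometric.triangle_inter_subset (hG : IsGeometric T) (hT : IsSurface T)
    (ht : {a, b, c} ∈ T) :
    realization {{a, b, c}} ∩ realization (T \ {{a, b, c}}) ⊆ polygon b [c] a := by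
  rw [realization_singleton]
  rintro z ⟨hz, hz'⟩
  obtain ⟨t, ht', hzt⟩ := mem_realization.1 hz'
  obtain ⟨ht', hne⟩ := Finset.mem_sdiff.1 ht'
  have hnot : ¬ {a, b, c} ⊆ t := fun h => hne <| Finset.mem_singleton.2
    (Finset.eq_of_subset_of_card_le h
      (by rw [hT.card_eq_three t ht', hT.card_eq_three _ ht])).symm
  have hinter (x y : E) (hxy : {a, b, c} ∩ t ⊆ {x, y}) : z ∈ segment ℝ x y :=
    hG.inter_subset_segment ⟨_, ht, subset_rfl⟩ ⟨t, ht', subset_rfl⟩ hxy ⟨hz, hzt⟩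
  have hmiss : a ∉ t ∨ b ∉ t ∨ c ∉ t := by grind
  rcases hmiss with ha | hb | hc
  · exact Or.inl (Or.inl (hinter b c (by grind)))
  · exact Or.inl (Or.inr (Or.inl (hinter c a (by grind))))
  · exact Or.inr (hinter a b (by grind))

namespace BoundsPolygon

theorem realization_inter_subset_chord (h : BoundsPolygon S b (N₁ ++ c :: N₂) a)
    (h₁ : BoundsPolygon S₁ b N₁ c) (h₂ : BoundsPolygon (S \ S₁) b (c :: N₂) a) (hT : IsSurface T)
    (hG : IsGeometric T) (hS : S ⊆ T) (hS₁ : S₁ ⊆ S) :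
    realization S₁ ∩ realization (S \ S₁) ⊆ segment ℝ c b := by
  rintro z ⟨hz₁, hz₂⟩
  obtain ⟨t₁, ht₁, hz₁⟩ := mem_realization.1 hz₁
  obtain ⟨t₂, ht₂, hz₂⟩ := mem_realization.1 hz₂
  have ht₁T := hS (hS₁ ht₁)
  have ht₂T := hS (Finset.mem_sdiff.1 ht₂).1
  refine hG.inter_subset_segment ⟨t₁, ht₁T, subset_rfl⟩ ⟨t₂, ht₂T, subset_rfl⟩ (fun x hx => ?_)
    ⟨hz₁, hz₂⟩
  obtain ⟨hx₁, hx₂⟩ := Finset.mem_inter.1 hx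
  have hmem₁ := h₁.mem_of_mem_sdiff hT (hS₁.trans hS) ht₁ hx₁ (by grind) hx₂
  have hmem₂ := h₂.mem_of_mem_sdiff hT (Finset.sdiff_subset.trans hS) ht₂ hx₂ (by grind) hx₁
  have hl := h.nodup
  simp only [List.nodup_cons, List.nodup_append, List.mem_append, List.mem_cons,
    List.append_assoc, List.cons_append, Finset.mem_insert, Finset.mem_singleton] at *
  grind

theorem realization_triangle_inter_subset (h : BoundsPolygon S b N a) (hT : IsSurface T)
    (hG : IsGeometric T) (hS : S ⊆ T) (ht : {a, b, c} ∈ S) :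
    realization {{a, b, c}} ∩ realization (S \ {{a, b, c}}) ⊆ polygonalPath [b, c, a] := by
  rw [realization_singleton]
  rintro z ⟨hz, hz'⟩
  obtain ⟨t, htS, hzt⟩ := mem_realization.1 hz'
  obtain ⟨htS, hne⟩ := Finset.mem_sdiff.1 htS
  have hab : ¬ {a, b} ⊆ t := fun hab => hne <| Finset.mem_singleton.2 <|
    hT.eq_of_boundary_ne_zero hS (Finset.card_pair h.ne) h.boundary_closing_edge htS hab ht
      (by grind)
  have hinter (x y : E) (hxy : {a, b, c} ∩ t ⊆ {x, y}) : z ∈ segment ℝ x y :=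
    hG.inter_subset_segment ⟨_, hS ht, subset_rfl⟩ ⟨t, hS htS, subset_rfl⟩ hxy ⟨hz, hzt⟩
  by_cases ha : a ∈ t
  · exact Or.inr (Or.inl (hinter c a (by grind)))
  · exact Or.inl (hinter b c (by grind))

variable [TopologicalSpace E] [IsTopologicalAddGroup E] [ContinuousSMul ℝ E]

theorem isArc (h : BoundsPolygon S b N a) (hG : IsGeometric T) (hS : S ⊆ T) :
    IsArc (polygonalPath (b :: (N ++ [a]))) b a :=
  hG.isArc_polygonalPath (h.isEdgePath hS) h.nodup

variable [T2Space E]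

theorem isDisk_of_chord (h : BoundsPolygon S b (N₁ ++ c :: N₂) a) (h₁ : BoundsPolygon S₁ b N₁ c)
    (h₂ : BoundsPolygon (S \ S₁) b (c :: N₂) a) (hT : IsSurface T) (hG : IsGeometric T)
    (hS : S ⊆ T) (hS₁ : S₁ ⊆ S) (hD₁ : IsDisk (realization S₁) (polygon b N₁ c))
    (hD₂ : IsDisk (realization (S \ S₁)) (polygon b (c :: N₂) a)) :
    IsDisk (realization S) (polygon b (N₁ ++ c :: N₂) a) := by
  have hS₁T := hS₁.trans hS
  have hS₂T : S \ S₁ ⊆ T := Finset.sdiff_subset.trans hS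
  rw [polygon, union_comm] at hD₁
  rw [← polygon_rotate, polygon, union_comm, segment_symm] at hD₂
  have hunion := hD₁.union_of_inter_subset_arc hD₂ (isArc_segment h.ne_chord.symm)
    (h₁.isArc hG hS₁T).symm (h₂.rotate.isArc hG hS₂T)
    ((hG.closing_edge_inter_polygonalPath_subset hS₁T h₁).trans (by rw [pair_comm]))
    (segment_symm ℝ b c ▸ hG.closing_edge_inter_polygonalPath_subset hS₂T h₂.rotate)
    (h.realization_inter_subset_chord h₁ h₂ hT hG hS hS₁)
  have happend := polygonalPath_append (b :: N₁) c (N₂ ++ [a])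
  rw [realization_union_sdiff hS₁, polygonalPath_concat, ← union_assoc] at hunion
  rwa [polygon, List.append_assoc, List.cons_append, ← List.cons_append, happend]

theorem isDisk_of_sdiff_triangle (h : BoundsPolygon S b N a) (hT : IsSurface T)
    (hG : IsGeometric T) (hS : S ⊆ T) (ht : {a, b, c} ∈ S) (hc : c ∉ b :: (N ++ [a]))
    (hD : IsDisk (realization (S \ {{a, b, c}})) (polygon c (b :: N) a)) :
    IsDisk (realization S) (polygon b N a) := by
  have hbc : b ≠ c := by grind
  have hac : a ≠ c := by grind
  have hsub : {{a, b, c}} ⊆ S := Finset.singleton_subset_iff.2 ht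
  have hbcT : {b, c} ∈ edgesOf T := mem_edgesOf.2 ⟨Finset.card_pair hbc, _, hS ht, by grind⟩
  have hacT : {a, c} ∈ edgesOf T := mem_edgesOf.2 ⟨Finset.card_pair hac, _, hS ht, by grind⟩
  have htri := boundsPolygon_triangle h.ne hbc hac
  have hpath : polygonalPath [b, c, a] = segment ℝ b c ∪ segment ℝ c a := by simp [polygonalPath]
  have hD' : polygon c (b :: N) a =
      polygonalPath [b, c, a] ∪ polygonalPath (b :: (N ++ [a])) := by
    rw [hpath, polygon, List.cons_append, polygonalPath, segment_symm ℝ c b, segment_symm ℝ c a,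
      union_right_comm]
  have hinter : polygonalPath [b, c, a] ∩ polygonalPath (b :: (N ++ [a])) ⊆ {b, a} := by
    rw [hpath, union_inter_distrib_right, segment_symm ℝ c a]
    have hl := h.isEdgePath hS
    exact union_subset ((hG.segment_inter_polygonalPath_subset hl hbcT hc).trans (by simp))
      ((hG.segment_inter_polygonalPath_subset hl hacT hc).trans (by simp))
  have hunion := (hG.isDisk_triangle h.ne hbc hac (hS ht)).union_of_inter_subset_arc (hD' ▸ hD)
    (htri.isArc hG (hsub.trans hS)) (isArc_segment h.ne).symm (h.isArc hG hS)
    (inter_comm _ _ ▸ hG.closing_edge_inter_polygonalPath_subset (hsub.trans hS) htri) hinter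
    (h.realization_triangle_inter_subset hT hG hS ht)
  rwa [realization_union_sdiff hsub, union_comm] at hunion

end BoundsPolygon

variable [TopologicalSpace E] [IsTopologicalAddGroup E] [ContinuousSMul ℝ E] [T2Space E]

/- The triangle on the marked edge `ab` has a third vertex `c`. If `c` is off the polygon, removing
the triangle leaves a disk; otherwise one of the chords `bc`, `ca` cuts `S` into two disks, unless
`S` is that triangle. -/
theorem IsGeometric.isDisk_of_boundsPolygon (hG : IsGeometric T) (hT : IsSurface T)
    (hcl : IsClosedFamily T) (hH : HasTrivialHomology T) (hS : S ⊆ T) (h : BoundsPolygon S b N a) :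
    IsDisk (realization S) (polygon b N a) := by
  induction S using Finset.strongInduction generalizing b N a with
  | H S ih =>
  have split {a b c : E} {N₁ N₂ : List E} (hN₁ : N₁ ≠ [])
      (h : BoundsPolygon S b (N₁ ++ c :: N₂) a) (ht : {a, b, c} ∈ S) :
      IsDisk (realization S) (polygon b (N₁ ++ c :: N₂) a) := by
    obtain ⟨S₁, hS₁, hS₂, h₁, h₂⟩ := h.exists_split hT hcl hS hH hN₁ ht
    exact h.isDisk_of_chord h₁ h₂ hT hG hS hS₁.subset (ih S₁ hS₁ (hS₁.subset.trans hS) h₁)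
      (ih (S \ S₁) hS₂ (hS₂.subset.trans hS) h₂)
  obtain ⟨t, ht, habt⟩ := exists_mem_of_boundary_ne_zero h.boundary_closing_edge
  obtain ⟨c, hac, hbc, rfl⟩ :=
    eq_triangle_of_pair_subset h.ne (hT.card_eq_three _ (hS ht)) habt
  by_cases hc : c ∈ b :: (N ++ [a])
  · have hcN : c ∈ N := by grind
    obtain ⟨N₁, N₂, rfl⟩ := List.append_of_mem hcN
    rcases eq_or_ne N₁ [] with rfl | hN₁
    · rcases eq_or_ne N₂ [] with rfl | hN₂
      · rw [h.eq_singleton hT hS ht]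
        exact hG.isDisk_triangle h.ne hbc hac (hS ht)
      · have hreverse : ([] ++ c :: N₂).reverse = N₂.reverse ++ c :: [] := by simp
        rw [← polygon_reverse, hreverse]
        exact split (by simpa using hN₂) (hreverse ▸ h.reverse)
          (by rwa [Finset.insert_comm])
    · exact split hN₁ h ht
  · exact h.isDisk_of_sdiff_triangle hT hG hS ht hc
      (ih _ (Finset.sdiff_ssubset (Finset.singleton_subset_iff.2 ht) (by simp))
        (Finset.sdiff_subset.trans hS) (h.sdiff_triangle hc ht))

theorem IsGeometric.nonempty_realization_homeomorph_sphere (hG : IsGeometric T) (hT : IsSurface T)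
    (hcl : IsClosedFamily T) (hH : HasTrivialHomology T) (hne : T.Nonempty) :
    Nonempty (realization T ≃ₜ Metric.sphere (0 : EuclideanSpace ℝ (Fin 3)) 1) := by
  obtain ⟨t, ht⟩ := hne
  obtain ⟨a, b, c, hab, hac, hbc, rfl⟩ := Finset.card_eq_three.1 (hT.card_eq_three t ht)
  have hrest := hG.isDisk_of_boundsPolygon hT hcl hH Finset.sdiff_subset
    (hcl.boundsPolygon_sdiff_triangle hab hbc hac ht)
  rw [← realization_union_sdiff (Finset.singleton_subset_iff.2 ht)]
  exact (hG.isDisk_triangle hab hbc hac ht).nonempty_homeomorph_sphere hrest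
    (hG.triangle_inter_subset hT ht)

end Realizations

section PuncturedConvexSets

open Set Topology Module

variable {E : Type*}

theorem isPreconnected_sdiff_singleton_of_convex [AddCommGroup E] [Module ℝ E] [TopologicalSpace E]
    [IsTopologicalAddGroup E] [ContinuousSMul ℝ E] {S : Set E} (hS : Convex ℝ S)
    (hcol : ¬ Collinear ℝ S) (p : E) : IsPreconnected (S \ {p}) := by
  have hseg : ∀ x ∈ S, ∀ y ∈ S, p ∉ segment ℝ x y → segment ℝ x y ⊆ S \ {p} :=
    fun x hx y hy hp => subset_sdiff_singleton (hS.segment_subset hx hy) hp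
  refine isPreconnected_of_forall_pair fun x hx y hy => ?_
  by_cases hp : p ∈ segment ℝ x y
  · obtain ⟨s, hs, hsxy⟩ : ∃ s ∈ S, s ∉ line[ℝ, x, y] := by
      by_contra! h
      refine hcol ((collinear_iff_of_mem hx.1).2 ⟨y - x, fun z hz => ?_⟩)
      obtain ⟨r, hr⟩ := (vadd_left_mem_affineSpan_pair (p₁ := x) (p₂ := y) (v := z - x)).1
        (by simpa using h z hz)
      exact ⟨r, by rw [← vsub_eq_sub y x, hr, vadd_eq_add, sub_add_cancel]⟩
    have hpline : p ∈ line[ℝ, x, y] := (mem_segment_iff_wbtw.1 hp).mem_affineSpan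
    have havoid : ∀ z ∈ S \ {p}, z ∈ line[ℝ, x, y] → p ∉ segment ℝ z s := fun z hz hzline hpz =>
      hsxy (affineSpan_pair_le_of_mem_of_mem hzline hpline
        ((mem_segment_iff_wbtw.1 hpz).collinear.mem_affineSpan_of_mem_of_ne
          (by simp) (by simp) (by simp) hz.2))
    refine ⟨segment ℝ x s ∪ segment ℝ y s, union_subset
      (hseg x hx.1 s hs (havoid x hx (left_mem_affineSpan_pair ℝ x y)))
      (hseg y hy.1 s hs (havoid y hy (right_mem_affineSpan_pair ℝ x y))),
      Or.inl (left_mem_segment ℝ x s), Or.inr (left_mem_segment ℝ y s),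
      IsPreconnected.union s (right_mem_segment ℝ x s) (right_mem_segment ℝ y s)
        (convex_segment x s).isPreconnected (convex_segment y s).isPreconnected⟩
  · exact ⟨_, hseg x hx.1 y hy.1 hp, left_mem_segment ℝ x y, right_mem_segment ℝ x y,
      (convex_segment x y).isPreconnected⟩

theorem not_collinear_of_interior_nonempty [NormedAddCommGroup E] [NormedSpace ℝ E]
    (hE : 1 < finrank ℝ E) {S : Set E} (hS : (interior S).Nonempty) : ¬ Collinear ℝ S := by
  have : FiniteDimensional ℝ E := FiniteDimensional.of_finrank_pos (by omega)
  have hspan : vectorSpan ℝ S = ⊤ := by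
    rw [← direction_affineSpan, affineSpan_eq_top_of_nonempty_interior
      (hS.mono (interior_mono (subset_convexHull ℝ S))), AffineSubspace.direction_top]
  rw [collinear_iff_finrank_le_one, hspan, finrank_top]
  exact hE.not_ge

theorem interior_ball_inter_nonempty [NormedAddCommGroup E] [NormedSpace ℝ E] {C : Set E}
    (hC : Convex ℝ C) (hCi : (interior C).Nonempty) {p : E} (hp : p ∈ C) {r : ℝ} (hr : 0 < r) :
    (interior (Metric.ball p r ∩ C)).Nonempty := by
  have hcl : p ∈ closure (interior C) := by
    rw [hC.closure_interior_eq_closure_of_nonempty_interior hCi]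
    exact subset_closure hp
  rw [interior_inter, Metric.isOpen_ball.interior_eq]
  exact mem_closure_iff.1 hcl _ Metric.isOpen_ball (Metric.mem_ball_self hr)

theorem exists_mem_openSegment_of_mem_nhdsWithin [AddCommGroup E] [Module ℝ E] [TopologicalSpace E]
    [IsTopologicalAddGroup E] [ContinuousSMul ℝ E] {X N : Set E} {x p : E}
    (hs : segment ℝ x p ⊆ X) (hN : N ∈ 𝓝[X] x) : ∃ y ∈ openSegment ℝ x p, y ∈ N := by
  let γ : ℝ → E := AffineMap.lineMap x p
  have hIoo : Ioo (0 : ℝ) 1 ∈ 𝓝[>] 0 := Ioo_mem_nhdsGT one_pos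
  have hmaps : MapsTo γ (Ioo 0 1) (openSegment ℝ x p) :=
    fun t ht => openSegment_eq_image_lineMap ℝ x p ▸ mem_image_of_mem _ ht
  have hγ : Filter.Tendsto γ (𝓝[>] 0) (𝓝[X] x) := by
    refine tendsto_nhdsWithin_iff.2 ⟨?_, Filter.mem_of_superset hIoo fun t ht =>
      hs (openSegment_subset_segment ℝ x p (hmaps ht))⟩
    have hcont : Continuous γ := AffineMap.lineMap_continuous
    simpa [γ] using (hcont.tendsto 0).mono_left nhdsWithin_le_nhds
  obtain ⟨t, ht, htN⟩ := Filter.nonempty_of_mem (Filter.inter_mem hIoo (hγ hN))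
  exact ⟨γ t, hmaps ht, htN⟩

end PuncturedConvexSets

section Charts

open Set Topology Filter

variable {E : Type*} [TopologicalSpace E] {X : Set E} {x : E} {C : Set (ℝ × ℝ)}
  {e : PartialEquiv E (ℝ × ℝ)}

/-- `e` is a chart of `X` at `x` modelled on `C`: a homeomorphism of a neighbourhood of `x` in `X`
onto a neighbourhood of `e x` in `C`. -/
structure IsChartAt (e : PartialEquiv E (ℝ × ℝ)) (X : Set E) (C : Set (ℝ × ℝ)) (x : E) : Prop where
  mem_source : x ∈ e.source
  source_subset : e.source ⊆ X
  source_mem : e.source ∈ 𝓝[X] x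
  target_subset : e.target ⊆ C
  target_mem : e.target ∈ 𝓝[C] (e x)
  continuousOn : ContinuousOn e e.source
  continuousOn_symm : ContinuousOn e.symm e.target

theorem exists_isChartAt_of_homeomorph {U : Set E} {W : Set (ℝ × ℝ)} (hx : x ∈ X) (hU : U ⊆ X)
    (hUx : U ∈ 𝓝[X] x) (hW : IsOpen W) (f : U ≃ₜ ↥(W ∩ C)) :
    ∃ e, IsChartAt e X C x := by
  let F : E → ℝ × ℝ := Function.extend (↑) (fun u : U => (f u : ℝ × ℝ)) 0
  let G : ℝ × ℝ → E := Function.extend (↑) (fun w : ↥(W ∩ C) => (f.symm w : E)) fun _ => x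
  have hF : ∀ u : U, F u = f u := fun u => Subtype.val_injective.extend_apply _ _ u
  have hG : ∀ w : ↥(W ∩ C), G w = f.symm w := fun w => Subtype.val_injective.extend_apply _ _ w
  have hxU : x ∈ U := mem_of_mem_nhdsWithin hx hUx
  have hWx : W ∈ 𝓝 (F x) := hW.mem_nhds (hF ⟨x, hxU⟩ ▸ (f ⟨x, hxU⟩).2.1)
  refine ⟨{ toFun := F, invFun := G, source := U, target := W ∩ C,
            map_source' := fun u hu => hF ⟨u, hu⟩ ▸ (f ⟨u, hu⟩).2,
            map_target' := fun w hw => hG ⟨w, hw⟩ ▸ (f.symm ⟨w, hw⟩).2,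
            left_inv' := fun u hu => by rw [hF ⟨u, hu⟩, hG, f.symm_apply_apply],
            right_inv' := fun w hw => by rw [hG ⟨w, hw⟩, hF, f.apply_symm_apply] },
    hxU, hU, hUx, inter_subset_right,
    inter_mem (mem_nhdsWithin_of_mem_nhds hWx) self_mem_nhdsWithin, ?_, ?_⟩
  · exact continuousOn_iff_continuous_domRestrict.2
      ((continuous_subtype_val.comp f.continuous).congr fun u => (hF u).symm)
  · exact continuousOn_iff_continuous_domRestrict.2
      ((continuous_subtype_val.comp f.symm.continuous).congr fun w => (hG w).symm)

namespace IsChartAt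

theorem tendsto (h : IsChartAt e X C x) : Tendsto e (𝓝[X] x) (𝓝[C] (e x)) := by
  have hsource : 𝓝[e.source] x = 𝓝[X] x := by
    rw [← nhdsWithin_inter_of_mem h.source_mem, inter_eq_left.2 h.source_subset]
  exact hsource ▸ (h.continuousOn x h.mem_source).tendsto_nhdsWithin
    fun y hy => h.target_subset (e.map_source hy)

theorem tendsto_symm (h : IsChartAt e X C x) : Tendsto e.symm (𝓝[C] (e x)) (𝓝[X] x) := by
  have htarget : 𝓝[e.target] (e x) = 𝓝[C] (e x) := by
    rw [← nhdsWithin_inter_of_mem h.target_mem, inter_eq_left.2 h.target_subset]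
  have := (h.continuousOn_symm (e x) (e.map_source h.mem_source)).tendsto_nhdsWithin
    fun y hy => h.source_subset (e.map_target hy)
  rwa [e.left_inv h.mem_source, htarget] at this

theorem exists_isPreconnected_sdiff_singleton (h : IsChartAt e X C x) (hC : Convex ℝ C)
    (hCi : (interior C).Nonempty) {O : Set E} (hO : O ∈ 𝓝[X] x) :
    ∃ N ∈ 𝓝[X] x, N ⊆ O ∧ IsPreconnected (N \ {x}) ∧ (N \ {x}).Nonempty := by
  obtain ⟨r, hr, hball⟩ := Metric.mem_nhdsWithin_iff.1 (inter_mem (h.tendsto_symm hO) h.target_mem)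
  set D := Metric.ball (e x) r ∩ C
  have hexC : e x ∈ C := h.target_subset (e.map_source h.mem_source)
  have hcol : ¬ Collinear ℝ D := not_collinear_of_interior_nonempty (by simp)
    (interior_ball_inter_nonempty hC hCi hexC hr)
  have himage : e.symm '' (D \ {e x}) = e.symm '' D \ {x} := by
    have hD : e x ∈ D := ⟨Metric.mem_ball_self hr, hexC⟩
    rw [(e.symm.injOn.mono fun y hy => (hball hy).2).image_sdiff,
      inter_eq_right.2 (singleton_subset_iff.2 hD), image_singleton, e.left_inv h.mem_source]
  refine ⟨e.symm '' D, ?_, image_subset_iff.2 fun y hy => (hball hy).1, ?_, ?_⟩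
  · have hD : D ∈ 𝓝[C] (e x) :=
      inter_mem (mem_nhdsWithin_of_mem_nhds (Metric.ball_mem_nhds _ hr)) self_mem_nhdsWithin
    filter_upwards [h.tendsto hD, h.source_mem] with y hyD hy
    exact ⟨e y, hyD, e.left_inv hy⟩
  · rw [← himage]
    exact (isPreconnected_sdiff_singleton_of_convex ((convex_ball _ _).inter hC) hcol _).image _
      (h.continuousOn_symm.mono fun y hy => (hball hy.1).2)
  · rw [← himage]
    refine Nonempty.image _ (nonempty_iff_ne_empty.2 fun hempty => hcol ?_)
    exact (collinear_singleton ℝ (e x)).subset (sdiff_eq_empty.1 hempty)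

theorem image_mem_nhdsWithin {ψ : ℝ × ℝ → E} {q : ℝ × ℝ} (h : IsChartAt e X C (ψ q))
    {Q : Set (ℝ × ℝ)} (hQ : Q ∈ 𝓝 q) (hψ : ContinuousOn ψ Q) (hinj : InjOn ψ Q)
    (hmaps : MapsTo ψ Q X) : ψ '' Q ∈ 𝓝[X] (ψ q) := by
  have hsource : ψ ⁻¹' e.source ∈ 𝓝 q := by
    have := (hψ q (mem_of_mem_nhds hQ)).tendsto_nhdsWithin hmaps h.source_mem
    rwa [nhdsWithin_eq_nhds.2 hQ] at this
  have himage : (e ∘ ψ) '' (Q ∩ ψ ⁻¹' e.source) ∈ 𝓝 (e (ψ q)) :=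
    image_mem_nhds_of_continuousOn_injOn (inter_mem hQ hsource)
      (h.continuousOn.comp (hψ.mono inter_subset_left) fun _ hy => hy.2)
      (e.injOn.comp (hinj.mono inter_subset_left) fun _ hy => hy.2)
  filter_upwards [h.tendsto (mem_nhdsWithin_of_mem_nhds himage), h.source_mem]
  rintro y ⟨q', hq', hq'y⟩ hy
  exact ⟨q', hq'.1, e.injOn hq'.2 hy hq'y⟩

theorem image_mem_nhds {R : E → ℝ × ℝ} (h : IsChartAt e X univ x) {O : Set E} (hO : O ∈ 𝓝[X] x)
    (hR : ContinuousOn R O) (hinj : InjOn R O) : R '' O ∈ 𝓝 (R x) := by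
  have hsymm := h.tendsto_symm hO
  have htarget := h.target_mem
  rw [nhdsWithin_univ] at hsymm htarget
  have himage : (R ∘ e.symm) '' (e.symm ⁻¹' O ∩ e.target) ∈ 𝓝 ((R ∘ e.symm) (e x)) :=
    image_mem_nhds_of_continuousOn_injOn (inter_mem hsymm htarget)
      (hR.comp (h.continuousOn_symm.mono inter_subset_right) fun _ hy => hy.1)
      (hinj.comp (e.symm.injOn.mono inter_subset_right) fun _ hy => hy.1)
  rw [Function.comp_apply, e.left_inv h.mem_source, image_comp] at himage
  exact mem_of_superset himage (image_mono (image_subset_iff.2 inter_subset_left))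

end IsChartAt

end Charts

section LocallyPlanarPoints

open Set Topology Filter

variable {K : SimplicialComplex ℝ (Pt n)} {x : Pt n}

theorem HasPlanarNbhd.exists_isChartAt (h : HasPlanarNbhd K x) (hx : x ∈ K.space) :
    ∃ e, IsChartAt e K.space univ x := by
  obtain ⟨U, hU, hUx, V, hV, ⟨f⟩⟩ := h
  exact exists_isChartAt_of_homeomorph hx hU hUx hV
    (f.trans (Homeomorph.setCongr (inter_univ V).symm))

theorem HasHalfPlanarNbhd.exists_isChartAt (h : HasHalfPlanarNbhd K x) (hx : x ∈ K.space) :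
    ∃ e, IsChartAt e K.space HalfPlane x := by
  obtain ⟨U, hU, hUx, V, hV, ⟨f⟩⟩ := h
  obtain ⟨W, hW, rfl⟩ := isOpen_induced_iff.1 hV
  exact exists_isChartAt_of_homeomorph hx hU hUx hW
    (f.trans ((IsEmbedding.subtypeVal.homeomorphImage _).trans (Homeomorph.setCongr
      (by rw [Subtype.image_preimage_coe, inter_comm]))))

theorem convex_halfPlane : Convex ℝ HalfPlane :=
  convex_halfSpace_ge (LinearMap.snd ℝ ℝ ℝ).isLinear 0

theorem interior_halfPlane_nonempty : (interior HalfPlane).Nonempty :=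
  ⟨(0, 1), mem_interior.2 ⟨{p | 0 < p.2}, fun p (hp : 0 < p.2) => hp.le,
    isOpen_lt continuous_const continuous_snd, one_pos (α := ℝ)⟩⟩

theorem IsLocallyPlanarPt.exists_isChartAt (h : IsLocallyPlanarPt K x) :
    ∃ C e, Convex ℝ C ∧ (interior C).Nonempty ∧ IsChartAt e K.space C x := by
  rcases h.2 with hplane | hhalf
  · obtain ⟨e, he⟩ := hplane.exists_isChartAt h.1
    exact ⟨univ, e, convex_univ, by simp, he⟩
  · obtain ⟨e, he⟩ := hhalf.exists_isChartAt h.1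
    exact ⟨HalfPlane, e, convex_halfPlane, interior_halfPlane_nonempty, he⟩

-- A locally planar point does not separate its small neighbourhoods.
theorem IsLocallyPlanarPt.exists_ne_mem_inter (h : IsLocallyPlanarPt K x) {F₁ F₂ : Set (Pt n)}
    (h₁ : IsClosed F₁) (h₂ : IsClosed F₂) (hF : F₁ ∪ F₂ ∈ 𝓝[K.space] x) {p q : Pt n} (hp : p ≠ x)
    (hq : q ≠ x) (hpF : segment ℝ x p ⊆ F₁ ∩ K.space) (hqF : segment ℝ x q ⊆ F₂ ∩ K.space) :
    ∃ z ∈ F₁ ∩ F₂, z ≠ x := by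
  obtain ⟨C, e, hC, hCi, he⟩ := h.exists_isChartAt
  obtain ⟨N, hN, hNF, hconn, -⟩ := he.exists_isPreconnected_sdiff_singleton hC hCi hF
  have hmeet : ∀ {F : Set (Pt n)} {r : Pt n}, r ≠ x → segment ℝ x r ⊆ F ∩ K.space →
      (N \ {x} ∩ F).Nonempty := fun hr hrF => by
    obtain ⟨y, hy, hyN⟩ :=
      exists_mem_openSegment_of_mem_nhdsWithin (hrF.trans inter_subset_right) hN
    have hyx : y ≠ x := fun hyx => hr (left_mem_openSegment_iff.1 (hyx ▸ hy)).symm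
    exact ⟨y, ⟨hyN, hyx⟩, (hrF (openSegment_subset_segment ℝ _ _ hy)).1⟩
  obtain ⟨z, hzN, hz⟩ := isPreconnected_closed_iff.1 hconn F₁ F₂ h₁ h₂
    (sdiff_subset.trans hNF) (hmeet hp hpF) (hmeet hq hqF)
  exact ⟨z, hz, hzN.2⟩

end LocallyPlanarPoints

section PureComplexes

open Finset

variable {E : Type*} [AddCommGroup E] [Module ℝ E] {K : SimplicialComplex ℝ E}

/-- `K` is pure of dimension two: every face is contained in a triangle. -/
def IsPure (K : SimplicialComplex ℝ E) : Prop :=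
  ∀ s ∈ K.faces, ∃ t ∈ K.faces, #t = 3 ∧ s ⊆ t

/-- The triangles of a finite complex. -/
noncomputable def triangles (hfin : K.faces.Finite) : Finset (Finset E) :=
  {t ∈ hfin.toFinset | #t = 3}

variable {hfin : K.faces.Finite} {s s' t : Finset E} {v : E}

theorem mem_triangles : t ∈ triangles hfin ↔ t ∈ K.faces ∧ #t = 3 := by
  simp [triangles]

theorem IsPure.exists_mem_triangles (hK : IsPure K) (hs : s ∈ K.faces) :
    ∃ t ∈ triangles hfin, s ⊆ t := by
  obtain ⟨t, ht, ht₃, hst⟩ := hK s hs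
  exact ⟨t, mem_triangles.2 ⟨ht, ht₃⟩, hst⟩

theorem IsPure.triangles_nonempty (hK : IsPure K) (hfin : K.faces.Finite)
    (hne : K.faces.Nonempty) : (triangles hfin).Nonempty :=
  have ⟨_, hs⟩ := hne
  have ⟨t, ht, _⟩ := hK.exists_mem_triangles hs
  ⟨t, ht⟩

theorem IsPure.realization_triangles (hK : IsPure K) :
    realization (triangles hfin) = K.space := by
  ext y
  rw [mem_realization, SimplicialComplex.mem_space_iff]
  constructor
  · rintro ⟨t, ht, hy⟩
    exact ⟨t, (mem_triangles.1 ht).1, hy⟩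
  · rintro ⟨s, hs, hy⟩
    obtain ⟨t, ht, hst⟩ := hK.exists_mem_triangles hs
    exact ⟨t, ht, convexHull_mono (coe_subset.2 hst) hy⟩

theorem singleton_mem_faces (hs : s ∈ K.faces) (hv : v ∈ s) : {v} ∈ K.faces :=
  K.down_closed hs (singleton_subset_iff.2 hv) (singleton_nonempty v)

theorem segment_subset_space {x y : E} (hs : s ∈ K.faces) (hx : x ∈ convexHull ℝ (s : Set E))
    (hy : y ∈ convexHull ℝ (s : Set E)) : segment ℝ x y ⊆ K.space :=
  ((convex_convexHull ℝ _).segment_subset hx hy).trans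
    (SimplicialComplex.convexHull_subset_space hs)

variable [DecidableEq E]

theorem convexHull_inter_subset_convexHull_inter (hs : s ∈ K.faces) (hs' : s' ∈ K.faces) :
    convexHull ℝ (s : Set E) ∩ convexHull ℝ (s' : Set E) ⊆ convexHull ℝ ↑(s ∩ s') := by
  rw [coe_inter]
  exact K.inter_subset_convexHull hs hs'

theorem isGeometric_triangles (hfin : K.faces.Finite) : IsGeometric (triangles hfin) where
  affineIndependent t ht := K.indep (mem_triangles.1 ht).1
  convexHull_inter_subset := by
    rintro s s' ⟨t, ht, hst⟩ ⟨t', ht', hst'⟩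
    rcases s.eq_empty_or_nonempty with rfl | hs
    · simp
    rcases s'.eq_empty_or_nonempty with rfl | hs'
    · simp
    exact convexHull_inter_subset_convexHull_inter (K.down_closed (mem_triangles.1 ht).1 hst hs)
      (K.down_closed (mem_triangles.1 ht').1 hst' hs')

theorem IsPure.mem_edgesOf_triangles (hK : IsPure K) :
    s ∈ edgesOf (triangles hfin) ↔ s ∈ K.faces ∧ #s = 2 := by
  rw [mem_edgesOf, and_comm]
  refine and_congr_left fun hs₂ => ⟨?_, hK.exists_mem_triangles⟩
  rintro ⟨t, ht, hst⟩
  exact K.down_closed (mem_triangles.1 ht).1 hst (card_pos.1 (by omega))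

theorem IsPure.mem_verticesOf_triangles (hK : IsPure K) :
    v ∈ verticesOf (triangles hfin) ↔ {v} ∈ K.faces := by
  rw [mem_verticesOf]
  constructor
  · rintro ⟨t, ht, hv⟩
    exact singleton_mem_faces (mem_triangles.1 ht).1 hv
  · intro hv
    obtain ⟨t, ht, hvt⟩ := hK.exists_mem_triangles hv
    exact ⟨t, ht, singleton_subset_iff.1 hvt⟩

theorem IsPure.eulerChar_eq [DecidableEq (Pt n)] {K : SimplicialComplex ℝ (Pt n)} (hK : IsPure K)
    (hfin : K.faces.Finite) : eulerChar K = eulerCharOf (triangles hfin) := by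
  have hvertices : K.vertices = ↑(verticesOf (triangles hfin)) :=
    Set.ext fun v => hK.mem_verticesOf_triangles.symm
  have hedges : {e : Finset (Pt n) | e ∈ K.faces ∧ #e = 2} = ↑(edgesOf (triangles hfin)) :=
    Set.ext fun e => hK.mem_edgesOf_triangles.symm
  have htriangles : {t : Finset (Pt n) | t ∈ K.faces ∧ #t = 3} = ↑(triangles hfin) :=
    Set.ext fun t => mem_triangles.symm
  rw [eulerChar, eulerCharOf, hvertices, hedges, htriangles, Set.ncard_coe_finset,
    Set.ncard_coe_finset, Set.ncard_coe_finset]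

end PureComplexes

section OpenStars

open Finset Topology

variable {E : Type*} [AddCommGroup E] [Module ℝ E] {K : SimplicialComplex ℝ E} {s : Finset E}

/-- The open star of `s`: the points all of whose carrying faces contain `s`. Points outside the
space of `K` are included, which makes this an open subset of the ambient space. -/
def openStar (K : SimplicialComplex ℝ E) (s : Finset E) : Set E :=
  {x | ∀ t ∈ K.faces, x ∈ convexHull ℝ (t : Set E) → s ⊆ t}

theorem isClosed_realization [TopologicalSpace E] [IsTopologicalAddGroup E] [ContinuousSMul ℝ E]
    [T2Space E] (S : Finset (Finset E)) : IsClosed (realization S) :=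
  S.finite_toSet.isClosed_biUnion fun t _ => t.finite_toSet.isClosed_convexHull ℝ

theorem isOpen_openStar [TopologicalSpace E] [IsTopologicalAddGroup E] [ContinuousSMul ℝ E]
    [T2Space E] (hfin : K.faces.Finite) (s : Finset E) : IsOpen (openStar K s) := by
  have hcompl : (openStar K s)ᶜ = ⋃ t ∈ {t ∈ K.faces | ¬ s ⊆ t}, convexHull ℝ (t : Set E) := by
    ext x
    simp only [openStar, Set.mem_compl_iff, Set.mem_ofPred_eq, not_forall, Set.mem_iUnion,
      exists_prop]
    tauto
  rw [← isClosed_compl_iff, hcompl]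
  exact (hfin.subset (Set.sep_subset _ _)).isClosed_biUnion
    fun t _ => t.finite_toSet.isClosed_convexHull ℝ

theorem mem_openStar_singleton {v : E} (hv : {v} ∈ K.faces) : v ∈ openStar K {v} :=
  fun _ ht hvt => singleton_subset_iff.2 ((SimplicialComplex.vertex_mem_convexHull_iff hv ht).1 hvt)

theorem centroid_mem_openStar (hs : s ∈ K.faces) : s.centroid ℝ id ∈ openStar K s := by
  classical
  intro t ht hst v hv
  by_contra hvt
  have hne : (univ : Finset s).Nonempty := ⟨⟨v, hv⟩, mem_univ _⟩
  have hmem : s.centroid ℝ id ∈ convexHull ℝ (↑(s ∩ t) : Set E) :=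
    convexHull_inter_subset_convexHull_inter hs ht
      ⟨s.centroid_mem_convexHull (K.nonempty_of_mem_faces hs), hst⟩
  have himage : ((↑) : s → E) '' {w | ↑w ∈ t} = ↑(s ∩ t) := by ext; simp [and_comm]
  have hspan : univ.affineCombination ℝ ((↑) : s → E) (univ.centroidWeights ℝ) ∈
      affineSpan ℝ (((↑) : s → E) '' {w | ↑w ∈ t}) := by
    rw [himage, ← centroid_def, centroid_univ]
    exact convexHull_subset_affineSpan _ hmem
  have hweight := (K.indep hs).eq_zero_of_affineCombination_mem_affineSpan
    (sum_centroidWeights_eq_one_of_nonempty ℝ _ hne) hspan (mem_univ ⟨v, hv⟩) hvt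
  simp [(K.nonempty_of_mem_faces hs).ne_empty] at hweight

theorem midpoint_mem_openStar_pair [DecidableEq E] {a b : E}
    (he : {a, b} ∈ K.faces) : midpoint ℝ a b ∈ openStar K {a, b} := by
  have hmidpoint : midpoint ℝ a b = ({a, b} : Finset E).centroid ℝ id := by
    rw [centroid_pair, midpoint, AffineMap.lineMap_apply, invOf_eq_inv, id, id]
  exact hmidpoint ▸ centroid_mem_openStar he

end OpenStars

section SplitSegments

variable {E : Type*} [AddCommGroup E] [Module ℝ E] {a b m : E}

theorem segment_subset_union_segment (hm : m ∈ segment ℝ a b) :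
    segment ℝ a b ⊆ segment ℝ m a ∪ segment ℝ m b := by
  have hrange : m ∈ Set.range (AffineMap.lineMap a b : ℝ → E) := by
    rw [segment_eq_image_lineMap] at hm
    exact Set.image_subset_range _ _ hm
  rw [← insert_endpoints_openSegment]
  rintro z (rfl | rfl | hz)
  · exact Or.inl (right_mem_segment ℝ _ _)
  · exact Or.inr (right_mem_segment ℝ _ _)
  · obtain rfl | hz | hz := openSegment_subset_union a b hrange hz
    · exact Or.inl (left_mem_segment ℝ _ _)
    · exact Or.inl (segment_symm ℝ a m ▸ openSegment_subset_segment ℝ _ _ hz)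
    · exact Or.inr (openSegment_subset_segment ℝ _ _ hz)

theorem segment_inter_segment_subset_singleton (hm : m ∈ segment ℝ a b) :
    segment ℝ m a ∩ segment ℝ m b ⊆ {m} := by
  rintro z ⟨hza, hzb⟩
  have hz : Wbtw ℝ a z m := (mem_segment_iff_wbtw.1 hza).symm
  exact (wbtw_swap_left_iff ℝ b).1
    ⟨(mem_segment_iff_wbtw.1 hm).trans_left_right hz, mem_segment_iff_wbtw.1 hzb⟩

end SplitSegments

section LocallyPlanarComplexes

open Finset Topology

variable {K : SimplicialComplex ℝ (Pt n)} {v : Pt n}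

theorem IsLocallyPlanarPt.exists_edge [DecidableEq (Pt n)] (hv : IsLocallyPlanarPt K v)
    (hfin : K.faces.Finite) (hvK : {v} ∈ K.faces) : ∃ w ≠ v, {v, w} ∈ K.faces := by
  obtain ⟨C, e, hC, hCi, he⟩ := hv.exists_isChartAt
  have hstar : openStar K {v} ∩ K.space ∈ 𝓝[K.space] v :=
    Filter.inter_mem (mem_nhdsWithin_of_mem_nhds
      ((isOpen_openStar hfin {v}).mem_nhds (mem_openStar_singleton hvK))) self_mem_nhdsWithin
  obtain ⟨N, -, hN, -, y, hyN, hyv⟩ := he.exists_isPreconnected_sdiff_singleton hC hCi hstar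
  obtain ⟨s, hs, hys⟩ := SimplicialComplex.mem_space_iff.1 (hN hyN).2
  have hvs : v ∈ s := singleton_subset_iff.1 ((hN hyN).1 s hs hys)
  obtain ⟨w, hws, hwv⟩ : ∃ w ∈ s, w ≠ v := by
    by_contra! h
    have hsv : s ⊆ {v} := fun w hw => mem_singleton.2 (h w hw)
    have := convexHull_mono (coe_subset.2 hsv) hys
    rw [coe_singleton, convexHull_singleton] at this
    exact hyv this
  exact ⟨w, hwv, K.down_closed hs (insert_subset hvs (singleton_subset_iff.2 hws)) (by simp)⟩

theorem LocallyPlanar.exists_triangle_of_edge (hK : LocallyPlanar K) (hdim : TwoDimensional K)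
    (hfin : K.faces.Finite) {e : Finset (Pt n)} (he : e ∈ K.faces) (he₂ : #e = 2) :
    ∃ t ∈ K.faces, #t = 3 ∧ e ⊆ t := by
  classical
  obtain ⟨a, b, hab, rfl⟩ := card_eq_two.1 he₂
  by_contra! hmaximal
  set m := midpoint ℝ a b
  have hae : a ∈ convexHull ℝ (↑({a, b} : Finset (Pt n)) : Set (Pt n)) :=
    subset_convexHull ℝ _ (by simp)
  have hbe : b ∈ convexHull ℝ (↑({a, b} : Finset (Pt n)) : Set (Pt n)) :=
    subset_convexHull ℝ _ (by simp)
  have hme : m ∈ convexHull ℝ (↑({a, b} : Finset (Pt n)) : Set (Pt n)) := by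
    rw [coe_pair, convexHull_pair]
    exact midpoint_mem_segment a b
  have hnhds : segment ℝ m a ∪ segment ℝ m b ∈ 𝓝[K.space] m := by
    refine Filter.mem_of_superset ?_ (segment_subset_union_segment (midpoint_mem_segment a b))
    filter_upwards [mem_nhdsWithin_of_mem_nhds
      ((isOpen_openStar hfin _).mem_nhds (midpoint_mem_openStar_pair he)),
      self_mem_nhdsWithin] with y hy hyK
    obtain ⟨s, hs, hys⟩ := SimplicialComplex.mem_space_iff.1 hyK
    have hes := hy s hs hys
    have hs₂ : #s ≤ 2 := by
      have := hdim s hs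
      have := hmaximal s hs
      grind
    rwa [← eq_of_subset_of_card_le hes (hs₂.trans he₂.ge), coe_pair, convexHull_pair] at hys
  have hmK : m ∈ K.space := SimplicialComplex.convexHull_subset_space he hme
  have hclosed : ∀ c, IsClosed (segment ℝ m c) := fun c =>
    convexHull_pair (𝕜 := ℝ) m c ▸ (Set.toFinite _).isClosed_convexHull ℝ
  obtain ⟨z, hz, hzm⟩ := (hK m hmK).exists_ne_mem_inter (hclosed a) (hclosed b) hnhds
    (fun h => hab ((midpoint_eq_left_iff ℝ).1 h.symm))
    (fun h => hab ((midpoint_eq_right_iff ℝ).1 h.symm))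
    (Set.subset_inter subset_rfl (segment_subset_space he hme hae))
    (Set.subset_inter subset_rfl (segment_subset_space he hme hbe))
  exact hzm (segment_inter_segment_subset_singleton (midpoint_mem_segment a b) hz)

theorem LocallyPlanar.isPure (hK : LocallyPlanar K) (hdim : TwoDimensional K)
    (hfin : K.faces.Finite) : IsPure K := by
  intro s hs
  classical
  have hpos := (K.nonempty_of_mem_faces hs).card_pos
  have hle := hdim s hs
  obtain h₁ | h₂ | h₃ : #s = 1 ∨ #s = 2 ∨ #s = 3 := by omega
  · obtain ⟨v, rfl⟩ := card_eq_one.1 h₁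
    obtain ⟨w, hwv, he⟩ := (hK v (K.vertices_subset_space hs)).exists_edge hfin hs
    obtain ⟨t, ht, ht₃, het⟩ := hK.exists_triangle_of_edge hdim hfin he (card_pair hwv.symm)
    exact ⟨t, ht, ht₃, (singleton_subset_iff.2 (mem_insert_self v {w})).trans het⟩
  · exact hK.exists_triangle_of_edge hdim hfin hs h₂
  · exact ⟨s, hs, h₃, subset_rfl⟩

variable {hfin : K.faces.Finite} {A : Finset (Finset (Pt n))}

theorem exists_ne_segment_subset_realization {t : Finset (Pt n)} (ht : t ∈ K.faces) (ht₃ : #t = 3)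
    (hv : v ∈ t) (htA : t ∈ A) :
    ∃ w ≠ v, segment ℝ v w ⊆ realization A ∩ K.space := by
  obtain ⟨w, hw, hwv⟩ := exists_mem_ne (by omega : 1 < #t) v
  have hsegment : segment ℝ v w ⊆ convexHull ℝ (t : Set (Pt n)) :=
    segment_subset_convexHull (mem_coe.2 hv) (mem_coe.2 hw)
  exact ⟨w, hwv, fun z hz => ⟨mem_realization.2 ⟨t, htA, hsegment hz⟩,
    SimplicialComplex.convexHull_subset_space ht (hsegment hz)⟩⟩

variable [DecidableEq (Pt n)]

theorem IsPure.realization_star_mem_nhdsWithin (hK : IsPure K) (hvK : {v} ∈ K.faces) :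
    realization {t ∈ triangles hfin | v ∈ t} ∈ 𝓝[K.space] v := by
  filter_upwards [mem_nhdsWithin_of_mem_nhds
    ((isOpen_openStar hfin _).mem_nhds (mem_openStar_singleton hvK)), self_mem_nhdsWithin]
    with y hy hyK
  rw [← hK.realization_triangles (hfin := hfin), mem_realization] at hyK
  obtain ⟨t, ht, hyt⟩ := hyK
  exact mem_realization.2 ⟨t, mem_filter.2 ⟨ht,
    singleton_subset_iff.1 (hy t (mem_triangles.1 ht).1 hyt)⟩, hyt⟩

theorem LocallyPlanar.link_connected (hK : LocallyPlanar K) (hpure : IsPure K)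
    (hA : A ⊆ triangles hfin)
    (hclosed : ∀ t ∈ A, ∀ t' ∈ triangles hfin, v ∈ t → v ∈ t' → 2 ≤ #(t ∩ t') → t' ∈ A)
    (hne : ∃ t ∈ A, v ∈ t) : ∀ t ∈ triangles hfin, v ∈ t → t ∈ A := by
  by_contra! ⟨t₁, ht₁, hvt₁, ht₁A⟩
  obtain ⟨t₀, ht₀A, hvt₀⟩ := hne
  have hvK : {v} ∈ K.faces := singleton_mem_faces (mem_triangles.1 ht₁).1 hvt₁
  set A₀ := {t ∈ A | v ∈ t}
  set A₁ := {t ∈ triangles hfin | v ∈ t} \ A₀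
  have hstar : realization A₀ ∪ realization A₁ ∈ 𝓝[K.space] v := by
    rw [realization_union_sdiff (filter_subset_filter _ hA)]
    exact hpure.realization_star_mem_nhdsWithin hvK
  obtain ⟨ht₀K, ht₀₃⟩ := mem_triangles.1 (hA ht₀A)
  obtain ⟨ht₁K, ht₁₃⟩ := mem_triangles.1 ht₁
  obtain ⟨p, hp, hpA⟩ := exists_ne_segment_subset_realization (A := A₀) ht₀K ht₀₃ hvt₀
    (mem_filter.2 ⟨ht₀A, hvt₀⟩)
  obtain ⟨q, hq, hqA⟩ := exists_ne_segment_subset_realization (A := A₁) ht₁K ht₁₃ hvt₁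
    (mem_sdiff.2 ⟨mem_filter.2 ⟨ht₁, hvt₁⟩, fun h => ht₁A (mem_filter.1 h).1⟩)
  obtain ⟨z, ⟨hz₀, hz₁⟩, hzv⟩ := (hK v (K.vertices_subset_space hvK)).exists_ne_mem_inter
    (isClosed_realization A₀) (isClosed_realization A₁) hstar hp hq hpA hqA
  obtain ⟨t, htA, hzt⟩ := mem_realization.1 hz₀
  obtain ⟨t', htA', hzt'⟩ := mem_realization.1 hz₁
  obtain ⟨htA, hvt⟩ := mem_filter.1 htA
  obtain ⟨ht', htA'⟩ := mem_sdiff.1 htA'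
  obtain ⟨ht', hvt'⟩ := mem_filter.1 ht'
  have hinter : {v} = t ∩ t' := by
    refine eq_of_subset_of_card_le (singleton_subset_iff.2 (mem_inter.2 ⟨hvt, hvt'⟩)) ?_
    rw [card_singleton, ← not_lt]
    exact fun h => htA' (mem_filter.2 ⟨hclosed t htA t' ht' hvt hvt' h, hvt'⟩)
  have hz := convexHull_inter_subset_convexHull_inter (mem_triangles.1 (hA htA)).1
    (mem_triangles.1 ht').1 ⟨hzt, hzt'⟩
  rw [← hinter, coe_singleton, convexHull_singleton] at hz
  exact hzv hz

theorem IsPure.eq_verticesOf_of_closed (hpure : IsPure K) (hconn : IsPreconnected K.space)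
    {W : Finset (Pt n)} (hW : W ⊆ verticesOf (triangles hfin)) (hne : W.Nonempty)
    (hclosed : ∀ t ∈ triangles hfin, ∀ u ∈ t, u ∈ W → t ⊆ W) :
    W = verticesOf (triangles hfin) := by
  refine hW.antisymm fun v hv => ?_
  by_contra hvW
  set A := {t ∈ triangles hfin | t ⊆ W}
  set B := triangles hfin \ A
  have hunion : realization A ∪ realization B = K.space := by
    rw [realization_union_sdiff (filter_subset _ _), hpure.realization_triangles]
  have hmeet : ∀ {D : Finset (Finset (Pt n))} {t : Finset (Pt n)} {u : Pt n},
      realization D ⊆ K.space → t ∈ D → u ∈ t → (K.space ∩ realization D).Nonempty :=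
    fun hD ht hu => have hu := mem_realization.2 ⟨_, ht, subset_convexHull ℝ _ (mem_coe.2 hu)⟩
      ⟨_, hD hu, hu⟩
  obtain ⟨w, hw⟩ := hne
  obtain ⟨t₀, ht₀, hwt₀⟩ := mem_verticesOf.1 (hW hw)
  obtain ⟨t₁, ht₁, hvt₁⟩ := mem_verticesOf.1 hv
  obtain ⟨z, -, hzA, hzB⟩ := isPreconnected_closed_iff.1 hconn _ _ (isClosed_realization A)
    (isClosed_realization B) hunion.superset
    (hmeet (Set.subset_union_left.trans hunion.subset)
      (mem_filter.2 ⟨ht₀, hclosed t₀ ht₀ w hwt₀ hw⟩) hwt₀)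
    (hmeet (Set.subset_union_right.trans hunion.subset)
      (mem_sdiff.2 ⟨ht₁, fun h => hvW ((mem_filter.1 h).2 hvt₁)⟩) hvt₁)
  obtain ⟨t, htA, hzt⟩ := mem_realization.1 hzA
  obtain ⟨t', htB, hzt'⟩ := mem_realization.1 hzB
  obtain ⟨ht, htW⟩ := mem_filter.1 htA
  obtain ⟨ht', htA'⟩ := mem_sdiff.1 htB
  have hinter : t ∩ t' = ∅ := by
    by_contra! ⟨u, hu⟩
    obtain ⟨hut, hut'⟩ := mem_inter.1 hu
    exact htA' (mem_filter.2 ⟨ht', hclosed t' ht' u hut' (htW hut)⟩)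
  have hz := convexHull_inter_subset_convexHull_inter (mem_triangles.1 ht).1
    (mem_triangles.1 ht').1 ⟨hzt, hzt'⟩
  simp [hinter] at hz

end LocallyPlanarComplexes

section TriangleCoordinates

open Set Topology

variable {E : Type*} [AddCommGroup E] [Module ℝ E] {a b c c₁ c₂ : E}

/-- Affine coordinates of the plane through `a`, `b`, `c`, with origin `a` and axes towards `b`
and `c`. -/
def triangleMap (a b c : E) (q : ℝ × ℝ) : E :=
  a + q.1 • (b - a) + q.2 • (c - a)

theorem triangleMap_half : triangleMap a b c (1 / 2, 0) = midpoint ℝ a b := by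
  rw [triangleMap, midpoint_eq_smul_add, invOf_eq_inv]
  module

theorem mem_convexHull_triple {y : E} : y ∈ convexHull ℝ {a, b, c} ↔
    ∃ q : ℝ × ℝ, 0 ≤ q.1 ∧ 0 ≤ q.2 ∧ q.1 + q.2 ≤ 1 ∧ triangleMap a b c q = y := by
  constructor
  · rw [convexHull_insert (insert_nonempty _ _), convexHull_pair, mem_convexJoin]
    rintro ⟨_, rfl, z, hz, hy⟩
    rw [segment_eq_image'] at hz hy
    obtain ⟨s, hs, rfl⟩ := hz
    obtain ⟨r, hr, rfl⟩ := hy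
    refine ⟨(r * (1 - s), r * s), mul_nonneg hr.1 (by linarith [hs.2]), mul_nonneg hr.1 hs.1,
      by linarith [hr.2], ?_⟩
    simp only [triangleMap]
    module
  · rintro ⟨⟨p, q⟩, hp, hq, hpq, rfl⟩
    convert (convex_convexHull ℝ ({a, b, c} : Set E)).sum_mem (t := Finset.univ)
      (w := ![1 - p - q, p, q]) (z := ![a, b, c]) ?_ ?_ ?_
    · simp only [triangleMap, Fin.sum_univ_three, Matrix.cons_val]
      module
    · simpa [Fin.forall_fin_succ] using ⟨by linarith, hp, hq⟩
    · simp only [Fin.sum_univ_three, Matrix.cons_val]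
      ring
    · have hsub := subset_convexHull ℝ ({a, b, c} : Set E)
      simpa [Fin.forall_fin_succ] using
        ⟨hsub (by simp), hsub (by simp), hsub (by simp)⟩

theorem triangleMap_injective (h : LinearIndependent ℝ ![b - a, c - a]) :
    Function.Injective (triangleMap a b c) := by
  intro q q' hqq'
  have := LinearIndependent.pair_iff.1 h (q.1 - q'.1) (q.2 - q'.2)
    (by rw [← sub_eq_zero.2 hqq']; simp only [triangleMap]; module)
  exact Prod.ext (sub_eq_zero.1 this.1) (sub_eq_zero.1 this.2)

theorem snd_eq_zero_of_triangleMap_mem_segment (h : LinearIndependent ℝ ![b - a, c - a])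
    {q : ℝ × ℝ} (hq : triangleMap a b c q ∈ segment ℝ a b) : q.2 = 0 := by
  rw [segment_eq_image'] at hq
  obtain ⟨r, -, hr⟩ := hq
  refine congrArg Prod.snd (triangleMap_injective h (a₂ := (r, 0)) ?_)
  rw [← hr]
  simp [triangleMap]

theorem disjoint_openSegment_segment (h : LinearIndependent ℝ ![b - a, c - a]) {m : E}
    (hm : m ∈ segment ℝ a b) : Disjoint (openSegment ℝ m c) (segment ℝ a b) := by
  rw [Set.disjoint_left]
  intro y hy hyab
  rw [segment_eq_image'] at hm
  rw [openSegment_eq_image'] at hy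
  obtain ⟨r, -, rfl⟩ := hm
  obtain ⟨s, hs, rfl⟩ := hy
  refine hs.1.ne' (snd_eq_zero_of_triangleMap_mem_segment (q := ((1 - s) * r, s)) h ?_)
  convert hyab using 1
  simp only [triangleMap]
  module

theorem exists_continuous_leftInverse_triangleMap [TopologicalSpace E] [IsTopologicalAddGroup E]
    [ContinuousSMul ℝ E] [T2Space E] [FiniteDimensional ℝ E]
    (h : LinearIndependent ℝ ![b - a, c - a]) :
    ∃ R : E → ℝ × ℝ, Continuous R ∧ Function.LeftInverse R (triangleMap a b c) := by
  let L : ℝ × ℝ →ₗ[ℝ] E :=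
    (LinearMap.fst ℝ ℝ ℝ).smulRight (b - a) + (LinearMap.snd ℝ ℝ ℝ).smulRight (c - a)
  have hL q : a + L q = triangleMap a b c q := by simp [L, triangleMap, add_assoc]
  obtain ⟨R, hR⟩ := L.exists_leftInverse_of_injective <| LinearMap.ker_eq_bot.2 fun q q' hq =>
    triangleMap_injective h (by rw [← hL, ← hL, hq])
  refine ⟨fun y => R (y - a), R.continuous_of_finiteDimensional.comp (by fun_prop), fun q => ?_⟩
  simpa [← hL] using LinearMap.congr_fun hR q

/-- The plane folded along the line through `a` and `b`, the upper half going to the side of `c₁`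
and the lower half to the side of `c₂`. -/
def foldMap (a b c₁ c₂ : E) (q : ℝ × ℝ) : E :=
  a + q.1 • (b - a) + max q.2 0 • (c₁ - a) + max (-q.2) 0 • (c₂ - a)

/-- The rhombus that `foldMap` takes onto the two triangles `a b c₁` and `a b c₂`. -/
def foldDomain : Set (ℝ × ℝ) :=
  {q | 0 ≤ q.1 ∧ q.1 + |q.2| ≤ 1}

theorem foldMap_of_nonneg {q : ℝ × ℝ} (hq : 0 ≤ q.2) :
    foldMap a b c₁ c₂ q = triangleMap a b c₁ q := by
  simp [foldMap, triangleMap, hq]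

theorem foldMap_of_nonpos {q : ℝ × ℝ} (hq : q.2 ≤ 0) :
    foldMap a b c₁ c₂ q = triangleMap a b c₂ (q.1, -q.2) := by
  simp [foldMap, triangleMap, hq]

theorem foldMap_mem_of_nonneg {q : ℝ × ℝ} (hq : q ∈ foldDomain) (h₀ : 0 ≤ q.2) :
    foldMap a b c₁ c₂ q ∈ convexHull ℝ {a, b, c₁} :=
  mem_convexHull_triple.2
    ⟨q, hq.1, h₀, (abs_of_nonneg h₀).symm ▸ hq.2, (foldMap_of_nonneg h₀).symm⟩

theorem foldMap_mem_of_nonpos {q : ℝ × ℝ} (hq : q ∈ foldDomain) (h₀ : q.2 ≤ 0) :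
    foldMap a b c₁ c₂ q ∈ convexHull ℝ {a, b, c₂} :=
  mem_convexHull_triple.2
    ⟨(q.1, -q.2), hq.1, neg_nonneg.2 h₀, (abs_of_nonpos h₀).symm ▸ hq.2,
      (foldMap_of_nonpos h₀).symm⟩

theorem mapsTo_foldMap : MapsTo (foldMap a b c₁ c₂) foldDomain
    (convexHull ℝ {a, b, c₁} ∪ convexHull ℝ {a, b, c₂}) := fun q hq =>
  (le_total 0 q.2).imp (foldMap_mem_of_nonneg hq) (foldMap_mem_of_nonpos hq)

theorem injOn_foldMap (h₁ : LinearIndependent ℝ ![b - a, c₁ - a])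
    (h₂ : LinearIndependent ℝ ![b - a, c₂ - a])
    (hinter : convexHull ℝ {a, b, c₁} ∩ convexHull ℝ {a, b, c₂} ⊆ segment ℝ a b) :
    InjOn (foldMap a b c₁ c₂) foldDomain := by
  have hneg : ∀ {q q' : ℝ × ℝ}, q.2 ≤ 0 → q'.2 ≤ 0 →
      foldMap a b c₁ c₂ q = foldMap a b c₁ c₂ q' → q = q' := fun {q q'} hq hq' h => by
    rw [foldMap_of_nonpos hq, foldMap_of_nonpos hq'] at h
    simpa [Prod.ext_iff] using triangleMap_injective h₂ h
  have hmixed : ∀ {q q' : ℝ × ℝ}, q ∈ foldDomain → q' ∈ foldDomain → 0 ≤ q.2 → q'.2 ≤ 0 →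
      foldMap a b c₁ c₂ q = foldMap a b c₁ c₂ q' → q = q' := fun {q q'} hqD hqD' hq hq' h => by
    refine hneg (le_of_eq <| snd_eq_zero_of_triangleMap_mem_segment h₁ ?_) hq' h
    rw [← foldMap_of_nonneg (c₂ := c₂) hq]
    exact hinter ⟨foldMap_mem_of_nonneg hqD hq, h ▸ foldMap_mem_of_nonpos hqD' hq'⟩
  intro q hqD q' hqD' h
  rcases le_total 0 q.2 with hq | hq <;> rcases le_total 0 q'.2 with hq' | hq'
  · rw [foldMap_of_nonneg hq, foldMap_of_nonneg hq'] at h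
    exact triangleMap_injective h₁ h
  · exact hmixed hqD hqD' hq hq' h
  · exact (hmixed hqD' hqD hq' hq h.symm).symm
  · exact hneg hq hq' h

theorem foldDomain_mem_nhds : foldDomain ∈ 𝓝 ((1 / 2, 0) : ℝ × ℝ) := by
  have h₁ : ∀ᶠ q : ℝ × ℝ in 𝓝 (1 / 2, 0), 0 < q.1 :=
    continuous_fst.continuousAt.eventually_const_lt (by norm_num)
  have h₂ : ∀ᶠ q : ℝ × ℝ in 𝓝 (1 / 2, 0), q.1 + |q.2| < 1 :=
    (continuous_fst.add continuous_snd.abs).continuousAt.eventually_lt_const (by norm_num)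
  filter_upwards [h₁, h₂] with q hq₁ hq₂ using ⟨hq₁.le, hq₂.le⟩

end TriangleCoordinates

section TrianglesOnAnEdge

open Finset Topology

variable {E : Type*} [AddCommGroup E] [Module ℝ E] [DecidableEq E] {K : SimplicialComplex ℝ E}
  {a b c₁ c₂ : E}

theorem convexHull_triple_subset_space (h : {a, b, c₁} ∈ K.faces) :
    convexHull ℝ {a, b, c₁} ⊆ K.space := by
  simpa using SimplicialComplex.convexHull_subset_space h

theorem convexHull_triple_inter_subset_segment (hc : c₁ ≠ c₂) (h₁ : {a, b, c₁} ∈ K.faces)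
    (h₂ : {a, b, c₂} ∈ K.faces) :
    convexHull ℝ {a, b, c₁} ∩ convexHull ℝ {a, b, c₂} ⊆ segment ℝ a b := by
  have hinter : ({a, b, c₁} ∩ {a, b, c₂} : Finset E) ⊆ {a, b} := by grind
  have := (convexHull_inter_subset_convexHull_inter h₁ h₂).trans
    (convexHull_mono (coe_subset.2 hinter))
  simpa [convexHull_pair] using this

end TrianglesOnAnEdge

section SurfaceOfTriangles

open Finset Topology

variable [DecidableEq (Pt n)] {K : SimplicialComplex ℝ (Pt n)} {a b c c₁ c₂ c₃ : Pt n}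

theorem IsLocallyPlanarPt.union_convexHull_mem_nhdsWithin
    (hm : IsLocallyPlanarPt K (midpoint ℝ a b)) (hab : a ≠ b) (h₁ : {a, b, c₁} ∈ K.faces)
    (h₂ : {a, b, c₂} ∈ K.faces) (hac₁ : a ≠ c₁) (hbc₁ : b ≠ c₁) (hac₂ : a ≠ c₂) (hbc₂ : b ≠ c₂)
    (hc : c₁ ≠ c₂) :
    convexHull ℝ {a, b, c₁} ∪ convexHull ℝ {a, b, c₂} ∈ 𝓝[K.space] (midpoint ℝ a b) := by
  have hcenter : foldMap a b c₁ c₂ (1 / 2, 0) = midpoint ℝ a b :=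
    (foldMap_of_nonneg le_rfl).trans triangleMap_half
  obtain ⟨C, e, -, -, he⟩ := hm.exists_isChartAt
  rw [← hcenter] at he ⊢
  refine Filter.mem_of_superset (he.image_mem_nhdsWithin foldDomain_mem_nhds ?_ ?_ ?_)
    mapsTo_foldMap.image_subset
  · unfold foldMap
    fun_prop
  · exact injOn_foldMap
      (linearIndependent_sub_of_affineIndependent hab hbc₁ hac₁ (K.indep h₁))
      (linearIndependent_sub_of_affineIndependent hab hbc₂ hac₂ (K.indep h₂))
      (convexHull_triple_inter_subset_segment hc h₁ h₂)
  · exact mapsTo_foldMap.mono_right (Set.union_subset (convexHull_triple_subset_space h₁)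
      (convexHull_triple_subset_space h₂))

theorem IsLocallyPlanarPt.card_triangles_le_two
    (hm : IsLocallyPlanarPt K (midpoint ℝ a b)) (hab : a ≠ b) (hfin : K.faces.Finite) :
    #(cofaces (triangles hfin) {a, b}) ≤ 2 := by
  by_contra! hcard
  obtain ⟨t₁, t₂, t₃, ht₁, ht₂, ht₃, h₁₂, h₁₃, h₂₃⟩ := two_lt_card_iff.1 hcard
  have hthird : ∀ t ∈ cofaces (triangles hfin) {a, b},
      ∃ c, a ≠ c ∧ b ≠ c ∧ t = {a, b, c} ∧ {a, b, c} ∈ K.faces := fun t ht => by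
    obtain ⟨ht, hab't⟩ := mem_cofaces.1 ht
    obtain ⟨htK, ht₃⟩ := mem_triangles.1 ht
    obtain ⟨c, hac, hbc, rfl⟩ := eq_triangle_of_pair_subset hab ht₃ hab't
    exact ⟨c, hac, hbc, rfl, htK⟩
  obtain ⟨c₁, hac₁, hbc₁, rfl, hK₁⟩ := hthird t₁ ht₁
  obtain ⟨c₂, hac₂, hbc₂, rfl, hK₂⟩ := hthird t₂ ht₂
  obtain ⟨c₃, hac₃, hbc₃, rfl, hK₃⟩ := hthird t₃ ht₃
  have hc : ∀ {c c' : Pt n}, ({a, b, c} : Finset (Pt n)) ≠ {a, b, c'} → c ≠ c' :=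
    fun h hc => h (hc ▸ rfl)
  have hmab := midpoint_mem_segment (𝕜 := ℝ) a b
  have hmc₃ : segment ℝ (midpoint ℝ a b) c₃ ⊆ convexHull ℝ {a, b, c₃} :=
    (convex_convexHull ℝ _).segment_subset
      (segment_subset_convexHull (by simp) (by simp) hmab)
      (subset_convexHull ℝ _ (by simp))
  obtain ⟨y, hy, hyN⟩ := exists_mem_openSegment_of_mem_nhdsWithin
    (hmc₃.trans (convexHull_triple_subset_space hK₃))
    (hm.union_convexHull_mem_nhdsWithin hab hK₁ hK₂ hac₁ hbc₁ hac₂ hbc₂ (hc h₁₂))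
  refine (disjoint_openSegment_segment (linearIndependent_sub_of_affineIndependent hab hbc₃ hac₃
    (K.indep hK₃)) hmab).notMem_of_mem_left hy ?_
  have hy₃ := hmc₃ (openSegment_subset_segment ℝ _ _ hy)
  exact hyN.elim (fun h => convexHull_triple_inter_subset_segment (hc h₁₃) hK₁ hK₃ ⟨h, hy₃⟩)
    (fun h => convexHull_triple_inter_subset_segment (hc h₂₃) hK₂ hK₃ ⟨h, hy₃⟩)

theorem midpoint_mem_space_of_mem_faces (hab : {a, b} ∈ K.faces) : midpoint ℝ a b ∈ K.space := by
  refine SimplicialComplex.convexHull_subset_space hab ?_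
  rw [coe_pair, convexHull_pair]
  exact midpoint_mem_segment a b

theorem LocallyPlanar.isSurface_triangles (hK : LocallyPlanar K) (hpure : IsPure K)
    (hconn : IsPreconnected K.space) (hfin : K.faces.Finite) : IsSurface (triangles hfin) where
  card_eq_three t ht := (mem_triangles.1 ht).2
  card_cofaces_le_two e he := by
    obtain ⟨a, b, hab, rfl⟩ := card_eq_two.1 he
    obtain hempty | ⟨t, ht⟩ := (cofaces (triangles hfin) {a, b}).eq_empty_or_nonempty
    · simp [hempty]
    · obtain ⟨ht, habt⟩ := mem_cofaces.1 ht
      have habK := K.down_closed (mem_triangles.1 ht).1 habt (by simp)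
      exact (hK _ (midpoint_mem_space_of_mem_faces habK)).card_triangles_le_two hab hfin
  link_connected v A hA hclosed hne := hK.link_connected hpure hA hclosed hne
  connected W hW hne hclosed := hpure.eq_verticesOf_of_closed hconn hW hne hclosed

theorem IsPure.openStar_inter_space_subset_convexHull (hK : IsPure K) (hfin : K.faces.Finite)
    {s t : Finset (Pt n)} (hs : cofaces (triangles hfin) s = {t}) :
    openStar K s ∩ K.space ⊆ convexHull ℝ (t : Set (Pt n)) := by
  rintro y ⟨hys, hyK⟩
  rw [← hK.realization_triangles (hfin := hfin)] at hyK
  obtain ⟨t', ht', hyt'⟩ := mem_realization.1 hyK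
  have := mem_cofaces.2 ⟨ht', hys t' (mem_triangles.1 ht').1 hyt'⟩
  rw [hs, mem_singleton] at this
  exact this ▸ hyt'

theorem HasPlanarNbhd.cofaces_ne_singleton (hm : HasPlanarNbhd K (midpoint ℝ a b))
    (hK : IsPure K) (hfin : K.faces.Finite) (hab : a ≠ b) (t : Finset (Pt n)) :
    cofaces (triangles hfin) {a, b} ≠ {t} := by
  intro hcofaces
  obtain ⟨ht, habt⟩ := mem_cofaces.1 (hcofaces ▸ mem_singleton_self t)
  obtain ⟨htK, ht₃⟩ := mem_triangles.1 ht
  obtain ⟨c, hac, hbc, rfl⟩ := eq_triangle_of_pair_subset hab ht₃ habt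
  have habK := K.down_closed htK habt (by simp)
  obtain ⟨e, he⟩ := hm.exists_isChartAt (midpoint_mem_space_of_mem_faces habK)
  obtain ⟨R, hR, hleft⟩ := exists_continuous_leftInverse_triangleMap
    (linearIndependent_sub_of_affineIndependent hab hbc hac (K.indep htK))
  have hO : openStar K {a, b} ∩ K.space ∈ 𝓝[K.space] (midpoint ℝ a b) :=
    Filter.inter_mem (mem_nhdsWithin_of_mem_nhds
      ((isOpen_openStar hfin _).mem_nhds (midpoint_mem_openStar_pair habK))) self_mem_nhdsWithin
  have hcoord : ∀ y ∈ openStar K {a, b} ∩ K.space, 0 ≤ (R y).2 ∧ triangleMap a b c (R y) = y := by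
    intro y hy
    have := hK.openStar_inter_space_subset_convexHull hfin hcofaces hy
    rw [coe_insert, coe_pair] at this
    obtain ⟨q, -, hq, -, rfl⟩ := mem_convexHull_triple.1 this
    exact ⟨(hleft q).symm ▸ hq, by rw [hleft]⟩
  have himage := he.image_mem_nhds hO hR.continuousOn
    (Set.LeftInvOn.injOn fun y hy => (hcoord y hy).2)
  rw [← triangleMap_half (c := c), hleft] at himage
  have hhalf : Set.Ici 0 ∈ 𝓝 (0 : ℝ) := by
    refine Filter.mem_of_superset (isOpenMap_snd.image_mem_nhds himage) ?_
    rintro _ ⟨_, ⟨y, hy, rfl⟩, rfl⟩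
    exact (hcoord y hy).1
  simpa [interior_Ici] using mem_interior_iff_mem_nhds.2 hhalf

theorem IsSurface.isClosedFamily_triangles (hfin : K.faces.Finite)
    (hT : IsSurface (triangles hfin)) (hK : IsPure K)
    (hplanar : ∀ x ∈ K.space, HasPlanarNbhd K x) : IsClosedFamily (triangles hfin) := by
  intro e he
  obtain ⟨he₂, t, ht, het⟩ := mem_edgesOf.1 he
  obtain ⟨a, b, hab, rfl⟩ := card_eq_two.1 he₂
  have habK := ((hK.mem_edgesOf_triangles).1 he).1
  have hne : #(cofaces (triangles hfin) {a, b}) ≠ 1 := fun h =>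
    have ⟨t, ht⟩ := card_eq_one.1 h
    (hplanar _ (midpoint_mem_space_of_mem_faces habK)).cofaces_ne_singleton hK hfin hab t ht
  have hpos := card_pos.2 ⟨t, mem_cofaces.2 ⟨ht, het⟩⟩
  have hle := hT.card_cofaces_le_two _ he₂
  omega

end SurfaceOfTriangles

section CocycleTrivialization

open Topology

variable {ι X G : Type*} [TopologicalSpace X] [AddGroup G] [TopologicalSpace G]
  {U : ι → Set X} {d : ι → ι → G}

/-- The principal `G`-bundle over `X` glued from the trivial bundles over the members of the open
cover `U` by the transition functions `d`. -/
noncomputable def cocycleBundle [DiscreteTopology G] (hU : ∀ i, IsOpen (U i))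
    (hcover : ∀ x, ∃ i, x ∈ U i)
    (hd : ∀ x i j k, x ∈ U i → x ∈ U j → x ∈ U k → d i j + d j k = d i k) :
    FiberBundleCore ι X G where
  baseSet := U
  isOpen_baseSet := hU
  indexAt x := (hcover x).choose
  mem_baseSet_at x := (hcover x).choose_spec
  coordChange i j _ z := z + d i j
  coordChange_self i x hx z := by rw [add_eq_left, ← add_eq_left, hd x i i i hx hx hx]
  continuousOn_coordChange i j := by fun_prop
  coordChange_comp i j k x hx z := by rw [add_assoc, hd x i j k hx.1.1 hx.1.2 hx.2]

/-- The covering space defined by a cocycle with values in a discrete group has a global section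
over a simply connected base, and the section trivializes the cocycle. -/
theorem exists_continuousOn_of_cocycle [DiscreteTopology G] [SimplyConnectedSpace X]
    [LocallyPathConnectedSpace X] (hU : ∀ i, IsOpen (U i)) (hcover : ∀ x, ∃ i, x ∈ U i)
    (hd : ∀ x i j k, x ∈ U i → x ∈ U j → x ∈ U k → d i j + d j k = d i k) :
    ∃ k : ι → X → G, (∀ i, ContinuousOn (k i) (U i)) ∧
      ∀ x i j, x ∈ U i → x ∈ U j → k i x + d i j = k j x := by
  let Z := cocycleBundle hU hcover hd
  have hcovering : IsCoveringMap Z.proj :=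
    IsFiberBundle.isCoveringMap fun x => ⟨Z.localTriv (Z.indexAt x), Z.mem_baseSet_at x⟩
  have x₀ : X := Classical.arbitrary X
  obtain ⟨s, ⟨-, hs⟩, -⟩ := hcovering.existsUnique_continuousMap_lifts (ContinuousMap.id X) x₀
    (⟨x₀, (0 : G)⟩ : Z.TotalSpace) rfl
  have hproj : ∀ x, (s x).proj = x := congrFun hs
  refine ⟨fun i x => (Z.localTriv i (s x)).2, fun i => ?_, fun x i j hi hj => ?_⟩
  · refine continuous_snd.comp_continuousOn
      ((Z.localTriv i).continuousOn_toFun.comp s.continuous.continuousOn fun x hx => ?_)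
    rw [(Z.localTriv i).mem_source]
    change (s x).proj ∈ U i
    rwa [hproj]
  · have hx := Z.mem_baseSet_at x
    let z : G := (s x).2
    change z + d (Z.indexAt (s x).proj) i + d i j = z + d (Z.indexAt (s x).proj) j
    rw [add_assoc, hproj, hd x _ i j hx hi hj]

end CocycleTrivialization

section OrderedCochains

open Finset

variable {α : Type*} [DecidableEq α]

/-- A mod 2 cochain on edges, viewed as a function of ordered pairs vanishing on the diagonal. -/
def orderedCochain (c : Finset α → ZMod 2) (u v : α) : ZMod 2 :=
  if u = v then 0 else c {u, v}

theorem orderedCochain_of_ne {c : Finset α → ZMod 2} {u v : α} (huv : u ≠ v) :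
    orderedCochain c u v = c {u, v} :=
  if_neg huv

theorem orderedCochain_add_orderedCochain {c : Finset α → ZMod 2} {u v w : α}
    (hc : #{u, v, w} = 3 → ∑ e ∈ ({u, v, w} : Finset α).powersetCard 2, c e = 0) :
    orderedCochain c u v + orderedCochain c v w = orderedCochain c u w := by
  unfold orderedCochain
  obtain rfl | huv := eq_or_ne u v
  · simp
  obtain rfl | hvw := eq_or_ne v w
  · simp
  obtain rfl | huw := eq_or_ne u w
  · simp [huv, huv.symm, pair_comm v u, CharTwo.add_self_eq_zero]
  have hpair : ∀ x y z t : α, ({x, y} : Finset α) = {z, t} ↔ x = z ∧ y = t ∨ x = t ∧ y = z := by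
    intro x y z t
    rw [← coe_inj, coe_pair, coe_pair, Set.pair_eq_pair_iff]
  have hpairs : ({u, v, w} : Finset α).powersetCard 2 = {{u, v}, {v, w}, {u, w}} := by
    rw [powersetCard_succ_insert (by simp [huv, huw]), powersetCard_succ_insert (by simp [hvw]),
      powersetCard_eq_empty.2 (by simp)]
    simp [powersetCard_one]
  have hsum := hc (card_eq_three.2 ⟨u, v, w, huv, huw, hvw, rfl⟩)
  rw [hpairs, sum_insert (by simp [hpair, huv, hvw, huw]),
    sum_insert (by simp [hpair, huv.symm, hvw]), sum_singleton, ← add_assoc,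
    CharTwo.add_eq_zero] at hsum
  rwa [if_neg huv, if_neg hvw, if_neg huw]

end OrderedCochains

section SimplyConnectedSpaces

open Finset Topology

variable {E : Type*} [AddCommGroup E] [Module ℝ E] {K : SimplicialComplex ℝ E} {a b x : E}

theorem exists_mem_openStar_singleton (hx : x ∈ K.space) : ∃ v, x ∈ openStar K {v} := by
  classical
  obtain ⟨s, ⟨hs, hxs⟩, hmin⟩ := wellFounded_lt.has_min
    {s | s ∈ K.faces ∧ x ∈ convexHull ℝ (s : Set E)} (SimplicialComplex.mem_space_iff.1 hx)
  obtain ⟨v, hv⟩ := K.nonempty_of_mem_faces hs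
  refine ⟨v, fun t ht hxt => singleton_subset_iff.2 ?_⟩
  by_contra hvt
  have hxst := convexHull_inter_subset_convexHull_inter hs ht ⟨hxs, hxt⟩
  have hst : (s ∩ t).Nonempty := coe_nonempty.1 (convexHull_nonempty_iff.1 ⟨x, hxst⟩)
  exact hmin _ ⟨K.down_closed hs inter_subset_left hst, hxst⟩
    (inter_subset_left.ssubset_of_mem_notMem hv fun h => hvt (mem_inter.1 h).2)

theorem segment_midpoint_subset_openStar [DecidableEq E] (he : {a, b} ∈ K.faces) (hab : a ≠ b) :
    segment ℝ a (midpoint ℝ a b) ⊆ openStar K {a} := by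
  intro y hy t ht hyt
  rw [singleton_subset_iff]
  by_contra ha
  have hwbtw : Wbtw ℝ a y (midpoint ℝ a b) := mem_segment_iff_wbtw.1 hy
  have hye : y ∈ convexHull ℝ (↑({a, b} : Finset E) : Set E) := by
    rw [coe_pair, convexHull_pair, mem_segment_iff_wbtw]
    exact (wbtw_midpoint ℝ a b).trans_left hwbtw
  have hyb : y = b := by
    have hsub : {a, b} ∩ t ⊆ {b} := by grind
    have := convexHull_mono (coe_subset.2 hsub)
      (convexHull_inter_subset_convexHull_inter he ht ⟨hye, hyt⟩)
    rwa [coe_singleton, convexHull_singleton] at this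
  subst hyb
  exact hab ((midpoint_eq_right_iff ℝ).1
    ((wbtw_swap_right_iff ℝ a).1 ⟨wbtw_midpoint ℝ a y, hwbtw⟩))

theorem segment_midpoint_subset_openStar_right [DecidableEq E] (he : {a, b} ∈ K.faces)
    (hab : a ≠ b) : segment ℝ b (midpoint ℝ a b) ⊆ openStar K {b} := by
  rw [midpoint_comm]
  exact segment_midpoint_subset_openStar (pair_comm a b ▸ he) hab.symm

theorem orderedCochain_add_orderedCochain_of_mem_openStar [DecidableEq E] {hfin : K.faces.Finite}
    {c : Finset E → ZMod 2} (hc : ∀ t ∈ triangles hfin, ∑ e ∈ t.powersetCard 2, c e = 0)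
    {u v w : E} (hx : x ∈ K.space) (hu : x ∈ openStar K {u}) (hv : x ∈ openStar K {v})
    (hw : x ∈ openStar K {w}) :
    orderedCochain c u v + orderedCochain c v w = orderedCochain c u w := by
  obtain ⟨s, hs, hxs⟩ := SimplicialComplex.mem_space_iff.1 hx
  have huvw : {u, v, w} ⊆ s := by
    simpa only [insert_subset_iff, singleton_subset_iff] using
      And.intro (hu s hs hxs) (And.intro (hv s hs hxs) (hw s hs hxs))
  exact orderedCochain_add_orderedCochain fun h₃ =>
    hc _ (mem_triangles.2 ⟨K.down_closed hs huvw (by simp), h₃⟩)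

variable [TopologicalSpace E] [IsTopologicalAddGroup E] [ContinuousSMul ℝ E]

theorem eq_of_continuousOn_of_segment_subset {Y : Type*} [TopologicalSpace Y] [DiscreteTopology Y]
    {W O : Set E} {k : W → Y} (hk : ContinuousOn k (Subtype.val ⁻¹' O))
    {x y : W} (hO : segment ℝ (x : E) y ⊆ O) (hW : segment ℝ (x : E) y ⊆ W) : k x = k y := by
  have hpre : IsPreconnected (Subtype.val ⁻¹' segment ℝ (x : E) y : Set W) := by
    rw [← IsInducing.subtypeVal.isPreconnected_image, Subtype.image_preimage_coe,
      Set.inter_eq_right.2 hW]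
    exact (convex_segment _ _).isPreconnected
  exact hpre.constant (hk.mono (Set.preimage_mono hO)) (left_mem_segment ℝ _ _)
    (right_mem_segment ℝ _ _)

theorem hasTrivialCohomology_of_simplyConnectedSpace [T2Space E] [DecidableEq E]
    (hfin : K.faces.Finite) {W : Set E} [SimplyConnectedSpace W] [LocallyPathConnectedSpace W]
    (hWK : W ⊆ K.space) (hW : ∀ s ∈ K.faces, #s ≤ 2 → convexHull ℝ (s : Set E) ⊆ W) :
    HasTrivialCohomology (triangles hfin) := by
  intro c hc
  obtain ⟨k, hkc, hk⟩ := exists_continuousOn_of_cocycle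
    (U := fun v => (Subtype.val ⁻¹' openStar K {v} : Set W)) (d := orderedCochain c)
    (fun v => (isOpen_openStar hfin {v}).preimage continuous_subtype_val)
    (fun x => exists_mem_openStar_singleton (hWK x.2))
    (fun x u v w => orderedCochain_add_orderedCochain_of_mem_openStar hc (hWK x.2))
  classical
  refine ⟨fun v => if hv : v ∈ W then k v ⟨v, hv⟩ else 0, fun e he => ?_⟩
  obtain ⟨he₂, t, ht, het⟩ := mem_edgesOf.1 he
  have heK := K.down_closed (mem_triangles.1 ht).1 het (card_pos.1 (by omega))
  obtain ⟨a, b, hab, rfl⟩ := card_eq_two.1 he₂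
  have hsegment : segment ℝ a b ⊆ W := by
    rw [← convexHull_pair, ← coe_pair]
    exact hW _ heK he₂.le
  have ha := left_mem_segment ℝ a b
  have hb := right_mem_segment ℝ a b
  have hm := midpoint_mem_segment (𝕜 := ℝ) a b
  have hstar_a := segment_midpoint_subset_openStar heK hab
  have hstar_b := segment_midpoint_subset_openStar_right heK hab
  have hka : k a ⟨a, hsegment ha⟩ = k a ⟨midpoint ℝ a b, hsegment hm⟩ :=
    eq_of_continuousOn_of_segment_subset (hkc a) hstar_a
      (((convex_segment a b).segment_subset ha hm).trans hsegment)
  have hkb : k b ⟨b, hsegment hb⟩ = k b ⟨midpoint ℝ a b, hsegment hm⟩ :=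
    eq_of_continuousOn_of_segment_subset (hkc b) hstar_b
      (((convex_segment a b).segment_subset hb hm).trans hsegment)
  have hjump : k a ⟨midpoint ℝ a b, hsegment hm⟩ + c {a, b} = k b ⟨midpoint ℝ a b, hsegment hm⟩ :=
    orderedCochain_of_ne (c := c) hab ▸ hk _ a b (hstar_a (right_mem_segment ℝ _ _))
      (hstar_b (right_mem_segment ℝ _ _))
  rw [sum_pair hab, dif_pos (hsegment ha), dif_pos (hsegment hb), hka, hkb, ← hjump, ← add_assoc,
    CharTwo.add_self_eq_zero, zero_add]

end SimplyConnectedSpaces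

section SphericalComplexes

open Finset Topology

theorem nonempty_compl_singleton_homeomorph_prod
    (p : Metric.sphere (0 : EuclideanSpace ℝ (Fin 3)) 1) :
    Nonempty (({p}ᶜ : Set (Metric.sphere (0 : EuclideanSpace ℝ (Fin 3)) 1)) ≃ₜ ℝ × ℝ) := by
  have : Fact (Module.finrank ℝ (EuclideanSpace ℝ (Fin 3)) = 2 + 1) := ⟨by simp⟩
  have hsource := (Homeomorph.setCongr (stereographic'_source (n := 2) p)).symm
  have htarget := (Homeomorph.setCongr (stereographic'_target (n := 2) p)).trans
    (Homeomorph.Set.univ _)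
  exact ⟨((hsource.trans (stereographic' 2 p).toHomeomorphSourceTarget).trans htarget).trans
    ((EuclideanSpace.equiv (Fin 2) ℝ).toHomeomorph.trans Homeomorph.finTwoArrow)⟩

variable {X : Type*} [TopologicalSpace X] {S : Set X} {x : X}

theorem isConnected_of_homeomorph_sphere
    (f : S ≃ₜ Metric.sphere (0 : EuclideanSpace ℝ (Fin 3)) 1) : IsConnected S := by
  have hsphere : IsConnected (Metric.sphere (0 : EuclideanSpace ℝ (Fin 3)) 1) :=
    isConnected_sphere (by simp [← Module.finrank_eq_rank]) _ zero_le_one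
  rw [isConnected_iff_connectedSpace] at hsphere ⊢
  exact f.symm.surjective.connectedSpace f.symm.continuous

theorem nonempty_sdiff_singleton_homeomorph_prod
    (f : S ≃ₜ Metric.sphere (0 : EuclideanSpace ℝ (Fin 3)) 1) (hx : x ∈ S) :
    Nonempty ((S \ {x} : Set X) ≃ₜ ℝ × ℝ) := by
  obtain ⟨e⟩ := nonempty_compl_singleton_homeomorph_prod (f ⟨x, hx⟩)
  have hcompl : ((↑) : S → X) '' (f ⁻¹' {f ⟨x, hx⟩}ᶜ) = S \ {x} := by
    have hpre : f ⁻¹' {f ⟨x, hx⟩}ᶜ = {⟨x, hx⟩}ᶜ := by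
      rw [Set.preimage_compl, ← Set.image_singleton, f.injective.preimage_image]
    rw [hpre, Set.compl_eq_univ_sdiff, Set.image_sdiff Subtype.val_injective,
      Subtype.coe_image_univ, Set.image_singleton]
  exact ⟨((Homeomorph.setCongr hcompl).symm.trans
    (IsEmbedding.subtypeVal.homeomorphImage _).symm).trans
    ((f.subtype fun _ => Iff.rfl).trans e)⟩

variable {K : SimplicialComplex ℝ (Pt n)}

theorem hasPlanarNbhd_of_homeomorph_sphere
    (f : K.space ≃ₜ Metric.sphere (0 : EuclideanSpace ℝ (Fin 3)) 1) {x : Pt n}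
    (hx : x ∈ K.space) : HasPlanarNbhd K x := by
  set y := f.symm (-f ⟨x, hx⟩)
  have hxy : x ≠ y := fun h => ne_neg_of_mem_unit_sphere ℝ (f ⟨x, hx⟩) <| by
    conv_rhs => rw [← f.apply_symm_apply (-f ⟨x, hx⟩)]
    exact congrArg f (Subtype.ext h)
  obtain ⟨e⟩ := nonempty_sdiff_singleton_homeomorph_prod f y.2
  exact ⟨K.space \ {↑y}, Set.sdiff_subset,
    Filter.inter_mem self_mem_nhdsWithin
      (mem_nhdsWithin_of_mem_nhds (isOpen_compl_singleton.mem_nhds hxy)),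
    Set.univ, isOpen_univ, ⟨e.trans (Homeomorph.Set.univ _).symm⟩⟩

theorem IsPure.hasTrivialCohomology_of_homeomorph_sphere [DecidableEq (Pt n)] (hK : IsPure K)
    (hfin : K.faces.Finite) (hne : K.faces.Nonempty)
    (f : K.space ≃ₜ Metric.sphere (0 : EuclideanSpace ℝ (Fin 3)) 1) :
    HasTrivialCohomology (triangles hfin) := by
  obtain ⟨t, ht⟩ := hK.triangles_nonempty hfin hne
  obtain ⟨htK, ht₃⟩ := mem_triangles.1 ht
  obtain ⟨e⟩ := nonempty_sdiff_singleton_homeomorph_prod f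
    (SimplicialComplex.convexHull_subset_space htK
      (t.centroid_mem_convexHull (K.nonempty_of_mem_faces htK)))
  have := e.toHomotopyEquiv.simplyConnectedSpace
  have := e.symm.isQuotientMap.locallyPathConnectedSpace
  refine hasTrivialCohomology_of_simplyConnectedSpace hfin
    (W := K.space \ {t.centroid ℝ id}) Set.sdiff_subset fun s hs hs₂ =>
    Set.subset_sdiff_singleton (SimplicialComplex.convexHull_subset_space hs) fun hst => ?_
  have := card_le_card (centroid_mem_openStar htK s hs hst)
  omega

end SphericalComplexes

/-- `|K|` is homeomorphic to the unit sphere `S²` iff `|K|` is connected, `K` is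
locally planar and `χ(K) = 2`. -/
theorem homeo_sphere_iff (K : SimplicialComplex ℝ (Pt n))
    (hfin : K.faces.Finite) (hdim : TwoDimensional K) (hne : K.faces.Nonempty) :
    Nonempty (↥K.space ≃ₜ ↥(Metric.sphere (0 : EuclideanSpace ℝ (Fin 3)) 1)) ↔
      (IsConnected K.space ∧ LocallyPlanar K ∧ eulerChar K = 2) := by
  classical
  constructor
  · rintro ⟨f⟩
    have hplanar : ∀ x ∈ K.space, HasPlanarNbhd K x := fun _ =>
      hasPlanarNbhd_of_homeomorph_sphere f
    have hK : LocallyPlanar K := fun x hx => ⟨hx, Or.inl (hplanar x hx)⟩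
    have hconn := isConnected_of_homeomorph_sphere f
    have hpure := hK.isPure hdim hfin
    have hT := hK.isSurface_triangles hpure hconn.isPreconnected hfin
    refine ⟨hconn, hK, ?_⟩
    rw [hpure.eulerChar_eq hfin]
    exact hT.eulerCharOf_eq_two (hpure.triangles_nonempty hfin hne)
      (hT.isClosedFamily_triangles hfin hpure hplanar)
      (hpure.hasTrivialCohomology_of_homeomorph_sphere hfin hne f)
  · rintro ⟨hconn, hK, hχ⟩
    have hpure := hK.isPure hdim hfin
    have hT := hK.isSurface_triangles hpure hconn.isPreconnected hfin
    have hTne := hpure.triangles_nonempty hfin hne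
    rw [hpure.eulerChar_eq hfin] at hχ
    obtain ⟨hcl, hH⟩ := hT.isClosedFamily_and_hasTrivialHomology hTne hχ
    obtain ⟨f⟩ := (isGeometric_triangles hfin).nonempty_realization_homeomorph_sphere hT hcl hH hTne
    exact ⟨(Homeomorph.setCongr hpure.realization_triangles).symm.trans f⟩

end PaperAlg
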